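/- arXiv:1604.08144 — 4 statements merged into one kernel-verified Lean document; each statement's English description precedes it below -/
import Mathlib

section
/- Let G be a graph with infinite edge motion (i.e. every non-trivial automorphism of G moves infinitely many edges), let γ be an automorphism of G, and let V_move be the set of vertices of G not fixed by γ. If C is the vertex set of a connected component of the subgraph of G induced by V_move and C is finite, then C contains a vertex of infinite degree. -/
/-!
The automorphism `γ` permutes the components of the graph induced by its moved vertices, so `γ(C)`
is either `C` or disjoint from `C`. Every neighbour of `C` or `γ(C)` lying outside that set is fixed
by `γ`. Hence acting as `γ` on `C`, as `γ⁻¹` on `γ(C) \ C` and trivially elsewhere is again an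
automorphism. It is non-trivial and moves only finitely many vertices, yet infinitely many edges,
so some vertex that it moves has infinite degree. This vertex is in `C` or in `γ(C)`, and `γ`
preserves degrees.
-/

open Function Set

section

variable {V : Type*}

/-- Cut out `S` and `T` and glue them back crosswise: `γ` on `S`, `γ⁻¹` on `T \ S` and the identity
elsewhere. It is meant for `T = γ(S)` with `S` and `T` equal or disjoint, when it is a
permutation. -/
noncomputable def exchange (γ : Equiv.Perm V) (S T : Set V) : V → V :=
  open Classical in S.piecewise γ (T.piecewise γ.symm id)

section Exchange

variable {γ : Equiv.Perm V} {S T : Set V} {x : V}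

lemma exchange_of_mem (hx : x ∈ S) : exchange γ S T x = γ x :=
  if_pos hx

lemma exchange_of_notMem_of_mem (hxS : x ∉ S) (hxT : x ∈ T) : exchange γ S T x = γ.symm x :=
  (if_neg hxS).trans (if_pos hxT)

lemma exchange_of_notMem_of_notMem (hxS : x ∉ S) (hxT : x ∉ T) : exchange γ S T x = x :=
  (if_neg hxS).trans (if_neg hxT)

lemma leftInverse_exchange (hγ : ∀ x, γ x ∈ T ↔ x ∈ S) (hST : S = T ∨ Disjoint S T) :
    LeftInverse (exchange γ.symm T S) (exchange γ S T) := by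
  intro x
  by_cases hxS : x ∈ S
  · rw [exchange_of_mem hxS, exchange_of_mem ((hγ x).2 hxS), γ.symm_apply_apply]
  by_cases hxT : x ∈ T
  · have hdisj : Disjoint S T := hST.resolve_left fun h => hxS (h ▸ hxT)
    have hx' : γ.symm x ∈ S := by rwa [← hγ, γ.apply_symm_apply]
    rw [exchange_of_notMem_of_mem hxS hxT,
      exchange_of_notMem_of_mem (hdisj.notMem_of_mem_left hx') hx', γ.symm_symm,
      γ.apply_symm_apply]
  · rw [exchange_of_notMem_of_notMem hxS hxT, exchange_of_notMem_of_notMem hxT hxS]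

/-- `exchange` as a permutation, in the case where `γ` carries `S` onto a set `T` equal to or
disjoint from `S`. -/
noncomputable def exchangePerm (γ : Equiv.Perm V) (hγ : ∀ x, γ x ∈ T ↔ x ∈ S)
    (hST : S = T ∨ Disjoint S T) : Equiv.Perm V where
  toFun := exchange γ S T
  invFun := exchange γ.symm T S
  left_inv := leftInverse_exchange hγ hST
  right_inv := by
    have hγ' : ∀ x, γ.symm x ∈ S ↔ x ∈ T := fun x => by rw [← hγ, γ.apply_symm_apply]
    exact leftInverse_exchange hγ' (hST.imp Eq.symm fun h => h.symm)

end Exchange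

variable {G : SimpleGraph V}

/-- The outer vertex boundary of `S` in `G` consists of fixed points of `f`. This is what allows
`f` to be replaced by the identity off `S` without damaging edges. -/
def HasFixedBoundary (G : SimpleGraph V) (f : V → V) (S : Set V) : Prop :=
  ∀ ⦃x y⦄, x ∈ S → y ∉ S → G.Adj x y → f y = y

namespace HasFixedBoundary

variable {γ : G ≃g G} {S T : Set V}

lemma symm (hS : HasFixedBoundary G γ S) : HasFixedBoundary G γ.symm S :=
  fun _ _ hx hy hxy => IsFixedPt.equiv_symm (e := γ.toEquiv) (hS hx hy hxy)

lemma of_mem_iff (hS : HasFixedBoundary G γ S) (hγ : ∀ x, γ x ∈ T ↔ x ∈ S) :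
    HasFixedBoundary G γ T := by
  intro x y hx hy hxy
  obtain ⟨x, rfl⟩ := γ.surjective x
  obtain ⟨y, rfl⟩ := γ.surjective y
  rw [hγ] at hx hy
  exact congrArg γ (hS hx hy (γ.map_adj_iff.1 hxy))

variable {a b : V}

lemma exchange_eq_of_adj (hS : HasFixedBoundary G γ S) (ha : a ∈ S) (hab : G.Adj a b) :
    exchange γ.toEquiv S T b = γ b := by
  by_cases hbS : b ∈ S
  · exact exchange_of_mem hbS
  have hb : γ b = b := hS ha hbS hab
  by_cases hbT : b ∈ T
  · rw [exchange_of_notMem_of_mem hbS hbT, hb, Equiv.symm_apply_eq]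
    exact hb.symm
  · rw [exchange_of_notMem_of_notMem hbS hbT, hb]

lemma exchange_eq_symm_of_adj (hT : HasFixedBoundary G γ T) (ha : a ∈ T) (hbS : b ∉ S)
    (hab : G.Adj a b) : exchange γ.toEquiv S T b = γ.symm b := by
  by_cases hbT : b ∈ T
  · exact exchange_of_notMem_of_mem hbS hbT
  · rw [exchange_of_notMem_of_notMem hbS hbT, hT.symm ha hbT hab]

lemma exists_iso_eq_exchange_of_adj (hS : HasFixedBoundary G γ S) (hT : HasFixedBoundary G γ T)
    (hab : G.Adj a b) :
    ∃ α : G ≃g G, exchange γ.toEquiv S T a = α a ∧ exchange γ.toEquiv S T b = α b := by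
  by_cases haS : a ∈ S
  · exact ⟨γ, exchange_of_mem haS, hS.exchange_eq_of_adj haS hab⟩
  by_cases hbS : b ∈ S
  · exact ⟨γ, hS.exchange_eq_of_adj hbS hab.symm, exchange_of_mem hbS⟩
  by_cases haT : a ∈ T
  · exact ⟨γ.symm, exchange_of_notMem_of_mem haS haT, hT.exchange_eq_symm_of_adj haT hbS hab⟩
  by_cases hbT : b ∈ T
  · exact ⟨γ.symm, hT.exchange_eq_symm_of_adj hbT haS hab.symm, exchange_of_notMem_of_mem hbS hbT⟩
  · exact ⟨.refl, exchange_of_notMem_of_notMem haS haT, exchange_of_notMem_of_notMem hbS hbT⟩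

lemma adj_exchange (hS : HasFixedBoundary G γ S) (hT : HasFixedBoundary G γ T)
    (hab : G.Adj a b) :
    G.Adj (exchange γ.toEquiv S T a) (exchange γ.toEquiv S T b) := by
  obtain ⟨α, ha, hb⟩ := hS.exists_iso_eq_exchange_of_adj hT hab
  rw [ha, hb]
  exact α.map_adj_iff.2 hab

/-- `exchangePerm` as a graph automorphism. -/
noncomputable def exchangeIso (hS : HasFixedBoundary G γ S) (hγ : ∀ x, γ x ∈ T ↔ x ∈ S)
    (hST : S = T ∨ Disjoint S T) : G ≃g G where
  toEquiv := exchangePerm γ.toEquiv hγ hST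
  map_rel_iff' {a b} := by
    have hT : HasFixedBoundary G γ T := hS.of_mem_iff hγ
    refine ⟨fun h => ?_, hS.adj_exchange hT⟩
    have hinv : LeftInverse (exchange γ.symm.toEquiv T S) (exchange γ.toEquiv S T) :=
      leftInverse_exchange hγ hST
    rw [← hinv a, ← hinv b]
    exact hT.symm.adj_exchange hS.symm h

lemma exists_iso_eqOn_image (hS : HasFixedBoundary G γ S) (hST : S = γ '' S ∨ Disjoint S (γ '' S)) :
    ∃ δ : G ≃g G, EqOn δ γ S ∧ {v | δ v ≠ v} ⊆ S ∪ γ '' S := by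
  refine ⟨hS.exchangeIso (fun x => γ.injective.mem_set_image) hST,
    fun x hx => exchange_of_mem hx, fun x hx => ?_⟩
  contrapose! hx
  rw [mem_union, not_or] at hx
  exact not_not.2 (exchange_of_notMem_of_notMem hx.1 hx.2)

end HasFixedBoundary

lemma image_supp_eq_or_disjoint (φ : G ≃g G) (C : G.ConnectedComponent) :
    C.supp = φ '' C.supp ∨ Disjoint C.supp (φ '' C.supp) := by
  have himage : φ '' C.supp = (φ.connectedComponentEquiv C).supp := by
    ext x
    obtain ⟨x, rfl⟩ := φ.surjective x
    rw [φ.injective.mem_set_image]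
    exact SimpleGraph.ConnectedComponent.iso_image_comp_eq_map_iff_eq_comp.symm
  rw [himage, SimpleGraph.ConnectedComponent.supp_inj]
  exact or_iff_not_imp_left.2 fun h => G.pairwise_disjoint_supp_connectedComponent h

section InducedComponent

variable {M : Set V}

lemma image_component_induce_eq_or_disjoint {γ : G ≃g G} (hγ : BijOn γ M M)
    (C : (G.induce M).ConnectedComponent) :
    (↑) '' C.supp = γ '' ((↑) '' C.supp) ∨
      Disjoint (((↑) : M → V) '' C.supp) (γ '' ((↑) '' C.supp)) := by
  have hval : γ '' ((↑) '' C.supp) = (↑) '' (γ.induce hγ '' C.supp) := by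
    simp only [image_image]; rfl
  rw [hval, disjoint_image_iff Subtype.val_injective, Subtype.val_injective.image_injective.eq_iff]
  exact image_supp_eq_or_disjoint _ C

lemma hasFixedBoundary_component_induce {f : V → V} (hf : ∀ v ∉ M, f v = v)
    (C : (G.induce M).ConnectedComponent) : HasFixedBoundary G f ((↑) '' C.supp) := by
  rintro _ y ⟨w, hw, rfl⟩ hy hwy
  refine hf y fun hyM => hy ⟨⟨y, hyM⟩, ?_, rfl⟩
  exact C.mem_supp_of_adj_mem_supp hw hwy

end InducedComponent

lemma exists_iso_eqOn_component_moved (γ : G ≃g G)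
    (C : (G.induce {v | γ v ≠ v}).ConnectedComponent) :
    ∃ δ : G ≃g G, EqOn δ γ ((↑) '' C.supp) ∧
      {v | δ v ≠ v} ⊆ (↑) '' C.supp ∪ γ '' ((↑) '' C.supp) := by
  have hmoved : BijOn γ {v | γ v ≠ v} {v | γ v ≠ v} :=
    γ.toEquiv.bijOn fun v => γ.injective.ne_iff
  have hfixed : ∀ v ∉ {v | γ v ≠ v}, γ v = v := fun v => not_not.1
  exact (hasFixedBoundary_component_induce hfixed C).exists_iso_eqOn_image
    (image_component_induce_eq_or_disjoint hmoved C)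

lemma exists_moved_infinite_neighborSet {f : V → V} (hfin : {v | f v ≠ v}.Finite)
    (hinf : {e : Sym2 V | e ∈ G.edgeSet ∧ e.map f ≠ e}.Infinite) :
    ∃ v, f v ≠ v ∧ (G.neighborSet v).Infinite := by
  classical
  by_contra! h
  refine hinf ((hfin.biUnion (t := G.incidenceSet) fun v hv => ?_).subset ?_)
  · have : Finite (G.neighborSet v) := (h v hv).to_subtype
    exact finite_coe_iff.1 (.of_equiv _ (G.incidenceSetEquivNeighborSet v).symm)
  · rintro e ⟨he, hmoved⟩
    obtain ⟨v, hve, hv⟩ : ∃ v ∈ e, f v ≠ v := by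
      contrapose! hmoved
      rw [Sym2.map_congr hmoved, Sym2.map_id', id]
    exact mem_biUnion hv ⟨he, hve⟩

lemma infinite_neighborSet_apply_iff (γ : G ≃g G) (v : V) :
    (G.neighborSet (γ v)).Infinite ↔ (G.neighborSet v).Infinite := by
  rw [← infinite_coe_iff, ← infinite_coe_iff, (γ.mapNeighborSet v).infinite_iff]

theorem stmt_0_general (G : SimpleGraph V)
    (hmotion : ∀ δ : G ≃g G, (∃ v, δ v ≠ v) → {v | δ v ≠ v}.Finite →
      {e : Sym2 V | e ∈ G.edgeSet ∧ e.map δ ≠ e}.Infinite)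
    (γ : G ≃g G) (C : (G.induce {v | γ v ≠ v}).ConnectedComponent) (hC : C.supp.Finite) :
    ∃ w ∈ C.supp, (G.neighborSet (w : V)).Infinite := by
  obtain ⟨δ, hδγ, hδ⟩ := exists_iso_eqOn_component_moved γ C
  obtain ⟨c, hc⟩ := C.nonempty_supp
  have hδc : δ c ≠ c := (hδγ (mem_image_of_mem _ hc)).trans_ne c.2
  have hfin : {v | δ v ≠ v}.Finite :=
    ((hC.image _).union ((hC.image _).image _)).subset hδ
  obtain ⟨v, hv, hdeg⟩ := exists_moved_infinite_neighborSet hfin (hmotion δ ⟨c, hδc⟩ hfin)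
  rcases hδ hv with ⟨w, hw, rfl⟩ | ⟨_, ⟨w, hw, rfl⟩, rfl⟩
  · exact ⟨w, hw, hdeg⟩
  · exact ⟨w, hw, (infinite_neighborSet_apply_iff γ w).1 hdeg⟩

end

/-- If `G` has infinite edge motion, `γ` is an automorphism of `G`,
`Vmove` is the set of vertices moved by `γ`, and `C` is a finite connected component
of the subgraph induced by `Vmove`, then `C` contains a vertex of infinite degree. -/
theorem stmt_0 {V : Type} (G : SimpleGraph V)
    (hmotion : ∀ γ : G ≃g G, (∃ v, γ v ≠ v) →
      {e : Sym2 V | e ∈ G.edgeSet ∧ e.map γ ≠ e}.Infinite)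
    (γ : G ≃g G)
    (Vmove : Set V) (hVmove : Vmove = {v | γ v ≠ v})
    (C : (G.induce Vmove).ConnectedComponent)
    (hC : C.supp.Finite) :
    ∃ w ∈ C.supp, (G.neighborSet (w : V)).Infinite := by
  subst hVmove
  exact stmt_0_general G (fun δ hδ _ => hmotion δ hδ) γ C hC
end

section
/- Every countable connected graph in which every non-trivial automorphism moves infinitely many edges admits a distinguishing 2-edge colouring; that is, its distinguishing index D'(G) is at most 2. -/
/-!
Colour `1` the edges of a subgraph `F` of `G`, and `0` all other edges, where `F` is chosen so that
automorphisms of `G` preserving `F` fix pointwise a set `Y` that contains every vertex of infinite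
degree and whose removal leaves only finite components. If such an automorphism moved a vertex `v`,
one could follow it on the component of `v`, follow its inverse on the component of the image of `v`
and leave all other vertices in place: a non-trivial automorphism moving finitely many edges.

To fix the vertices of infinite degree, give them pairwise distinct finite degrees in `F`. On the
rest of the graph, which is locally finite, let `F` be a union of disjoint paths of distinct lengths
that leaves only finite components uncovered. Each path is then preserved, and it remains to prevent
reversals. Every path is chosen after finitely many others, and inside an infinite component, so
it can run from a given vertex to one that is much further from all earlier paths; distances to an
earlier path of the same component then tell its two ends apart. This leaves at most one reversible
path in each component, and since that path is finite, it may be left out of `Y`.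
-/

section Automorphisms

variable {V : Type*} {G H : SimpleGraph V}

/-- `γ` is an automorphism of `G`. This is a predicate on permutations, rather than the bundled type
`G ≃g G`, because the proof follows one permutation through several graphs on the same vertices. -/
def IsAut (G : SimpleGraph V) (γ : Equiv.Perm V) : Prop :=
  ∀ x y, G.Adj (γ x) (γ y) ↔ G.Adj x y

/-- The graph obtained from `G` by deleting all edges that meet `X`. The vertices of `X` are kept,
as isolated vertices, so that all graphs considered share one vertex type. -/
def isolate (G : SimpleGraph V) (X : Set V) : SimpleGraph V :=
  (G.induce Xᶜ).spanningCoe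

theorem isolate_adj {X : Set V} {x y : V} :
    (isolate G X).Adj x y ↔ G.Adj x y ∧ x ∉ X ∧ y ∉ X := by
  simp [isolate]

theorem isolate_le (G : SimpleGraph V) (X : Set V) : isolate G X ≤ G :=
  G.spanningCoe_induce_le Xᶜ

theorem isolate_anti {X Y : Set V} (h : X ⊆ Y) : isolate G Y ≤ isolate G X := fun x y hxy => by
  rw [isolate_adj] at hxy ⊢
  exact ⟨hxy.1, fun hx => hxy.2.1 (h hx), fun hy => hxy.2.2 (h hy)⟩

theorem isolate_isolate (G : SimpleGraph V) (X Y : Set V) :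
    isolate (isolate G X) Y = isolate G (X ∪ Y) := by
  ext x y
  simp only [isolate_adj, Set.mem_union]
  tauto

theorem mem_of_reachable {S : Set V}
    (hS : ∀ x y, x ∈ S → G.Adj x y → y ∈ S) {x y : V} (hx : x ∈ S) (h : G.Reachable x y) :
    y ∈ S := by
  rw [SimpleGraph.reachable_iff_reflTransGen] at h
  induction h with
  | refl => exact hx
  | tail _ hadj ih => exact hS _ _ ih hadj

theorem eq_of_reachable_isolate {X : Set V} {x y : V} (hx : x ∈ X)
    (h : (isolate G X).Reachable x y) : y = x :=
  mem_of_reachable (S := {x})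
    (by rintro _ _ rfl hadj; exact absurd hx (isolate_adj.1 hadj).2.1) rfl h

theorem finite_component_isolate_of_mem {X : Set V} {x : V} (hx : x ∈ X) :
    {y | (isolate G X).Reachable x y}.Finite :=
  (Set.finite_singleton x).subset fun _ hy => eq_of_reachable_isolate hx hy

namespace IsAut

variable {γ : Equiv.Perm V}

/-- The bundled form of `IsAut G γ`, giving access to the library of graph isomorphisms. -/
def toIso (hγ : IsAut G γ) : G ≃g G :=
  ⟨γ, hγ _ _⟩

protected theorem refl : IsAut G (Equiv.refl V) := fun _ _ => Iff.rfl

protected theorem symm (hγ : IsAut G γ) : IsAut G γ.symm := fun x y => by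
  simpa using (hγ (γ.symm x) (γ.symm y)).symm

theorem image_neighborSet (hγ : IsAut G γ) (x : V) :
    γ '' G.neighborSet x = G.neighborSet (γ x) := by
  ext y
  rw [Equiv.image_eq_preimage_symm, Set.mem_preimage, SimpleGraph.mem_neighborSet,
    SimpleGraph.mem_neighborSet, ← hγ, Equiv.apply_symm_apply]

theorem ncard_neighborSet (hγ : IsAut G γ) (x : V) :
    (G.neighborSet (γ x)).ncard = (G.neighborSet x).ncard := by
  rw [← hγ.image_neighborSet, Set.ncard_image_of_injective _ γ.injective]

theorem infinite_neighborSet_iff (hγ : IsAut G γ) (x : V) :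
    (G.neighborSet (γ x)).Infinite ↔ (G.neighborSet x).Infinite := by
  rw [← hγ.image_neighborSet, Set.infinite_image_iff γ.injective.injOn]

theorem reachable_iff (hγ : IsAut G γ) {x y : V} :
    G.Reachable (γ x) (γ y) ↔ G.Reachable x y :=
  hγ.toIso.reachable_iff

theorem image_setOf_reachable (hγ : IsAut G γ) (x : V) :
    γ '' {y | G.Reachable x y} = {y | G.Reachable (γ x) y} := by
  ext y
  rw [Equiv.image_eq_preimage_symm, Set.mem_preimage, Set.mem_ofPred_eq, Set.mem_ofPred_eq,
    ← hγ.reachable_iff, Equiv.apply_symm_apply]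

theorem edist_eq (hγ : IsAut G γ) (x y : V) : G.edist (γ x) (γ y) = G.edist x y := by
  have edist_le {δ : Equiv.Perm V} (hδ : IsAut G δ) (x y : V) :
      G.edist (δ x) (δ y) ≤ G.edist x y := by
    rw [SimpleGraph.edist_eq_sInf (u := x)]
    refine le_sInf ?_
    rintro _ ⟨p, rfl⟩
    exact (SimpleGraph.edist_le (p.map hδ.toIso.toHom)).trans_eq (by simp)
  refine (edist_le hγ x y).antisymm ?_
  simpa using edist_le hγ.symm (γ x) (γ y)

protected theorem isolate (hγ : IsAut G γ) {X : Set V} (hX : ∀ x, γ x ∈ X ↔ x ∈ X) :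
    IsAut (isolate G X) γ := fun x y => by
  simp only [isolate_adj, hγ x y, hX]

theorem isolate_of_fixes (hγ : IsAut G γ) {X : Set V} (hX : ∀ x ∈ X, γ x = x) :
    IsAut (_root_.isolate G X) γ :=
  hγ.isolate fun x => ⟨fun h => by rwa [← γ.injective (hX _ h)], fun h => by rwa [hX x h]⟩

end IsAut

/-- On each component of `isolate G Y`, the permutation `f` agrees with some automorphism of `G`
that fixes `Y` pointwise. Such an `f` is again an automorphism (`IsPatchwork.isAut`). -/
def IsPatchwork (G : SimpleGraph V) (Y : Set V) (f : Equiv.Perm V) : Prop :=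
  ∀ x, ∃ g : Equiv.Perm V, IsAut G g ∧ (∀ y ∈ Y, g y = y) ∧
    ∀ y, (isolate G Y).Reachable x y → f y = g y

namespace IsPatchwork

variable {Y : Set V} {f : Equiv.Perm V}

theorem apply_eq (hf : IsPatchwork G Y f) {y : V} (hy : y ∈ Y) : f y = y := by
  obtain ⟨g, -, hgY, hfg⟩ := hf y
  rw [hfg y .rfl, hgY y hy]

theorem adj (hf : IsPatchwork G Y f) {x y : V} (hxy : G.Adj x y) : G.Adj (f x) (f y) := by
  have adj_of_notMem {x y : V} (hx : x ∉ Y) (hxy : G.Adj x y) : G.Adj (f x) (f y) := by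
    obtain ⟨g, hg, hgY, hfg⟩ := hf x
    have hfy : f y = g y := by
      by_cases hy : y ∈ Y
      · rw [hf.apply_eq hy, hgY y hy]
      · exact hfg y (isolate_adj.2 ⟨hxy, hx, hy⟩).reachable
    rw [hfg x .rfl, hfy]
    exact (hg x y).2 hxy
  by_cases hx : x ∈ Y
  · by_cases hy : y ∈ Y
    · rwa [hf.apply_eq hx, hf.apply_eq hy]
    · exact (adj_of_notMem hy hxy.symm).symm
  · exact adj_of_notMem hx hxy

protected theorem symm (hf : IsPatchwork G Y f) : IsPatchwork G Y f.symm := fun x => by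
  obtain ⟨g, hg, hgY, hfg⟩ := hf (f.symm x)
  have hgx : f.symm x = g.symm x := by
    rw [Equiv.eq_symm_apply, ← hfg _ .rfl, f.apply_symm_apply]
  refine ⟨g.symm, hg.symm, fun y hy => (g.symm_apply_eq).2 (hgY y hy).symm, fun y hxy => ?_⟩
  have hreach : (isolate G Y).Reachable (f.symm x) (g.symm y) := by
    rw [hgx]
    exact (hg.isolate_of_fixes hgY).symm.reachable_iff.2 hxy
  rw [Equiv.symm_apply_eq, hfg _ hreach, g.apply_symm_apply]

theorem isAut (hf : IsPatchwork G Y f) : IsAut G f := fun _ _ =>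
  ⟨fun h => by simpa using hf.symm.adj h, hf.adj⟩

end IsPatchwork

open Classical in
/-- For a permutation `γ` respecting the equivalence relation `r`, the permutation that moves the
class of `v` by `γ`, the class of `γ v`, if different, by `γ.symm`, and nothing else. -/
noncomputable def exchangeClasses (r : Setoid V) (γ : Equiv.Perm V)
    (hγ : ∀ x y, r (γ x) (γ y) ↔ r x y) (v : V) : Equiv.Perm V where
  toFun x := if r v x then γ x else if r (γ v) x then γ.symm x else x
  invFun x := if r (γ v) x then γ.symm x else if r v x then γ x else x
  left_inv x := by
    by_cases hv : r v x
    · simp [hv, hγ]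
    by_cases hγv : r (γ v) x
    · have hx : r v (γ.symm x) := by rw [← hγ, γ.apply_symm_apply]; exact hγv
      have hx' : ¬ r (γ v) (γ.symm x) := fun h =>
        hv (r.trans (r.trans hx (r.symm h)) hγv)
      simp [hv, hγv, hx, hx']
    · simp [hv, hγv]
  right_inv x := by
    by_cases hγv : r (γ v) x
    · have hx : r v (γ.symm x) := by rw [← hγ, γ.apply_symm_apply]; exact hγv
      simp [hγv, hx]
    by_cases hv : r v x
    · have hx : r (γ v) (γ x) := (hγ v x).2 hv
      have hx' : ¬ r v (γ x) := fun h => hγv (r.trans hx (r.trans (r.symm h) hv))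
      simp [hv, hγv, hx, hx']
    · simp [hv, hγv]

section exchangeClasses

variable {r : Setoid V} {γ : Equiv.Perm V} {hγ : ∀ x y, r (γ x) (γ y) ↔ r x y} {v x : V}

theorem exchangeClasses_of_rel (h : r v x) : exchangeClasses r γ hγ v x = γ x :=
  if_pos h

theorem exchangeClasses_of_rel_apply (h : ¬ r v x) (h' : r (γ v) x) :
    exchangeClasses r γ hγ v x = γ.symm x :=
  (if_neg h).trans (if_pos h')

theorem exchangeClasses_of_not_rel (h : ¬ r v x) (h' : ¬ r (γ v) x) :
    exchangeClasses r γ hγ v x = x :=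
  (if_neg h).trans (if_neg h')

end exchangeClasses

theorem IsAut.exists_finite_support {γ : Equiv.Perm V} (hγ : IsAut G γ) {Y : Set V}
    (hγY : ∀ y ∈ Y, γ y = y) {v : V} (hfin : {y | (isolate G Y).Reachable v y}.Finite) :
    ∃ σ : Equiv.Perm V, IsAut G σ ∧ (∀ y ∈ Y, σ y = y) ∧ σ v = γ v ∧ {x | σ x ≠ x}.Finite := by
  let r := (isolate G Y).reachableSetoid
  have hγ' := hγ.isolate_of_fixes hγY
  let σ := exchangeClasses r γ (fun _ _ => hγ'.reachable_iff) v
  have hσ : IsPatchwork G Y σ := fun x => by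
    by_cases hv : r v x
    · exact ⟨γ, hγ, hγY, fun y hxy => exchangeClasses_of_rel (r.trans hv hxy)⟩
    by_cases hγv : r (γ v) x
    · refine ⟨γ.symm, hγ.symm, fun y hy => γ.symm_apply_eq.2 (hγY y hy).symm, fun y hxy => ?_⟩
      exact exchangeClasses_of_rel_apply (fun h => hv (r.trans h (r.symm hxy))) (r.trans hγv hxy)
    · refine ⟨Equiv.refl V, .refl, fun _ _ => rfl, fun y hxy => ?_⟩
      exact exchangeClasses_of_not_rel (fun h => hv (r.trans h (r.symm hxy)))
        (fun h => hγv (r.trans h (r.symm hxy)))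
  have hfin' : {y | (isolate G Y).Reachable (γ v) y}.Finite := by
    rw [← hγ'.image_setOf_reachable]
    exact hfin.image γ
  refine ⟨σ, hσ.isAut, fun y => hσ.apply_eq, exchangeClasses_of_rel (r.refl v),
    (hfin.union hfin').subset fun x hx => ?_⟩
  by_contra h
  exact hx (exchangeClasses_of_not_rel (fun h' => h (.inl h')) (fun h' => h (.inr h')))

theorem finite_setOf_map_ne {σ : Equiv.Perm V} (hσ : {x | σ x ≠ x}.Finite)
    (hdeg : ∀ x, σ x ≠ x → (G.neighborSet x).Finite) :
    {e : Sym2 V | e ∈ G.edgeSet ∧ e.map σ ≠ e}.Finite := by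
  refine (hσ.biUnion fun x hx => (hdeg x hx).image fun y => s(x, y)).subset ?_
  rintro ⟨a, b⟩ ⟨hab, hne⟩
  simp only [Set.mem_iUnion]
  by_cases ha : σ a = a
  · by_cases hb : σ b = b
    · exact absurd (by simp [ha, hb]) hne
    · exact ⟨b, hb, a, hab.symm, Sym2.eq_swap⟩
  · exact ⟨a, ha, b, hab, rfl⟩

theorem isAut_of_indicator_comp_mapEdgeSet [DecidablePred (· ∈ H.edgeSet)] (hH : H ≤ G) (γ : G ≃g G)
    (hγ : ∀ e : G.edgeSet, (if (γ.mapEdgeSet e).1 ∈ H.edgeSet then 1 else 0 : Fin 2) =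
      if e.1 ∈ H.edgeSet then 1 else 0) :
    IsAut H γ.toEquiv := fun x y => by
  by_cases hxy : G.Adj x y
  · have := hγ ⟨s(x, y), hxy⟩
    have hmap : (γ.mapEdgeSet ⟨s(x, y), hxy⟩).1 = s(γ x, γ y) := rfl
    rw [hmap] at this
    simp only [SimpleGraph.mem_edgeSet] at this
    by_cases h : H.Adj (γ x) (γ y) <;> by_cases h' : H.Adj x y <;> simp_all
  · exact iff_of_false (fun h => hxy (γ.map_adj_iff.1 (hH h))) (fun h => hxy (hH h))

end Automorphisms

section InfiniteDegree

variable {V : Type*}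

section OutNeighbors

variable {e : V → ℕ} {N : V → Set V}

theorem neighborSet_fromRel_mem (hlt : ∀ x, ∀ y ∈ N x, e x < e y) (x : V) :
    (SimpleGraph.fromRel fun x y => y ∈ N x).neighborSet x = N x ∪ {y | x ∈ N y} := by
  ext y
  simp only [SimpleGraph.mem_neighborSet, SimpleGraph.fromRel_adj, Set.mem_union,
    Set.mem_ofPred_eq, and_iff_right_iff_imp]
  rintro (h | h) rfl <;> exact (hlt x x h).false

theorem finite_setOf_mem_and_ncard_le (hlt : ∀ x, ∀ y ∈ N x, e x < e y)
    (he : Function.Injective e) (x : V) :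
    {y | x ∈ N y}.Finite ∧ {y | x ∈ N y}.ncard ≤ e x := by
  have hsub : {y | x ∈ N y} ⊆ e ⁻¹' Set.Iio (e x) := fun y hy => hlt y x hy
  have hfin : (e ⁻¹' Set.Iio (e x)).Finite := (Set.finite_Iio _).preimage he.injOn
  refine ⟨hfin.subset hsub, (Set.ncard_le_ncard hsub hfin).trans ?_⟩
  exact (Set.ncard_le_ncard_of_injOn e (fun y hy => hy) he.injOn (Set.finite_Iio (e x))).trans_eq
    (by simp)

theorem ncard_neighborSet_fromRel_mem_bounds (hlt : ∀ x, ∀ y ∈ N x, e x < e y)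
    (he : Function.Injective e) {x : V} (hfin : (N x).Finite) :
    (N x).ncard ≤ ((SimpleGraph.fromRel fun x y => y ∈ N x).neighborSet x).ncard ∧
      ((SimpleGraph.fromRel fun x y => y ∈ N x).neighborSet x).ncard ≤ (N x).ncard + e x := by
  obtain ⟨hfin', hcard⟩ := finite_setOf_mem_and_ncard_le hlt he x
  rw [neighborSet_fromRel_mem hlt]
  exact ⟨Set.ncard_le_ncard Set.subset_union_left (hfin.union hfin'),
    (Set.ncard_union_le _ _).trans (Nat.add_le_add_left hcard _)⟩

end OutNeighbors

theorem exists_le_injOn_ncard_neighborSet [Countable V] (G : SimpleGraph V) {I : Set V}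
    (hI : ∀ x ∈ I, (G.neighborSet x).Infinite) :
    ∃ F ≤ G, (∀ x y, F.Adj x y → x ∈ I ∨ y ∈ I) ∧
      Set.InjOn (fun x => (F.neighborSet x).ncard) I := by
  classical
  obtain ⟨e, he⟩ := exists_injective_nat V
  have exists_outNeighbors (x : V) (hx : x ∈ I) : ∃ N ⊆ G.neighborSet x \ {y | e y ≤ e x},
      N.Finite ∧ N.ncard = e x ^ 2 :=
    ((hI x hx).sdiff ((Set.finite_Iic (e x)).preimage he.injOn)).exists_subset_ncard_eq _
  choose! M hsub hfin hcard using exists_outNeighbors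
  let N (x : V) : Set V := {y | x ∈ I ∧ y ∈ M x}
  have hN {x : V} (hx : x ∈ I) : N x = M x := by simp [N, hx]
  have hlt (x : V) (y : V) (hy : y ∈ N x) : e x < e y := not_le.1 (hsub x hy.1 hy.2).2
  let F := SimpleGraph.fromRel fun x y => y ∈ N x
  have bounds {x : V} (hx : x ∈ I) :
      e x ^ 2 ≤ (F.neighborSet x).ncard ∧ (F.neighborSet x).ncard ≤ e x ^ 2 + e x := by
    have := ncard_neighborSet_fromRel_mem_bounds hlt he (x := x) (hN hx ▸ hfin x hx)
    rwa [hN hx, hcard x hx] at this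
  refine ⟨F, fun x y h => ?_, fun x y h => h.2.imp And.left And.left, fun x hx y hy hxy => ?_⟩
  · rcases h.2 with h | h
    exacts [(hsub x h.1 h.2).1, (hsub y h.1 h.2).1.symm]
  · dsimp only at hxy
    obtain ⟨hx₁, hx₂⟩ := bounds hx
    obtain ⟨hy₁, hy₂⟩ := bounds hy
    -- The intervals `[n ^ 2, n ^ 2 + n]` are pairwise disjoint.
    apply he
    nlinarith

end InfiniteDegree

section Paths

variable {V : Type*} {H : SimpleGraph V}

theorem eq_of_isPath_of_ncard_neighborSet {u v x : V} {p : H.Walk u v} (hp : p.IsPath)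
    (hx : x ∈ p.support) (hcard : (p.toSubgraph.neighborSet x).ncard = 1) : x = u ∨ x = v := by
  obtain ⟨i, rfl, hi⟩ := SimpleGraph.Walk.mem_support_iff_exists_getVert.1 hx
  rcases eq_or_ne i 0 with rfl | h0
  · exact .inl p.getVert_zero
  rcases hi.eq_or_lt with rfl | hlt
  · exact .inr p.getVert_length
  · have := hp.ncard_neighborSet_toSubgraph_internal_eq_two h0 hlt
    omega

theorem apply_eq_of_mem_support_of_isPath {u v : V} {p : H.Walk u v} (hp : p.IsPath) {f : V → V}
    (hf : Function.Injective f)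
    (hadj : ∀ x y, p.toSubgraph.Adj x y → p.toSubgraph.Adj (f x) (f y)) (hu : f u = u) :
    ∀ x ∈ p.support, f x = x := by
  have apply_getVert (i : ℕ) (hi : i ≤ p.length) : f (p.getVert i) = p.getVert i := by
    induction i using Nat.strong_induction_on with
    | _ i ih =>
      match i with
      | 0 => simpa using hu
      | 1 =>
        have h := hadj _ _ (p.toSubgraph_adj_getVert hi)
        rw [p.getVert_zero, hu, ← SimpleGraph.Subgraph.mem_neighborSet,
          hp.neighborSet_toSubgraph_startpoint (SimpleGraph.Walk.not_nil_iff_lt_length.2 hi)] at h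
        exact h
      | i + 2 =>
        have h := hadj _ _ (p.toSubgraph_adj_getVert hi)
        rw [ih (i + 1) (by omega) (by omega), ← SimpleGraph.Subgraph.mem_neighborSet,
          hp.neighborSet_toSubgraph_internal (by omega) (by omega)] at h
        refine h.resolve_left fun hback => ?_
        rw [Nat.add_sub_cancel, ← ih i (by omega) (by omega)] at hback
        have := hp.getVert_injOn (x₁ := i + 2) (x₂ := i) hi (Nat.le_of_add_right_le hi) (hf hback)
        omega
  intro x hx
  obtain ⟨i, rfl, hi⟩ := SimpleGraph.Walk.mem_support_iff_exists_getVert.1 hx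
  exact apply_getVert i hi

/-- A path of `H` with at least one edge, directed from `first` to `last`. -/
structure NontrivialPath (H : SimpleGraph V) where
  first : V
  last : V
  walk : H.Walk first last
  isPath : walk.IsPath
  not_nil : ¬ walk.Nil

namespace NontrivialPath

variable {p q : NontrivialPath H} {S T : Set (NontrivialPath H)} {γ : Equiv.Perm V}

/-- The vertex set of a path. -/
def verts (p : NontrivialPath H) : Set V :=
  {x | x ∈ p.walk.support}

theorem first_mem_verts (p : NontrivialPath H) : p.first ∈ p.verts :=
  p.walk.start_mem_support

theorem finite_verts (p : NontrivialPath H) : p.verts.Finite :=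
  p.walk.support.finite_toSet

theorem ncard_verts (p : NontrivialPath H) : p.verts.ncard = p.walk.length + 1 := by
  classical
  have : p.verts = p.walk.support.toFinset := by ext; simp [verts]
  rw [this, Set.ncard_coe_finset, List.toFinset_card_of_nodup p.isPath.support_nodup,
    p.walk.length_support]

theorem reachable_of_mem_verts {x y : V} (hx : x ∈ p.verts) (hy : y ∈ p.verts) :
    H.Reachable x y := by
  classical
  exact (p.walk.takeUntil x hx).reachable.symm.trans (p.walk.takeUntil y hy).reachable

theorem verts_eq_toSubgraph_verts (p : NontrivialPath H) : p.verts = p.walk.toSubgraph.verts := by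
  ext x
  exact p.walk.mem_verts_toSubgraph.symm

/-- Every vertex of `q` is closer to the first vertex of `p` than any vertex of `q` is to the last
vertex of `p`. Hence no automorphism of `H` that preserves `q` moves `p.first` to `p.last`. -/
def Anchors (q p : NontrivialPath H) : Prop :=
  ∀ y ∈ q.verts, ∀ z ∈ q.verts, H.edist p.first y < H.edist p.last z

/-- Conditions on pairs of paths which ensure that the union of a family of pairwise compatible
paths determines the paths and, up to one path in each component of `H`, their directions. -/
structure Compatible (p q : NontrivialPath H) : Prop where
  disjoint : Disjoint p.verts q.verts
  length_ne : p.walk.length ≠ q.walk.length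
  anchors : H.Reachable p.first q.first → Anchors p q ∨ Anchors q p

protected theorem Compatible.symm (h : Compatible p q) : Compatible q p :=
  ⟨h.disjoint.symm, h.length_ne.symm, fun hr => (h.anchors hr.symm).symm⟩

/-- The vertices lying on some path of the family `S`. -/
def covered (S : Set (NontrivialPath H)) : Set V :=
  ⋃ p ∈ S, p.verts

theorem mem_covered {x : V} : x ∈ covered S ↔ ∃ p ∈ S, x ∈ p.verts := by
  simp [covered]

theorem covered_mono (h : S ⊆ T) : covered S ⊆ covered T :=
  Set.biUnion_subset_biUnion_left h

/-- The vertices lying on a path of the family `S` that is anchored by some path of `S`. -/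
def anchored (S : Set (NontrivialPath H)) : Set V :=
  covered {p ∈ S | ∃ q ∈ S, Anchors q p}

/-- The graph formed by the edges of all paths of the family `S`. -/
def pathUnion (S : Set (NontrivialPath H)) : SimpleGraph V :=
  ⨆ p ∈ S, p.walk.toSubgraph.spanningCoe

theorem pathUnion_adj {x y : V} :
    (pathUnion S).Adj x y ↔ ∃ p ∈ S, p.walk.toSubgraph.Adj x y := by
  simp [pathUnion]

theorem pathUnion_le (S : Set (NontrivialPath H)) : pathUnion S ≤ H := fun x y h => by
  obtain ⟨p, -, hp⟩ := pathUnion_adj.1 h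
  exact hp.adj_sub

theorem pairwiseDisjoint_verts (hS : S.Pairwise Compatible) : S.PairwiseDisjoint verts :=
  hS.mono' fun _ _ h => h.disjoint

theorem neighborSet_pathUnion (hS : S.PairwiseDisjoint verts) (hp : p ∈ S) {x : V}
    (hx : x ∈ p.verts) : (pathUnion S).neighborSet x = p.walk.toSubgraph.neighborSet x := by
  ext y
  rw [SimpleGraph.mem_neighborSet, pathUnion_adj, SimpleGraph.Subgraph.mem_neighborSet]
  refine ⟨?_, fun h => ⟨p, hp, h⟩⟩
  rintro ⟨q, hq, h⟩
  rwa [hS.elim_set hp hq x hx (q.verts_eq_toSubgraph_verts ▸ h.fst_mem)]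

theorem setOf_reachable_pathUnion (hS : S.PairwiseDisjoint verts) (hp : p ∈ S) {x : V}
    (hx : x ∈ p.verts) : {y | (pathUnion S).Reachable x y} = p.verts := by
  classical
  refine Set.Subset.antisymm (fun y hxy => mem_of_reachable ?_ hx hxy) fun y hy => ?_
  · intro a b ha hab
    rw [← SimpleGraph.mem_neighborSet, neighborSet_pathUnion hS hp ha] at hab
    rw [verts_eq_toSubgraph_verts]
    exact hab.snd_mem
  · let w := p.walk.transfer (pathUnion S) fun e he => by
      induction e with
      | _ a b => exact pathUnion_adj.2 ⟨p, hp, p.walk.mem_edges_toSubgraph.2 he⟩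
    have reachable_first {z : V} (hz : z ∈ p.verts) : (pathUnion S).Reachable p.first z :=
      (w.takeUntil z (by rw [p.walk.support_transfer]; exact hz)).reachable
    exact (reachable_first hx).symm.trans (reachable_first hy)

theorem apply_mem_verts (hS : S.Pairwise Compatible) (hγ : IsAut (pathUnion S) γ) (hp : p ∈ S)
    {x : V} (hx : x ∈ p.verts) : γ x ∈ p.verts := by
  obtain ⟨q, hq, hpq⟩ : ∃ q ∈ S, γ p.first ∈ q.verts := by
    have hadj := p.walk.toSubgraph_adj_snd p.not_nil
    obtain ⟨q, hq, h⟩ := pathUnion_adj.1 ((hγ _ _).2 (pathUnion_adj.2 ⟨p, hp, hadj⟩))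
    exact ⟨q, hq, q.verts_eq_toSubgraph_verts ▸ h.fst_mem⟩
  have himage : γ '' p.verts = q.verts := by
    have hdisj := pairwiseDisjoint_verts hS
    rw [← setOf_reachable_pathUnion hdisj hp p.first_mem_verts, hγ.image_setOf_reachable,
      setOf_reachable_pathUnion hdisj hq hpq]
  have hlength : p.walk.length = q.walk.length := by
    have := Set.ncard_image_of_injective p.verts γ.injective
    rw [himage, ncard_verts, ncard_verts] at this
    omega
  obtain rfl : p = q := by
    by_contra hne
    exact (hS hp hq hne).length_ne hlength
  exact himage ▸ Set.mem_image_of_mem γ hx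

theorem apply_first (hS : S.Pairwise Compatible) (hγ : IsAut (pathUnion S) γ) (hp : p ∈ S) :
    γ p.first = p.first ∨ γ p.first = p.last := by
  have hmem := apply_mem_verts hS hγ hp p.first_mem_verts
  refine eq_of_isPath_of_ncard_neighborSet p.isPath hmem ?_
  rw [← neighborSet_pathUnion (pairwiseDisjoint_verts hS) hp hmem, hγ.ncard_neighborSet,
    neighborSet_pathUnion (pairwiseDisjoint_verts hS) hp p.first_mem_verts,
    p.isPath.neighborSet_toSubgraph_startpoint p.not_nil, Set.ncard_singleton]

theorem apply_first_ne_last (hS : S.Pairwise Compatible) (hγ : IsAut (pathUnion S) γ)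
    (hγH : IsAut H γ) (hq : q ∈ S) (hpq : Anchors q p) : γ p.first ≠ p.last := fun hlast => by
  have hlt := hpq _ q.first_mem_verts _ (apply_mem_verts hS hγ hq q.first_mem_verts)
  rw [← hlast, hγH.edist_eq] at hlt
  exact hlt.false

theorem apply_eq_of_mem_anchored (hS : S.Pairwise Compatible) (hγ : IsAut (pathUnion S) γ)
    (hγH : IsAut H γ) {x : V} (hx : x ∈ anchored S) : γ x = x := by
  obtain ⟨p, ⟨hp, q, hq, hpq⟩, hxp⟩ := mem_covered.1 hx
  refine apply_eq_of_mem_support_of_isPath p.isPath γ.injective (fun y z hyz => ?_)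
    ((apply_first hS hγ hp).resolve_right (apply_first_ne_last hS hγ hγH hq hpq)) x hxp
  have hy : y ∈ p.verts := p.verts_eq_toSubgraph_verts ▸ hyz.fst_mem
  rw [← SimpleGraph.Subgraph.mem_neighborSet,
    ← neighborSet_pathUnion (pairwiseDisjoint_verts hS) hp (apply_mem_verts hS hγ hp hy),
    SimpleGraph.mem_neighborSet, hγ]
  exact pathUnion_adj.2 ⟨p, hp, hyz⟩

end NontrivialPath

end Paths

section LocallyFinite

variable {V : Type*} {H : SimpleGraph V}

theorem finite_ball (hH : ∀ x, (H.neighborSet x).Finite) (c : V) (n : ℕ) : (H.ball c n).Finite := by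
  induction n with
  | zero => simp
  | succ n ih =>
    refine ((Set.finite_singleton c).union (ih.biUnion fun y _ => hH y)).subset fun x hx => ?_
    rw [SimpleGraph.mem_ball] at hx
    obtain ⟨p, hp⟩ := SimpleGraph.exists_walk_of_edist_ne_top hx.ne_top
    cases p with
    | nil => exact .inl rfl
    | @cons _ y _ hxy p =>
      refine .inr (Set.mem_biUnion (x := y) ?_ hxy.symm)
      refine (SimpleGraph.edist_le p).trans_lt ?_
      rw [← hp, SimpleGraph.Walk.length_cons] at hx
      exact_mod_cast Nat.succ_lt_succ_iff.1 (mod_cast hx)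

theorem exists_forall_mem_lt_edist (hH : ∀ x, (H.neighborSet x).Finite) {A U : Set V}
    (hA : A.Infinite) (hU : U.Finite) (n : ℕ) : ∃ w ∈ A, ∀ u ∈ U, n < H.edist w u := by
  obtain ⟨w, hw, hfar⟩ := (hA.sdiff (hU.biUnion fun u _ => finite_ball hH u (n + 1))).nonempty
  refine ⟨w, hw, fun u hu => ?_⟩
  by_contra hle
  refine hfar (Set.mem_biUnion hu ?_)
  exact (not_lt.1 hle).trans_lt (mod_cast n.lt_succ_self)

namespace NontrivialPath

variable {S : Set (NontrivialPath H)}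

theorem finite_covered (hS : S.Finite) : (covered S).Finite :=
  hS.biUnion fun p _ => p.finite_verts

theorem exists_nontrivialPath_of_infinite (hH : ∀ x, (H.neighborSet x).Finite)
    {U : Set V} (hU : U.Finite) {v : V} (hv : {y | (isolate H U).Reachable v y}.Infinite) (n : ℕ) :
    ∃ p : NontrivialPath H, p.first = v ∧ Disjoint p.verts U ∧ n < p.walk.length ∧
      ∀ u ∈ U, n < H.edist p.last u := by
  classical
  obtain ⟨w, hvw, hfar⟩ := exists_forall_mem_lt_edist hH hv (hU.insert v) n
  have hvU : v ∉ U := fun h => hv (finite_component_isolate_of_mem h)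
  obtain ⟨walk, hwalk⟩ := SimpleGraph.Reachable.exists_isPath hvw
  have hlength : n < walk.length := by
    have h := (hfar v (Set.mem_insert v U)).trans_le
      (SimpleGraph.edist_comm.trans_le (SimpleGraph.edist_le (walk.mapLe (isolate_le H U))))
    simpa using h
  refine ⟨⟨v, w, walk.mapLe (isolate_le H U), hwalk.mapLe _, ?_⟩, rfl, ?_, ?_, fun u hu => ?_⟩
  · rw [SimpleGraph.Walk.not_nil_iff_lt_length]
    simpa using hlength.pos
  · refine Set.disjoint_left.2 fun x hx hxU => hvU ?_
    have hx' : x ∈ walk.support := by simpa [verts] using hx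
    rwa [eq_of_reachable_isolate hxU (walk.takeUntil x hx').reachable.symm]
  · simpa using hlength
  · exact hfar u (Set.mem_insert_of_mem v hu)

theorem exists_compatible (hH : ∀ x, (H.neighborSet x).Finite) (hS : S.Finite) {v : V}
    (hv : {y | (isolate H (covered S)).Reachable v y}.Infinite) :
    ∃ p : NontrivialPath H, v ∈ p.verts ∧ ∀ q ∈ S, Compatible p q := by
  obtain ⟨m, hm⟩ := (hS.image fun q => q.walk.length).bddAbove
  obtain ⟨d, hd⟩ := ((finite_covered hS).image (H.dist v)).bddAbove
  obtain ⟨p, rfl, hdisj, hlength, hfar⟩ :=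
    exists_nontrivialPath_of_infinite hH (finite_covered hS) hv (max m d)
  have hcovered {q : NontrivialPath H} (hq : q ∈ S) : q.verts ⊆ covered S :=
    Set.subset_biUnion_of_mem hq
  refine ⟨p, p.first_mem_verts, fun q hq => ⟨hdisj.mono_right (hcovered hq), ?_, fun hr => ?_⟩⟩
  · have := hm (Set.mem_image_of_mem _ hq)
    omega
  · refine .inr fun y hy z hz => ?_
    have hry : H.Reachable p.first y := hr.trans (reachable_of_mem_verts q.first_mem_verts hy)
    calc H.edist p.first y = H.dist p.first y := hry.coe_dist_eq_edist.symm
      _ ≤ max m d := by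
        exact_mod_cast (hd (Set.mem_image_of_mem _ (hcovered hq hy))).trans (le_max_right m d)
      _ < H.edist p.last z := mod_cast hfar z (hcovered hq hz)

variable (H) in
/-- The finite approximations to the family of paths in
`exists_pairwise_compatible_finite_components`, ordered by inclusion. -/
abbrev FiniteCompatibleFamily : Type _ :=
  {S : Set (NontrivialPath H) // S.Finite ∧ S.Pairwise Compatible}

/-- The finite compatible families that cut the component of `v` down to a finite one. -/
def cofinalFiniteComponent (hH : ∀ x, (H.neighborSet x).Finite) (v : V) :
    Order.Cofinal (FiniteCompatibleFamily H) where
  carrier := {S | {y | (isolate H (covered S.1)).Reachable v y}.Finite}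
  isCofinal := fun ⟨S, hS, hcompat⟩ => by
    by_cases hv : {y | (isolate H (covered S)).Reachable v y}.Finite
    · exact ⟨⟨S, hS, hcompat⟩, hv, le_rfl⟩
    obtain ⟨p, hvp, hp⟩ := exists_compatible hH hS hv
    refine ⟨⟨insert p S, hS.insert p, hcompat.insert fun q hq _ => ⟨hp q hq, (hp q hq).symm⟩⟩,
      finite_component_isolate_of_mem (mem_covered.2 ⟨p, S.mem_insert p, hvp⟩), S.subset_insert p⟩

theorem exists_pairwise_compatible_finite_components [Countable V]
    (hH : ∀ x, (H.neighborSet x).Finite) :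
    ∃ S : Set (NontrivialPath H), S.Pairwise Compatible ∧
      ∀ v, {y | (isolate H (covered S)).Reachable v y}.Finite := by
  have := Encodable.ofCountable V
  let J := Order.idealOfCofinals (⟨∅, Set.finite_empty, Set.pairwise_empty _⟩ :
    FiniteCompatibleFamily H) (cofinalFiniteComponent hH)
  refine ⟨⋃ T ∈ J, T.1, fun p hp q hq hne => ?_, fun v => ?_⟩
  · simp only [Set.mem_iUnion, exists_prop] at hp hq
    obtain ⟨A, hA, hpA⟩ := hp
    obtain ⟨B, hB, hqB⟩ := hq
    obtain ⟨T, -, hAT, hBT⟩ := J.directed A hA B hB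
    exact T.2.2 (hAT hpA) (hBT hqB) hne
  · obtain ⟨T, hT, hTJ⟩ := Order.cofinal_meets_idealOfCofinals _ (cofinalFiniteComponent hH) v
    exact Set.Finite.subset hT fun y hy => hy.mono (isolate_anti (covered_mono
      (Set.subset_biUnion_of_mem (u := fun T : FiniteCompatibleFamily H => T.1) hTJ)))

end NontrivialPath

end LocallyFinite

section FiniteComponents

variable {V : Type*}

theorem finite_component_isolate_of_finite {H : SimpleGraph V}
    (hH : ∀ x, (H.neighborSet x).Finite) {U X : Set V}
    (hU : ∀ v, {y | (isolate H U).Reachable v y}.Finite) {v : V}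
    (hfin : {x ∈ U \ X | H.Reachable v x}.Finite) : {y | (isolate H X).Reachable v y}.Finite := by
  let B := {x ∈ U \ X | H.Reachable v x}
  let A := {v} ∪ (B ∪ ⋃ b ∈ B, H.neighborSet b)
  let T := ⋃ z ∈ A, {y | (isolate H U).Reachable z y}
  have hA : A.Finite := (Set.finite_singleton v).union (hfin.union (hfin.biUnion fun b _ => hH b))
  have subset_T {z : V} (hz : z ∈ A) : z ∈ T := Set.mem_biUnion hz (.refl z)
  have closed (x y : V) (hx : x ∈ T ∩ {x | H.Reachable v x}) (hxy : (isolate H X).Adj x y) :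
      y ∈ T ∩ {x | H.Reachable v x} := by
    obtain ⟨hxT, hvx⟩ := hx
    obtain ⟨hadj, hxX, hyX⟩ := isolate_adj.1 hxy
    have hvy : H.Reachable v y := hvx.trans hadj.reachable
    refine ⟨?_, hvy⟩
    by_cases hxU : x ∈ U
    · exact subset_T (.inr (.inr (Set.mem_biUnion (x := x) ⟨⟨hxU, hxX⟩, hvx⟩ hadj)))
    by_cases hyU : y ∈ U
    · exact subset_T (.inr (.inl ⟨⟨hyU, hyX⟩, hvy⟩))
    · simp only [T, Set.mem_iUnion, exists_prop] at hxT ⊢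
      obtain ⟨z, hz, hzx⟩ := hxT
      exact ⟨z, hz, hzx.trans (isolate_adj.2 ⟨hadj, hxU, hyU⟩).reachable⟩
  refine (hA.biUnion fun z _ => hU z).subset fun y hy => ?_
  exact (mem_of_reachable closed ⟨subset_T (.inl rfl), .refl v⟩ hy).1

namespace NontrivialPath

variable {H : SimpleGraph V} {S : Set (NontrivialPath H)}

theorem finite_reachable_not_anchored (hS : S.Pairwise Compatible) (v : V) :
    {x ∈ covered S \ anchored S | H.Reachable v x}.Finite := by
  let P := {p ∈ S | (¬ ∃ q ∈ S, Anchors q p) ∧ H.Reachable v p.first}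
  have hP : P.Subsingleton := by
    rintro p ⟨hp, hp', hvp⟩ q ⟨hq, hq', hvq⟩
    by_contra hne
    rcases (hS hp hq hne).anchors (hvp.symm.trans hvq) with h | h
    exacts [hq' ⟨p, hp, h⟩, hp' ⟨q, hq, h⟩]
  refine (finite_covered hP.finite).subset ?_
  rintro x ⟨⟨hx, hxa⟩, hvx⟩
  obtain ⟨p, hp, hxp⟩ := mem_covered.1 hx
  refine mem_covered.2 ⟨p, ⟨hp, fun h => hxa (mem_covered.2 ⟨p, ⟨hp, h⟩, hxp⟩), ?_⟩, hxp⟩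
  exact hvx.trans (reachable_of_mem_verts hxp p.first_mem_verts)

end NontrivialPath

open NontrivialPath in
theorem exists_fixing_subgraph_of_locallyFinite [Countable V] {H : SimpleGraph V}
    (hH : ∀ x, (H.neighborSet x).Finite) :
    ∃ F ≤ H, ∃ X : Set V, (∀ γ, IsAut H γ → IsAut F γ → ∀ x ∈ X, γ x = x) ∧
      ∀ v, {y | (isolate H X).Reachable v y}.Finite := by
  obtain ⟨S, hS, hfin⟩ := exists_pairwise_compatible_finite_components hH
  exact ⟨pathUnion S, pathUnion_le S, anchored S,
    fun γ hγH hγ _ hx => apply_eq_of_mem_anchored hS hγ hγH hx,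
    fun v => finite_component_isolate_of_finite hH hfin (finite_reachable_not_anchored hS v)⟩

theorem exists_fixing_subgraph [Countable V] (G : SimpleGraph V) :
    ∃ F ≤ G, ∃ Y : Set V, (∀ γ, IsAut G γ → IsAut F γ → ∀ y ∈ Y, γ y = y) ∧
      (∀ x ∉ Y, (G.neighborSet x).Finite) ∧ ∀ v, {y | (isolate G Y).Reachable v y}.Finite := by
  let I := {x | (G.neighborSet x).Infinite}
  obtain ⟨F₁, hF₁, hedge, hinj⟩ := exists_le_injOn_ncard_neighborSet G (I := I) fun _ hx => hx
  have hlf (x : V) : ((isolate G I).neighborSet x).Finite := by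
    by_cases hx : x ∈ I
    · exact Set.finite_empty.subset fun y hy => (isolate_adj.1 hy).2.1 hx
    · exact (Set.not_infinite.1 hx).subset fun y hy => (isolate_adj.1 hy).1
  obtain ⟨F₂, hF₂, X, hfix, hfin⟩ := exists_fixing_subgraph_of_locallyFinite hlf
  have neighborSet_sup {x : V} (hx : x ∈ I) :
      (F₁ ⊔ F₂).neighborSet x = F₁.neighborSet x := by
    ext y
    exact or_iff_left fun h => (isolate_adj.1 (hF₂ h)).2.1 hx
  have isolate_sup : isolate (F₁ ⊔ F₂) I = F₂ := by
    ext x y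
    rw [isolate_adj, SimpleGraph.sup_adj]
    refine ⟨fun h => h.1.resolve_left fun h' => ?_, fun h => ⟨.inr h, (isolate_adj.1 (hF₂ h)).2⟩⟩
    exact (hedge x y h').elim h.2.1 h.2.2
  refine ⟨F₁ ⊔ F₂, sup_le hF₁ (hF₂.trans (isolate_le G I)), I ∪ X, fun γ hγ hγF => ?_,
    fun x hx => Set.not_infinite.1 fun h => hx (.inl h), fun v => ?_⟩
  · have hγI (x : V) : γ x ∈ I ↔ x ∈ I := hγ.infinite_neighborSet_iff x
    rintro y (hy | hy)
    · refine hinj ((hγI y).2 hy) hy ?_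
      have := hγF.ncard_neighborSet y
      rwa [neighborSet_sup hy, neighborSet_sup ((hγI y).2 hy)] at this
    · exact hfix γ (hγ.isolate hγI) (isolate_sup ▸ hγF.isolate hγI) y hy
  · rw [← isolate_isolate]
    exact hfin v

end FiniteComponents

theorem stmt_2_general {V : Type*} [Countable V] (G : SimpleGraph V)
    (hmotion : ∀ γ : G ≃g G, (∃ v, γ v ≠ v) →
      {e : Sym2 V | e ∈ G.edgeSet ∧ e.map γ ≠ e}.Infinite) :
    ∃ c : G.edgeSet → Fin 2, ∀ γ : G ≃g G,
      (∀ e : G.edgeSet, c (γ.mapEdgeSet e) = c e) → ∀ v, γ v = v := by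
  classical
  obtain ⟨F, hFG, Y, hfix, hdeg, hfin⟩ := exists_fixing_subgraph G
  refine ⟨fun e => if e.1 ∈ F.edgeSet then 1 else 0, fun γ hc v => ?_⟩
  have hγ : IsAut G γ.toEquiv := fun _ _ => γ.map_adj_iff
  have hγY := hfix _ hγ (isAut_of_indicator_comp_mapEdgeSet hFG γ hc)
  obtain ⟨σ, hσ, hσY, hσv, hσfin⟩ := hγ.exists_finite_support hγY (hfin v)
  by_contra hv
  refine hmotion hσ.toIso ⟨v, hσv.trans_ne hv⟩ (finite_setOf_map_ne hσfin fun x hx => hdeg x ?_)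
  exact fun hxY => hx (hσY x hxY)

/-- Every countable connected graph in which every non-trivial automorphism
moves infinitely many edges admits a distinguishing 2-edge colouring, i.e. `D'(G) ≤ 2`. -/
theorem stmt_2 {V : Type} [Countable V] (G : SimpleGraph V) (hconn : G.Connected)
    (hmotion : ∀ γ : G ≃g G, (∃ v, γ v ≠ v) →
      {e : Sym2 V | e ∈ G.edgeSet ∧ e.map γ ≠ e}.Infinite) :
    ∃ c : G.edgeSet → Fin 2, ∀ γ : G ≃g G,
      (∀ e : G.edgeSet, c (γ.mapEdgeSet e) = c e) → ∀ v, γ v = v :=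
  stmt_2_general G hmotion
end

section
/- Let G be a graph whose line graph L(G) is countable and connected, and suppose every non-trivial automorphism of L(G) moves infinitely many vertices of L(G). Then L(G) admits a distinguishing 2-vertex colouring. -/
/-!
An automorphism of `L(G)` acts on the infinite components of `L(G)` as an automorphism of `G` does.
It must send stars to stars: among three pairwise adjacent edges of such a component, those with a
common endpoint are recognised by the existence of an edge adjacent to an odd number of them. On the
finite components it is trivial by the motion hypothesis. So it is enough to colour the edges of `G`
in such a way that colour-preserving automorphisms of `G` fix every edge.

The vertices of infinite degree are distinguished by the integer square roots of their numbers of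
coloured edges. The other vertices span a locally finite graph. Each infinite component of it
contains a finite part of a set `C` that is left uncoloured inside, while near every vertex outside
`C` there is a coloured edge; this makes `C` recognisable. The infinite components of what remains
far from `C` have normal (depth-first) spanning forests, whose roots are marked by coloured edges
leaving the component. If such a forest is a colour class, then a colour-preserving automorphism
commutes with taking ancestors, by induction on the depth. This persists if the colours of suitable
single edges, no two of them at nearby levels, are changed. The changed edges are then fixed, since
depths are preserved, and so are all their ancestors. As every infinite subtree can be given a
changed edge, only finite subtrees can move.

Thus there is a set `P` of fixed vertices such that the vertices outside `P` have finite degree and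
span finite components. If an automorphism fixing `P` moved an edge meeting one of these components,
then its action on this component could be performed alone, by swapping the component with its
image, and only finitely many edges would move.
-/

open SimpleGraph

namespace DistinguishingColoring

variable {V : Type*}

section Components

variable {K : SimpleGraph V}

/-- The vertex set of the connected component of `v` in `K`. -/
def component (K : SimpleGraph V) (v : V) : Set V := {u | K.Reachable v u}

/-- The graph induced by `K` on `S`, kept on the full vertex type: the vertices outside `S` are
isolated. -/
def restrict (K : SimpleGraph V) (S : Set V) : SimpleGraph V := (K.induce S).spanningCoe

@[simp]
theorem restrict_adj {S : Set V} {a b : V} :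
    (restrict K S).Adj a b ↔ K.Adj a b ∧ a ∈ S ∧ b ∈ S := by
  simp [restrict]

theorem restrict_le (K : SimpleGraph V) (S : Set V) : restrict K S ≤ K :=
  K.spanningCoe_induce_le S

theorem finite_neighborSet_restrict (hK : ∀ v, (K.neighborSet v).Finite) (S : Set V) (v : V) :
    ((restrict K S).neighborSet v).Finite :=
  (hK v).subset fun _ h => (restrict_adj.1 h).1

theorem component_subset_of_adj {v : V} {T : Set V} (hv : v ∈ T)
    (hT : ∀ a ∈ component K v, a ∈ T → ∀ b, K.Adj a b → b ∈ T) : component K v ⊆ T := by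
  intro u hu
  have hu' := (reachable_iff_reflTransGen v u).1 hu
  clear hu
  induction hu' with
  | refl => exact hv
  | tail hva hab ih => exact hT _ ((reachable_iff_reflTransGen _ _).2 hva) ih _ hab

theorem component_restrict_subset {S : Set V} {v : V} (hv : v ∈ S) :
    component (restrict K S) v ⊆ S :=
  component_subset_of_adj hv fun _ _ _ _ hab => (restrict_adj.1 hab).2.2

theorem component_eq_of_mem {u v : V} (h : u ∈ component K v) : component K u = component K v :=
  Set.ext fun _ => ⟨h.trans, h.symm.trans⟩

theorem component_eq_singleton {v : V} (h : ∀ u, ¬K.Adj v u) : component K v = {v} :=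
  (component_subset_of_adj (Set.mem_singleton v)
    (by rintro a - rfl b hab; exact (h b hab).elim)).antisymm
    (Set.singleton_subset_iff.2 Reachable.rfl)

/-- The isomorphism between restrictions induced by an automorphism preserving the vertex set. -/
def restrictIso {S : Set V} (φ : K ≃g K) (hS : ∀ v, φ v ∈ S ↔ v ∈ S) :
    restrict K S ≃g restrict K S where
  toEquiv := φ.toEquiv
  map_rel_iff' {a b} := by
    simp only [RelIso.coe_fn_toEquiv, restrict_adj, φ.map_adj_iff, hS]

@[simp]
theorem restrictIso_apply {S : Set V} (φ : K ≃g K) (hS : ∀ v, φ v ∈ S ↔ v ∈ S) (v : V) :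
    restrictIso φ hS v = φ v := rfl

theorem map_mem_component_iff (φ : K ≃g K) {v u : V} :
    φ u ∈ component K (φ v) ↔ u ∈ component K v :=
  φ.reachable_iff

theorem component_map_infinite_iff (φ : K ≃g K) {v : V} :
    (component K (φ v)).Infinite ↔ (component K v).Infinite := by
  have : component K (φ v) = φ '' component K v := by
    ext u
    obtain ⟨w, rfl⟩ := φ.surjective u
    rw [map_mem_component_iff, φ.injective.mem_set_image]
  rw [this, Set.infinite_image_iff φ.injective.injOn]

/-- The vertices of `S` together with their neighbours. -/
def closedNbhd (K : SimpleGraph V) (S : Set V) : Set V := {v | ∃ s ∈ S, v = s ∨ K.Adj s v}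

theorem subset_closedNbhd (K : SimpleGraph V) (S : Set V) : S ⊆ closedNbhd K S :=
  fun v hv => ⟨v, hv, .inl rfl⟩

theorem closedNbhd_mono {S T : Set V} (h : S ⊆ T) : closedNbhd K S ⊆ closedNbhd K T :=
  fun _ ⟨s, hs, hv⟩ => ⟨s, h hs, hv⟩

theorem finite_closedNbhd (hK : ∀ v, (K.neighborSet v).Finite) {S : Set V} (hS : S.Finite) :
    (closedNbhd K S).Finite := by
  refine (hS.biUnion fun s _ => (hK s).insert s).subset ?_
  rintro v ⟨s, hs, hv⟩
  exact Set.mem_biUnion hs hv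

theorem finite_component_of_restrict_compl (hK : ∀ v, (K.neighborSet v).Finite) {B : Set V} {v : V}
    (hB : (B ∩ component K v).Finite) (hfin : ∀ u, (component (restrict K Bᶜ) u).Finite) :
    (component K v).Finite := by
  have hfinite : (B ∩ component K v ∪
      ⋃ u ∈ insert v (closedNbhd K (B ∩ component K v)), component (restrict K Bᶜ) u).Finite :=
    hB.union (((finite_closedNbhd hK hB).insert v).biUnion fun u _ => hfin u)
  refine hfinite.subset (component_subset_of_adj
    (.inr (Set.mem_biUnion (Set.mem_insert ..) Reachable.rfl)) ?_)
  intro a hva ha b hab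
  have hvb : b ∈ component K v := hva.trans hab.reachable
  by_cases hbB : b ∈ B
  · exact .inl ⟨hbB, hvb⟩
  refine .inr ?_
  by_cases haB : a ∈ B
  · exact Set.mem_biUnion (.inr ⟨a, ⟨haB, hva⟩, .inr hab⟩) Reachable.rfl
  · obtain ⟨u, hu, hua⟩ := Set.mem_iUnion₂.1 (ha.resolve_left fun h => haB h.1)
    exact Set.mem_biUnion hu
      (hua.trans (Adj.reachable (restrict_adj.2 ⟨hab, haB, hbB⟩)))

theorem component_mono {K K' : SimpleGraph V} (h : K ≤ K') (v : V) :
    component K v ⊆ component K' v := fun _ hu => hu.mono h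

end Components

section Swap

variable {K : SimpleGraph V} {φ : K ≃g K} {X : Set V}

/-- A set of vertices on which an automorphism `φ` can be performed locally: `φ` fixes the outer
boundary of `X`, and the image of `X` is either `X` or disjoint from it. -/
structure Swappable (φ : K ≃g K) (X : Set V) : Prop where
  fixes_boundary : ∀ v ∈ X, ∀ u, u ∉ X → K.Adj v u → φ u = u
  stable_of_mem : ∀ v ∈ X, φ v ∈ X → ∀ u, φ u ∈ X ↔ u ∈ X

theorem Swappable.symm (h : Swappable φ X) : Swappable φ.symm (φ.symm ⁻¹' X) where
  fixes_boundary v hv u hu hvu := by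
    have := h.fixes_boundary _ hv _ hu (φ.symm.map_adj_iff.2 hvu)
    exact this.symm.trans (φ.apply_symm_apply u)
  stable_of_mem v hv hv' u := by
    have := h.stable_of_mem _ hv' (by simpa using hv)
    simpa using (this (φ.symm (φ.symm u))).symm

theorem swappable_component_compl {P : Set V} (hφ : ∀ v ∈ P, φ v = v) {a : V} (ha : a ∉ P) :
    Swappable φ (component (restrict K Pᶜ) a) where
  fixes_boundary v hv u hu hvu := by
    by_contra hne
    refine hu (hv.trans (Adj.reachable (restrict_adj.2 ⟨hvu, ?_, fun hP => hne (hφ u hP)⟩)))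
    exact component_restrict_subset ha hv
  stable_of_mem v hv hv' u := by
    have hP : ∀ v, φ v ∈ Pᶜ ↔ v ∈ Pᶜ := fun v => not_congr
      ⟨fun h => by rwa [← φ.injective (hφ _ h)], fun h => by rwa [hφ v h]⟩
    have := map_mem_component_iff (restrictIso φ hP) (v := v) (u := u)
    rwa [restrictIso_apply, restrictIso_apply, component_eq_of_mem hv,
      component_eq_of_mem hv'] at this

open Classical in
/-- The map performing `φ` on `X`, its inverse on the rest of `φ '' X`, and fixing every other
vertex. -/
noncomputable def swapFun (φ : K ≃g K) (X : Set V) (v : V) : V :=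
  if v ∈ X then φ v else if φ.symm v ∈ X then φ.symm v else v

theorem Swappable.swapFun_symm_swapFun (h : Swappable φ X) (v : V) :
    swapFun φ.symm (φ.symm ⁻¹' X) (swapFun φ X v) = v := by
  by_cases hv : v ∈ X
  · simp [swapFun, hv]
  by_cases hv' : φ.symm v ∈ X
  · have hv'' : φ.symm (φ.symm v) ∉ X := fun h' => by
      have := (h.stable_of_mem _ h' (by simpa) (φ.symm v)).2 hv'
      exact hv (by simpa using this)
    simp [swapFun, hv, hv', hv'']
  · simp [swapFun, hv, hv']

theorem Swappable.swapFun_adj (h : Swappable φ X) {u v : V} (huv : K.Adj u v) :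
    K.Adj (swapFun φ X u) (swapFun φ X v) := by
  have leaves : ∀ {a b}, K.Adj a b → a ∈ X → b ∉ X → φ b = b ∧ φ.symm b = b := fun hab ha hb =>
    have hfix := h.fixes_boundary _ ha _ hb hab
    ⟨hfix, φ.symm_apply_eq.2 hfix.symm⟩
  have leaves' : ∀ {a b}, K.Adj a b → φ.symm a ∈ X → φ.symm b ∉ X → φ.symm b = b :=
    fun hab ha hb => h.symm.fixes_boundary _ ha _ hb hab
  have hφ : K.Adj (φ u) (φ v) := φ.map_adj_iff.2 huv
  have hφ' : K.Adj (φ.symm u) (φ.symm v) := φ.symm.map_adj_iff.2 huv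
  by_cases hu : u ∈ X <;> by_cases hv : v ∈ X
  · simpa [swapFun, hu, hv]
  · obtain ⟨hfix, hfix'⟩ := leaves huv hu hv
    simpa [swapFun, hu, hv, hfix, hfix'] using hφ
  · obtain ⟨hfix, hfix'⟩ := leaves huv.symm hv hu
    simpa [swapFun, hu, hv, hfix, hfix'] using hφ
  · by_cases hu' : φ.symm u ∈ X <;> by_cases hv' : φ.symm v ∈ X
    · simpa [swapFun, hu, hv, hu', hv']
    · simpa [swapFun, hu, hv, hu', hv', leaves' huv hu' hv'] using hφ'
    · simpa [swapFun, hu, hv, hu', hv', leaves' huv.symm hv' hu'] using hφ'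
    · simpa [swapFun, hu, hv, hu', hv']

/-- The automorphism with underlying map `swapFun φ X`. -/
noncomputable def Swappable.swap (h : Swappable φ X) : K ≃g K where
  toFun := swapFun φ X
  invFun := swapFun φ.symm (φ.symm ⁻¹' X)
  left_inv := h.swapFun_symm_swapFun
  right_inv v := by simpa [Set.preimage_preimage] using h.symm.swapFun_symm_swapFun v
  map_rel_iff' {u v} := by
    refine ⟨fun huv => ?_, h.swapFun_adj⟩
    simpa [h.swapFun_symm_swapFun] using h.symm.swapFun_adj huv

theorem Swappable.swap_apply_of_mem (h : Swappable φ X) {v : V} (hv : v ∈ X) : h.swap v = φ v :=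
  if_pos hv

theorem Swappable.swap_apply_of_notMem (h : Swappable φ X) {v : V} (hv : v ∉ X)
    (hv' : φ.symm v ∉ X) : h.swap v = v :=
  (if_neg hv).trans (if_neg hv')

theorem Swappable.mem_of_swap_ne (h : Swappable φ X) {v : V} (hv : h.swap v ≠ v) :
    v ∈ X ∪ φ '' X := by
  by_contra hmem
  rw [Set.mem_union, not_or] at hmem
  exact hv (h.swap_apply_of_notMem hmem.1 fun hv' => hmem.2 ⟨_, hv', φ.apply_symm_apply v⟩)

end Swap

/-! ### Normal spanning forests -/

/-- A rooted spanning forest of `H` which is normal: adjacent vertices of `H` are comparable in the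
tree order. The ancestor of `v` at depth `n` is `anc n v`, which is junk for `n > depth v`; the root
of the tree of `v` is `anc 0 v`. -/
structure NormalForest (H : SimpleGraph V) where
  /-- The distance of a vertex from its root within the forest. -/
  depth : V → ℕ
  /-- The ancestor of a vertex at a given depth. -/
  anc : ℕ → V → V
  depth_anc : ∀ {n v}, n ≤ depth v → depth (anc n v) = n
  anc_depth : ∀ v, anc (depth v) v = v
  anc_anc : ∀ {m n v}, m ≤ n → n ≤ depth v → anc m (anc n v) = anc m v
  adj_anc : ∀ {n v}, n < depth v → H.Adj (anc n v) (anc (n + 1) v)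
  anc_of_adj : ∀ {u v}, H.Adj u v → depth u ≤ depth v → anc (depth u) v = u

section DepthFirstSearch

theorem exists_adj_dist_lt {K : SimpleGraph V} {x a : V} (h : K.Reachable x a) (hne : x ≠ a) :
    ∃ w, K.Adj x w ∧ (K.deleteIncidenceSet x).Reachable w a ∧
      (K.deleteIncidenceSet x).dist w a < K.dist x a := by
  obtain ⟨p, hp⟩ := h.exists_walk_length_eq_dist
  have hpath := p.isPath_of_length_eq_dist hp
  cases p with
  | nil => exact (hne rfl).elim
  | @cons _ w _ hxw q =>
    have hx : x ∉ q.support := ((Walk.cons_isPath_iff hxw q).1 hpath).2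
    have hq : ∀ e ∈ q.edges, e ∈ (K.deleteIncidenceSet x).edgeSet := by
      intro e he
      refine (K.edgeSet_deleteIncidenceSet x).symm ▸ ⟨q.edges_subset_edgeSet he, fun hinc => ?_⟩
      exact hx (q.mem_support_of_mem_edges he hinc.2)
    refine ⟨w, hxw, ⟨q.transfer _ hq⟩, ?_⟩
    calc (K.deleteIncidenceSet x).dist w a
        ≤ (q.transfer _ hq).length := dist_le _
      _ < (Walk.cons hxw q).length := by simp
      _ = K.dist x a := hp

variable (H : SimpleGraph V) (ι : V → ℕ) (ρ : V → V)

/-- The vertex with the smallest label in the component of `v`. -/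
noncomputable def target (ι : V → ℕ) (K : SimpleGraph V) (v : V) : V :=
  Function.argminOn ι (component K v) ⟨v, Reachable.rfl⟩

open Classical in
/-- The vertex visited after `x` by the branch of a depth-first search that heads for the component
of `v` in `K` minus `x`. Among the neighbours of `x` there, it is one nearest to the target of that
component; this choice makes a search on an infinite graph reach every vertex. -/
noncomputable def next (ι : V → ℕ) (K : SimpleGraph V) (x v : V) : V :=
  if h : {w ∈ component (K.deleteIncidenceSet x) v | K.Adj x w}.Nonempty then
    Function.argminOn
      (fun w => (K.deleteIncidenceSet x).dist w (target ι (K.deleteIncidenceSet x) v)) _ h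
  else x

/-- The state, after `n` steps, of the branch of the depth-first search of `H` that leads to `v`:
the graph not yet explored and the vertex being visited. -/
noncomputable def search (v : V) : ℕ → SimpleGraph V × V
  | 0 => (H, ρ v)
  | n + 1 =>
    ((search v n).1.deleteIncidenceSet (search v n).2, next ι (search v n).1 (search v n).2 v)

/-- The component of `v` among the vertices unexplored after `n` steps of the search for `v`. -/
def unexplored (n : ℕ) (v : V) : Set V := component (search H ι ρ v n).1 v

/-- The search for `v` has not visited `v` in its first `n` steps. -/
def Searching (n : ℕ) (v : V) : Prop := ∀ k < n, (search H ι ρ v k).2 ≠ v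

variable {H ι ρ}

theorem target_mem (K : SimpleGraph V) (v : V) : target ι K v ∈ component K v :=
  Function.argminOn_mem ..

theorem label_target_le {K : SimpleGraph V} {u v : V} (h : u ∈ component K v) :
    ι (target ι K v) ≤ ι u :=
  Function.argminOn_le ι _ h

theorem target_congr {K : SimpleGraph V} {u v : V} (h : u ∈ component K v) :
    target ι K u = target ι K v := by
  simp only [target, component_eq_of_mem h]

theorem next_congr {K : SimpleGraph V} {x u v : V}
    (h : u ∈ component (K.deleteIncidenceSet x) v) : next ι K x u = next ι K x v := by
  have hC := component_eq_of_mem h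
  simp only [next, target_congr h]
  generalize component (K.deleteIncidenceSet x) u = C at hC
  subst hC
  rfl

theorem next_spec {K : SimpleGraph V} {x v w : V}
    (hw : w ∈ component (K.deleteIncidenceSet x) v) (hxw : K.Adj x w) :
    next ι K x v ∈ component (K.deleteIncidenceSet x) v ∧ K.Adj x (next ι K x v) ∧
      (K.deleteIncidenceSet x).dist (next ι K x v) (target ι (K.deleteIncidenceSet x) v) ≤
        (K.deleteIncidenceSet x).dist w (target ι (K.deleteIncidenceSet x) v) := by
  have h : {w ∈ component (K.deleteIncidenceSet x) v | K.Adj x w}.Nonempty :=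
    ⟨w, hw, hxw⟩
  let distTarget := fun u => (K.deleteIncidenceSet x).dist u (target ι (K.deleteIncidenceSet x) v)
  rw [next, dif_pos h]
  have hmem := Function.argminOn_mem distTarget _ h
  exact ⟨hmem.1, hmem.2, Function.argminOn_le distTarget _ (And.intro hw hxw)⟩

theorem search_graph_antitone (v : V) : Antitone fun n => (search H ι ρ v n).1 :=
  antitone_nat_of_succ_le fun _ => deleteIncidenceSet_le _ _

theorem unexplored_antitone (v : V) : Antitone fun n => unexplored H ι ρ n v :=
  fun _ _ hmn _ hu => hu.mono (search_graph_antitone v hmn)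

theorem search_congr (hρ : ∀ u v, H.Adj u v → ρ u = ρ v) {n : ℕ} {u v : V}
    (h : u ∈ unexplored H ι ρ n v) : search H ι ρ u n = search H ι ρ v n := by
  induction n with
  | zero =>
    have hroot : component H v ⊆ {w | ρ w = ρ v} :=
      component_subset_of_adj rfl fun a _ ha b hab => (hρ a b hab).symm.trans ha
    have hroot' : ρ u = ρ v := hroot h
    simp only [search, hroot']
  | succ n ih =>
    have hn := ih (unexplored_antitone v n.le_succ h)
    simp only [search, hn, next_congr h]

theorem Searching.visited_notMem {m n : ℕ} {v : V} (h : Searching H ι ρ n v) (hmn : m < n) :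
    (search H ι ρ v m).2 ∉ unexplored H ι ρ n v := by
  intro hmem
  have hmem' : v ∈ component ((search H ι ρ v m).1.deleteIncidenceSet _) (search H ι ρ v m).2 :=
    (unexplored_antitone v (Nat.succ_le_of_lt hmn) hmem).symm
  rw [component_eq_singleton fun u hu => (deleteIncidenceSet_adj.1 hu).2.1 rfl] at hmem'
  exact h m hmn hmem'.symm

theorem Searching.visited_mem (hρ : ∀ v, H.Reachable v (ρ v)) {n : ℕ} {v : V}
    (h : Searching H ι ρ n v) : (search H ι ρ v n).2 ∈ unexplored H ι ρ n v := by
  induction n with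
  | zero => exact hρ v
  | succ n ih =>
    have hn := ih fun k hk => h k (Nat.lt_succ_of_lt hk)
    obtain ⟨w, hxw, hwv, -⟩ := exists_adj_dist_lt (Reachable.symm hn) (h n n.lt_succ_self)
    exact (next_spec hwv.symm hxw).1

theorem Searching.visited_adj (hρ : ∀ v, H.Reachable v (ρ v)) {n : ℕ} {v : V}
    (h : Searching H ι ρ (n + 1) v) :
    (search H ι ρ v n).1.Adj (search H ι ρ v n).2 (search H ι ρ v (n + 1)).2 := by
  have hn : Searching H ι ρ n v := fun k hk => h k (Nat.lt_succ_of_lt hk)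
  obtain ⟨w, hxw, hwv, -⟩ :=
    exists_adj_dist_lt (Reachable.symm (hn.visited_mem hρ)) (h n n.lt_succ_self)
  exact (next_spec hwv.symm hxw).2.1

theorem Searching.dist_target_lt (hρ : ∀ v, H.Reachable v (ρ v)) {n : ℕ} {v : V}
    (h : Searching H ι ρ (n + 1) v)
    (htarget : target ι (search H ι ρ v (n + 1)).1 v = target ι (search H ι ρ v n).1 v) :
    (search H ι ρ v (n + 1)).1.dist (search H ι ρ v (n + 1)).2
        (target ι (search H ι ρ v (n + 1)).1 v) <
      (search H ι ρ v n).1.dist (search H ι ρ v n).2 (target ι (search H ι ρ v n).1 v) := by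
  have hn : Searching H ι ρ n v := fun k hk => h k (Nat.lt_succ_of_lt hk)
  have hmem : target ι (search H ι ρ v (n + 1)).1 v ∈ unexplored H ι ρ (n + 1) v := target_mem _ v
  have hne : (search H ι ρ v n).2 ≠ target ι (search H ι ρ v n).1 v := fun heq =>
    h.visited_notMem n.lt_succ_self (heq ▸ htarget ▸ hmem)
  obtain ⟨w, hxw, hwt, hlt⟩ := exists_adj_dist_lt
    ((Reachable.symm (hn.visited_mem hρ)).trans (target_mem _ v)) hne
  rw [← htarget] at hwt hlt ⊢
  exact (next_spec (Reachable.trans hmem hwt.symm) hxw).2.2.trans_lt hlt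

theorem exists_visited_eq (hι : ∀ v, Set.InjOn ι (component H v))
    (hρ : ∀ v, H.Reachable v (ρ v)) (v : V) : ∃ n, (search H ι ρ v n).2 = v := by
  by_contra! hne
  have hsearching : ∀ n, Searching H ι ρ n v := fun n k _ => hne k
  have htarget : ∀ n, target ι (search H ι ρ v n).1 v ∈ unexplored H ι ρ n v :=
    fun n => target_mem _ v
  refine not_strictAnti_of_wellFoundedLT (fun n => toLex (ι v - ι (target ι (search H ι ρ v n).1 v),
    (search H ι ρ v n).1.dist (search H ι ρ v n).2 (target ι (search H ι ρ v n).1 v)))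
    (strictAnti_nat_of_succ_lt fun n => ?_)
  have hle : ι (target ι (search H ι ρ v n).1 v) ≤ ι (target ι (search H ι ρ v (n + 1)).1 v) :=
    label_target_le (unexplored_antitone v n.le_succ (htarget (n + 1)))
  have hle' : ι (target ι (search H ι ρ v (n + 1)).1 v) ≤ ι v := label_target_le Reachable.rfl
  rw [Prod.Lex.toLex_lt_toLex]
  rcases hle.lt_or_eq with hlt | heq
  · exact .inl (by dsimp only; omega)
  · refine .inr ⟨by dsimp only; omega, (hsearching (n + 1)).dist_target_lt hρ ?_⟩
    exact hι v (unexplored_antitone v (Nat.zero_le _) (htarget (n + 1)))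
      (unexplored_antitone v (Nat.zero_le _) (htarget n)) heq.symm

end DepthFirstSearch

namespace NormalForest

theorem exists_of_injOn {H : SimpleGraph V} {ι : V → ℕ} (hι : ∀ v, Set.InjOn ι (component H v))
    {ρ : V → V} (hρ : ∀ v, H.Reachable v (ρ v)) (hρ' : ∀ u v, H.Adj u v → ρ u = ρ v) :
    ∃ T : NormalForest H, ∀ v, T.anc 0 v = ρ v := by
  classical
  have hex := exists_visited_eq hι hρ
  set depth : V → ℕ := fun v => Nat.find (hex v)
  have hsearching : ∀ {n v}, n ≤ depth v → Searching H ι ρ n v :=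
    fun hn k hk => Nat.find_min (hex _) (hk.trans_le hn)
  have hcongr : ∀ {m n v}, m ≤ n → n ≤ depth v →
      search H ι ρ (search H ι ρ v n).2 m = search H ι ρ v m := fun hmn hn =>
    search_congr hρ' (unexplored_antitone _ hmn ((hsearching hn).visited_mem hρ))
  refine ⟨⟨depth, fun n v => (search H ι ρ v n).2, ?_, fun v => Nat.find_spec (hex v),
    fun hmn hn => congrArg Prod.snd (hcongr hmn hn), ?_, ?_⟩, fun v => rfl⟩
  · intro n v hn
    refine (Nat.find_eq_iff _).2 ⟨congrArg Prod.snd (hcongr le_rfl hn), fun m hm heq => ?_⟩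
    rw [hcongr hm.le hn] at heq
    exact (hsearching hn).visited_notMem hm (heq ▸ (hsearching hn).visited_mem hρ)
  · intro n v hn
    exact search_graph_antitone v n.zero_le ((hsearching (Nat.succ_le_of_lt hn)).visited_adj hρ)
  · intro u v huv hle
    have hadj : ∀ n ≤ depth u, (search H ι ρ u n).1.Adj u v := by
      intro n hn
      induction n with
      | zero => exact huv
      | succ n ih =>
        have hn' := ih (Nat.le_of_succ_le hn)
        have hv : (search H ι ρ v n).2 ≠ v := hsearching (hn.trans hle) n n.lt_succ_self
        rw [search_congr hρ' hn'.reachable] at hv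
        exact deleteIncidenceSet_adj.2 ⟨hn', (hsearching hn n n.lt_succ_self).symm, hv.symm⟩
    have := search_congr hρ' (hadj _ le_rfl).reachable
    exact (congrArg Prod.snd this).trans (Nat.find_spec (hex u))

theorem exists_of_countable_support {H : SimpleGraph V} (hH : H.support.Countable) {ρ : V → V}
    (hρ : ∀ v, H.Reachable v (ρ v)) (hρ' : ∀ u v, H.Adj u v → ρ u = ρ v) :
    ∃ T : NormalForest H, ∀ v, T.anc 0 v = ρ v := by
  obtain ⟨ι, hι⟩ := Set.countable_iff_exists_injOn.1 hH
  refine exists_of_injOn (ι := ι) (fun v a ha b hb hab => ?_) hρ hρ'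
  by_contra hne
  have hreach : H.Reachable a b := Reachable.trans (Reachable.symm ha) hb
  exact hne (hι (mem_support_of_reachable hne hreach)
    (mem_support_of_reachable (Ne.symm hne) hreach.symm) hab)

end NormalForest

/-! ### Rigidity of coloured forests -/

/-- The automorphism `φ` preserves the colouring of the edges of `K` by membership in `E`. -/
def Preserves {K : SimpleGraph V} (φ : K ≃g K) (E : Set (Sym2 V)) : Prop :=
  ∀ u v, K.Adj u v → (s(φ u, φ v) ∈ E ↔ s(u, v) ∈ E)

theorem Preserves.symm {K : SimpleGraph V} {φ : K ≃g K} {E : Set (Sym2 V)} (h : Preserves φ E) :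
    Preserves φ.symm E := fun u v huv => by
  simpa using (h _ _ (φ.symm.map_adj_iff.2 huv)).symm

namespace NormalForest

variable {H : SimpleGraph V} (T : NormalForest H)

/-- The descendants of `y`, including `y` itself. -/
def subtree (y : V) : Set V := {v | T.depth y ≤ T.depth v ∧ T.anc (T.depth y) v = y}

/-- The set of edges of the forest: by normality, these are the edges of `H` joining consecutive
levels. -/
def treeEdges : Set (Sym2 V) := {e | ∃ u v, H.Adj u v ∧ T.depth v = T.depth u + 1 ∧ e = s(u, v)}

/-- An edge of `H` from `lo` down to a descendant `hi` whose colour may be changed without creating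
new automorphisms: either a tree edge, when `lo` has no other neighbour below `hi`, or an edge to a
deeper descendant, when the parent of `hi` has a neighbour strictly below `hi`. The number `bound`
limits the levels involved. -/
structure Flip where
  /-- The upper end of the edge. -/
  lo : V
  /-- The lower end of the edge. -/
  hi : V
  /-- A bound for the levels involved. -/
  bound : ℕ
  adj : H.Adj lo hi
  depth_lt : T.depth lo < T.depth hi
  depth_le_bound : T.depth lo ≤ bound
  unique_or_exists :
    (T.depth hi = T.depth lo + 1 ∧ ∀ t ∈ T.subtree hi, H.Adj lo t → t = hi) ∨
    (T.depth lo + 1 < T.depth hi ∧ ∃ b ∈ T.subtree hi, T.depth hi < T.depth b ∧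
      H.Adj (T.anc (T.depth hi - 1) hi) b ∧ T.depth b ≤ bound)

/-- The levels involved in distinct flips of `S` are separated by a gap. -/
def Separated (S : Set T.Flip) : Prop :=
  S.Pairwise fun f g => f.bound + 2 ≤ T.depth g.lo ∨ g.bound + 2 ≤ T.depth f.lo

/-- The colour class consisting of the forest, modified at the flips of `S`. -/
def colour (S : Set T.Flip) : Set (Sym2 V) := symmDiff T.treeEdges ((fun f => s(f.lo, f.hi)) '' S)

/-- The map `φ` commutes with taking the ancestor at depth `n`. -/
def CommutesAt (n : ℕ) (φ : V → V) : Prop :=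
  ∀ v, n ≤ T.depth v → n ≤ T.depth (φ v) ∧ φ (T.anc n v) = T.anc n (φ v)

variable {T}

section Basic

variable {u v y : V}

theorem self_mem_subtree : v ∈ T.subtree v := ⟨le_rfl, T.anc_depth v⟩

theorem anc_mem_subtree {n : ℕ} (hn : n ≤ T.depth v) : v ∈ T.subtree (T.anc n v) := by
  simp only [subtree, Set.mem_ofPred_eq, T.depth_anc hn, hn, and_self]

theorem subtree_subset (h : u ∈ T.subtree y) : T.subtree u ⊆ T.subtree y := fun v hv =>
  ⟨h.1.trans hv.1, by rw [← T.anc_anc h.1 hv.1, hv.2, h.2]⟩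

theorem eq_of_mem_subtree (h : v ∈ T.subtree y) (hd : T.depth v = T.depth y) : v = y := by
  rw [← T.anc_depth v, hd, h.2]

theorem mem_subtree_of_adj (huv : H.Adj u v) (h : T.depth u ≤ T.depth v) : v ∈ T.subtree u :=
  ⟨h, T.anc_of_adj huv h⟩

theorem depth_ne_of_adj (huv : H.Adj u v) : T.depth u ≠ T.depth v := fun h =>
  huv.ne (eq_of_mem_subtree (mem_subtree_of_adj huv h.le) h.symm).symm

theorem anc_eq_of_adj (huv : H.Adj u v) {n : ℕ} (hu : n ≤ T.depth u) (hv : n ≤ T.depth v) :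
    T.anc n u = T.anc n v := by
  rcases le_total (T.depth u) (T.depth v) with h | h
  · rw [← T.anc_anc hu h, T.anc_of_adj huv h]
  · rw [← T.anc_anc hv h, T.anc_of_adj huv.symm h]

theorem adj_anc_of_depth_eq {n : ℕ} (hv : T.depth v = n + 1) : H.Adj (T.anc n v) v := by
  simpa only [← hv, T.anc_depth] using T.adj_anc (n := n) (v := v) (by omega)

theorem mem_treeEdges_iff (huv : H.Adj u v) (h : T.depth u < T.depth v) :
    s(u, v) ∈ T.treeEdges ↔ T.depth v = T.depth u + 1 := by
  refine ⟨?_, fun hd => ⟨u, v, huv, hd, rfl⟩⟩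
  rintro ⟨a, b, -, hd, he⟩
  rcases Sym2.eq_iff.1 he with ⟨rfl, rfl⟩ | ⟨rfl, rfl⟩
  · exact hd
  · omega

end Basic

section Colour

variable {S : Set T.Flip} {f g : T.Flip} {u v : V}

theorem Flip.lo_eq_and_hi_eq (h : s(f.lo, f.hi) = s(u, v)) (huv : T.depth u < T.depth v) :
    f.lo = u ∧ f.hi = v := by
  have := f.depth_lt
  rcases Sym2.eq_iff.1 h with h | ⟨h, h'⟩
  · exact h
  · rw [h, h'] at this
    omega

theorem mem_colour_iff (huv : H.Adj u v) (h : T.depth u < T.depth v) :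
    s(u, v) ∈ T.colour S ↔ (T.depth v = T.depth u + 1 ↔ ¬∃ f ∈ S, f.lo = u ∧ f.hi = v) := by
  have hflip : s(u, v) ∈ (fun f => s(f.lo, f.hi)) '' S ↔ ∃ f ∈ S, f.lo = u ∧ f.hi = v :=
    exists_congr fun f => and_congr_right fun _ =>
      ⟨fun he => f.lo_eq_and_hi_eq he h, by rintro ⟨rfl, rfl⟩; rfl⟩
  rw [colour, Set.mem_symmDiff, mem_treeEdges_iff huv h, hflip]
  exact xor_iff_iff_not

theorem colour_subset_edgeSet : T.colour S ⊆ H.edgeSet := by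
  rintro e (⟨⟨u, v, huv, -, rfl⟩, -⟩ | ⟨⟨f, -, rfl⟩, -⟩)
  exacts [huv, f.adj]

theorem Separated.eq_of_depth_eq (hS : T.Separated S) (hf : f ∈ S) (hg : g ∈ S)
    (h : T.depth f.lo = T.depth g.lo) : f = g := by
  by_contra hne
  have := f.depth_le_bound
  have := g.depth_le_bound
  have := hS hf hg hne
  omega

theorem Separated.mem_colour_iff_of_gap (hS : T.Separated S) (hf : f ∈ S) (huv : H.Adj u v)
    (h : T.depth u < T.depth v) (hlo : T.depth f.lo < T.depth u) (hhi : T.depth u ≤ f.bound + 1) :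
    s(u, v) ∈ T.colour S ↔ T.depth v = T.depth u + 1 := by
  have hnone : ¬∃ g ∈ S, g.lo = u ∧ g.hi = v := by
    rintro ⟨g, hg, rfl, -⟩
    have := g.depth_le_bound
    have := hS hf hg (by rintro rfl; omega)
    omega
  rw [mem_colour_iff huv h, iff_true_right hnone]

end Colour

section Rigidity

variable {S : Set T.Flip} {f : T.Flip} {φ : H ≃g H} {n : ℕ}

theorem CommutesAt.succ_le_depth (hn : T.CommutesAt n φ) {v : V} (hv : n + 1 ≤ T.depth v) :
    n + 1 ≤ T.depth (φ v) := by
  obtain ⟨hle, hanc⟩ := hn v (by omega)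
  by_contra hlt
  have hself : T.anc n (φ v) = φ v := by
    rw [show n = T.depth (φ v) by omega, T.anc_depth]
  have := T.depth_anc (n := n) (v := v) (by omega)
  rw [φ.injective (hanc.trans hself)] at this
  omega

theorem CommutesAt.map_anc_mem_subtree (hn : T.CommutesAt n φ) {v : V} (hv : n + 1 ≤ T.depth v) :
    φ (T.anc (n + 1) v) ∈ T.subtree (T.anc (n + 1) (φ v)) := by
  have hconst : ∀ m, n + 1 ≤ m → m ≤ T.depth v →
      T.anc (n + 1) (φ (T.anc m v)) = T.anc (n + 1) (φ (T.anc (n + 1) v)) := by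
    intro m hm
    induction m, hm using Nat.le_induction with
    | base => exact fun _ => rfl
    | succ m hm ih =>
      intro hmv
      rw [← ih (by omega)]
      refine (anc_eq_of_adj (φ.map_adj_iff.2 (T.adj_anc hmv)) ?_ ?_).symm <;>
        exact hn.succ_le_depth (by rw [T.depth_anc] <;> omega)
  have := hconst _ hv le_rfl
  rw [T.anc_depth] at this
  rw [this]
  exact anc_mem_subtree (hn.succ_le_depth (by rw [T.depth_anc hv]))

theorem depth_eq_add_of_steps {p : ℕ → V} {k N : ℕ} (hp : Set.InjOn p (Set.Iic N))
    (hk : T.depth (p 0) = k) (hle : ∀ i ≤ N, k ≤ T.depth (p i))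
    (hadj : ∀ i < N, H.Adj (p i) (p (i + 1)))
    (hstep : ∀ i < N, T.depth (p i) = k + i → T.depth (p i) < T.depth (p (i + 1)) →
      T.depth (p (i + 1)) = k + i + 1) :
    ∀ i ≤ N, T.depth (p i) = k + i ∧ ∀ j ≤ i, T.anc (k + j) (p i) = p j := by
  intro i
  induction i with
  | zero =>
    refine fun _ => ⟨hk, fun j hj => ?_⟩
    obtain rfl : j = 0 := by omega
    rw [add_zero, ← hk, T.anc_depth]
  | succ i ih =>
    intro hi
    obtain ⟨hd, hanc⟩ := ih (by omega)
    rcases lt_or_ge (T.depth (p i)) (T.depth (p (i + 1))) with hlt | hge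
    · have hd' := hstep i hi hd hlt
      refine ⟨hd', fun j hj => ?_⟩
      rcases hj.lt_or_eq with hj | rfl
      · rw [← hanc j (by omega)]
        exact (anc_eq_of_adj (hadj i hi) (by omega) (by omega)).symm
      · rw [show k + (i + 1) = T.depth (p (i + 1)) by omega, T.anc_depth]
    · obtain ⟨j, hj⟩ := Nat.exists_eq_add_of_le (hle (i + 1) hi)
      have := T.depth_ne_of_adj (hadj i hi)
      have heq := T.anc_of_adj (hadj i hi).symm hge
      rw [hj, hanc j (by omega)] at heq
      have := hp (show j ≤ N by omega) (show i + 1 ≤ N from hi) heq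
      omega

theorem Separated.depth_map_eq_succ (hS : T.Separated S) (hφ : Preserves φ (T.colour S))
    (hf : f ∈ S) {u v : V} (huv : H.Adj u v) (hd : T.depth v = T.depth u + 1)
    (hlo : T.depth f.lo < T.depth u) (hhi : T.depth u ≤ f.bound + 1)
    (hlt : T.depth (φ u) < T.depth (φ v)) (hlo' : T.depth f.lo < T.depth (φ u))
    (hhi' : T.depth (φ u) ≤ f.bound + 1) : T.depth (φ v) = T.depth (φ u) + 1 :=
  (hS.mem_colour_iff_of_gap hf (φ.map_adj_iff.2 huv) hlt hlo' hhi').1 <|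
    (hφ u v huv).2 ((hS.mem_colour_iff_of_gap hf huv (by omega) hlo hhi).2 hd)

theorem Separated.map_anc_of_depth_map_hi (hS : T.Separated S) (hφ : Preserves φ (T.colour S))
    (hf : f ∈ S) (hdepth : ∀ v, T.depth f.lo < T.depth v → T.depth f.lo < T.depth (φ v))
    (hhi : T.depth (φ f.hi) = T.depth f.lo + 1) {b : V} (hb : b ∈ T.subtree f.hi)
    (hbound : T.depth b ≤ f.bound) :
    ∀ i ≤ T.depth b - T.depth f.hi,
      T.depth (φ (T.anc (T.depth f.hi + i) b)) = T.depth f.lo + 1 + i ∧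
      ∀ j ≤ i, T.anc (T.depth f.lo + 1 + j) (φ (T.anc (T.depth f.hi + i) b)) =
        φ (T.anc (T.depth f.hi + j) b) := by
  have hlt := f.depth_lt
  have hle := hb.1
  have hd : ∀ i ≤ T.depth b - T.depth f.hi,
      T.depth (T.anc (T.depth f.hi + i) b) = T.depth f.hi + i := fun i hi => T.depth_anc (by omega)
  refine depth_eq_add_of_steps (p := fun i => φ (T.anc (T.depth f.hi + i) b)) ?_ ?_ ?_ ?_ ?_
  · intro i hi j hj hij
    have := congrArg T.depth (φ.injective hij)
    rw [hd i hi, hd j hj] at this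
    omega
  · simpa only [add_zero, hb.2]
  · exact fun i hi => hdepth _ (by rw [hd i hi]; omega)
  · exact fun i hi => φ.map_adj_iff.2 (T.adj_anc (by omega))
  · intro i hi hdi hlt'
    rw [← hdi]
    refine hS.depth_map_eq_succ hφ hf (T.adj_anc (by omega)) ?_ ?_ ?_ hlt' ?_ ?_
    · rw [hd (i + 1) hi, hd i hi.le, add_assoc]
    all_goals first | rw [hd i hi.le]; omega | omega

theorem Separated.depth_map_hi_ne (hS : T.Separated S) (hφ : Preserves φ (T.colour S)) (hf : f ∈ S)
    (hlt : T.depth f.lo + 1 < T.depth f.hi)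
    (hdepth : ∀ v, T.depth f.lo < T.depth v → T.depth f.lo < T.depth (φ v)) :
    T.depth (φ f.hi) ≠ T.depth f.lo + 1 := by
  intro hhi
  obtain ⟨b, hb, hhib, htb, hbound⟩ := (f.unique_or_exists.resolve_left fun h => hlt.ne' h.1).2
  obtain ⟨n, hn⟩ : ∃ n, T.depth f.hi = n + 1 := ⟨T.depth f.hi - 1, by omega⟩
  rw [hn, Nat.add_sub_cancel] at htb
  set t := T.anc n f.hi
  have ht : T.depth t = n := T.depth_anc (by omega)
  have hthi : H.Adj t f.hi := adj_anc_of_depth_eq hn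
  have hlo := hdepth t (by omega)
  have hφt : T.depth (φ t) = T.depth f.lo + 2 := by
    have hne := T.depth_ne_of_adj (φ.map_adj_iff.2 hthi)
    have hmem := (hφ _ _ hthi).2
      ((hS.mem_colour_iff_of_gap hf hthi (by omega) (by omega) (by omega)).2 (by omega))
    rw [Sym2.eq_swap, hS.mem_colour_iff_of_gap hf (φ.map_adj_iff.2 hthi.symm) (by omega)
      (by omega) (by omega)] at hmem
    omega
  obtain ⟨hdb, hanc⟩ := hS.map_anc_of_depth_map_hi hφ hf hdepth hhi hb hbound _ le_rfl
  rw [Nat.add_sub_of_le hb.1, T.anc_depth] at hdb hanc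
  have hφt' := T.anc_of_adj (φ.map_adj_iff.2 htb) (by omega)
  rw [hφt, hanc 1 (by omega)] at hφt'
  have := T.depth_anc (n := T.depth f.hi + 1) (v := b) hhib
  rw [φ.injective hφt'] at this
  omega

theorem exists_flip_of_map_ne (hφ : Preserves φ (T.colour S)) {u w w' : V} (huw : H.Adj u w)
    (hw : T.depth w = T.depth u + 1) (huw' : H.Adj (φ u) w')
    (hw' : T.depth w' = T.depth (φ u) + 1) (hmem : φ w ∈ T.subtree w')
    (hmem' : φ.symm w' ∈ T.subtree w) (hne : φ w ≠ w') : ∃ f ∈ S, f.lo = φ u ∧ f.hi = φ w := by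
  have hlt : T.depth w' < T.depth (φ w) :=
    hmem.1.lt_of_ne fun h => hne (eq_of_mem_subtree hmem h.symm)
  have hnone : ¬∃ f ∈ S, f.lo = u ∧ f.hi = w := by
    rintro ⟨f, -, rfl, rfl⟩
    rcases f.unique_or_exists with ⟨-, hunique⟩ | ⟨hlt, -⟩
    · have hadj : H.Adj f.lo (φ.symm w') := by
        simpa using φ.symm.map_adj_iff.2 huw'
      exact hne (by rw [← hunique _ hmem' hadj, RelIso.apply_symm_apply])
    · omega
  have hcolour := (hφ u w huw).2 ((mem_colour_iff huw (by omega)).2 (iff_of_true hw hnone))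
  rw [mem_colour_iff (φ.map_adj_iff.2 huw) (by omega)] at hcolour
  by_contra hflip
  have := hcolour.2 hflip
  omega

theorem CommutesAt.succ (hS : T.Separated S) (hφ : Preserves φ (T.colour S))
    (hn : T.CommutesAt n φ) (hn' : T.CommutesAt n φ.symm) : T.CommutesAt (n + 1) φ := by
  intro v hv
  have hv' := hn.succ_le_depth hv
  refine ⟨hv', ?_⟩
  by_contra hne
  set u := T.anc n v
  set w := T.anc (n + 1) v
  set w' := T.anc (n + 1) (φ v)
  have hφu : φ u = T.anc n (φ v) := (hn v (by omega)).2
  have hu : T.depth u = n := T.depth_anc (by omega)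
  have hu' : T.depth (φ u) = n := hφu ▸ T.depth_anc (by omega)
  have hw : T.depth w = n + 1 := T.depth_anc hv
  have hw' : T.depth w' = n + 1 := T.depth_anc hv'
  have huw : H.Adj u w := T.adj_anc hv
  have huw' : H.Adj (φ u) w' := hφu ▸ T.adj_anc hv'
  have hmem : φ w ∈ T.subtree w' := hn.map_anc_mem_subtree hv
  have hmem' : φ.symm w' ∈ T.subtree w := by
    simpa [w, w'] using hn'.map_anc_mem_subtree hv'
  obtain ⟨f, hf, hlo, hhi⟩ :=
    exists_flip_of_map_ne hφ huw (by omega) huw' (by omega) hmem hmem' hne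
  obtain ⟨g, hg, hglo, hghi⟩ : ∃ g ∈ S, g.lo = φ.symm (φ u) ∧ g.hi = φ.symm w' := by
    refine exists_flip_of_map_ne hφ.symm huw' (by omega) ?_ ?_ hmem' ?_ ?_ (w' := w)
    · simpa using huw
    · simp [hw, hu]
    · simpa using hmem
    · exact fun h => hne (by rw [← h]; simp)
  obtain rfl := hS.eq_of_depth_eq hf hg (by rw [hlo, hglo, hu']; simp [hu])
  have hlt : T.depth w' < T.depth (φ w) :=
    hmem.1.lt_of_ne fun h => hne (eq_of_mem_subtree hmem h.symm)
  have hlo' : T.depth f.lo = n := by rw [hlo, hu']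
  refine hS.depth_map_hi_ne hφ hf (by rw [hhi]; omega) (fun v hv => ?_) ?_
  · exact hlo' ▸ hn.succ_le_depth (by omega)
  · rw [hghi, hlo']
    simp [hw']

variable (hS : T.Separated S) (hφ : Preserves φ (T.colour S))
  (hroot : ∀ v, φ (T.anc 0 v) = T.anc 0 (φ v))
include hS hφ hroot

theorem commutesAt_of_preserves (n : ℕ) : T.CommutesAt n φ ∧ T.CommutesAt n φ.symm := by
  induction n with
  | zero =>
    refine ⟨fun v _ => ⟨Nat.zero_le _, hroot v⟩, fun v _ => ⟨Nat.zero_le _, ?_⟩⟩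
    exact φ.injective (by rw [hroot]; simp)
  | succ n ih => exact ⟨ih.1.succ hS hφ ih.2, ih.2.succ hS hφ.symm (by simpa using ih.1)⟩

theorem depth_map_of_preserves (v : V) : T.depth (φ v) = T.depth v := by
  have hle := ((commutesAt_of_preserves hS hφ hroot _).1 v le_rfl).1
  have hge := ((commutesAt_of_preserves hS hφ hroot _).2 (φ v) le_rfl).1
  rw [RelIso.symm_apply_apply] at hge
  exact hge.antisymm hle

theorem map_lo_of_preserves (hf : f ∈ S) : φ f.lo = f.lo := by
  have hdepth := depth_map_of_preserves hS hφ hroot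
  have h := hφ _ _ f.adj
  rw [mem_colour_iff (φ.map_adj_iff.2 f.adj) (by simpa only [hdepth] using f.depth_lt),
    mem_colour_iff f.adj f.depth_lt, hdepth, hdepth] at h
  have hself : ∃ g ∈ S, g.lo = f.lo ∧ g.hi = f.hi := ⟨f, hf, rfl, rfl⟩
  obtain ⟨g, hg, hlo, -⟩ : ∃ g ∈ S, g.lo = φ f.lo ∧ g.hi = φ f.hi := by
    by_contra hnone
    simp only [hself, hnone, not_true, not_false_iff, iff_true, iff_false] at h
    exact iff_not_self h
  rw [← hlo, hS.eq_of_depth_eq hg hf (by rw [hlo, hdepth])]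

theorem map_eq_of_lo_mem_subtree (hf : f ∈ S) {y : V} (hy : f.lo ∈ T.subtree y) : φ y = y := by
  have h := ((commutesAt_of_preserves hS hφ hroot (T.depth y)).1 f.lo hy.1).2
  rwa [map_lo_of_preserves hS hφ hroot hf, hy.2] at h

end Rigidity
end NormalForest

namespace NormalForest

variable {H : SimpleGraph V} {T : NormalForest H}

section InfiniteSubtrees

variable {y : V}

theorem Flip.exists_of_adj {u z : V} (hz : z ∈ T.subtree u) (huz : H.Adj u z)
    (hd : T.depth u + 1 < T.depth z) : ∃ f : T.Flip, f.lo ∈ T.subtree u := by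
  obtain ⟨n, hn⟩ : ∃ n, T.depth z = n + 1 := ⟨T.depth z - 1, by omega⟩
  have ht : T.depth (T.anc n z) = n := T.depth_anc (by omega)
  by_cases hunique : ∀ b ∈ T.subtree z, H.Adj (T.anc n z) b → b = z
  · refine ⟨⟨T.anc n z, z, n, adj_anc_of_depth_eq hn, by omega, ht.le, .inl ⟨by omega, hunique⟩⟩,
      show T.depth u ≤ T.depth (T.anc n z) by omega, ?_⟩
    rw [T.anc_anc (by omega) (by omega), hz.2]
  · push Not at hunique
    obtain ⟨b, hb, htb, hbz⟩ := hunique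
    have hzb : T.depth z < T.depth b := hb.1.lt_of_ne fun h => hbz (eq_of_mem_subtree hb h.symm)
    exact ⟨⟨u, z, T.depth b, huz, by omega, by omega,
      .inr ⟨hd, b, hb, hzb, by rwa [hn, Nat.add_sub_cancel], le_rfl⟩⟩, self_mem_subtree⟩

theorem Flip.exists_of_child {u w : V} (huw : H.Adj u w) (hd : T.depth w = T.depth u + 1) :
    ∃ f : T.Flip, f.lo ∈ T.subtree u := by
  by_cases hunique : ∀ t ∈ T.subtree w, H.Adj u t → t = w
  · exact ⟨⟨u, w, T.depth u, huw, by omega, le_rfl, .inl ⟨hd, hunique⟩⟩, self_mem_subtree⟩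
  · push Not at hunique
    obtain ⟨z, hz, huz, hzw⟩ := hunique
    have hwz : T.depth w < T.depth z := hz.1.lt_of_ne fun h => hzw (eq_of_mem_subtree hz h.symm)
    exact Flip.exists_of_adj (subtree_subset (mem_subtree_of_adj huw (by omega)) hz) huz (by omega)

variable (hH : ∀ v, (H.neighborSet v).Finite) (hy : (T.subtree y).Infinite)
include hH hy

theorem exists_infinite_child :
    ∃ w, H.Adj y w ∧ T.depth w = T.depth y + 1 ∧ (T.subtree w).Infinite := by
  by_contra! hfin
  have hchildren : ({y} ∪ ⋃ w ∈ {w | H.Adj y w ∧ T.depth w = T.depth y + 1}, T.subtree w).Finite :=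
    (Set.finite_singleton y).union <| ((hH y).subset fun _ hw => hw.1).biUnion fun w hw =>
      hfin w hw.1 hw.2
  refine hy (hchildren.subset fun v hv => ?_)
  rcases hv.1.eq_or_lt with h | h
  · exact .inl (eq_of_mem_subtree hv h.symm)
  · refine .inr (Set.mem_biUnion ⟨?_, T.depth_anc h⟩ (anc_mem_subtree h))
    simpa only [hv.2] using T.adj_anc h

theorem exists_infinite_subtree_of_le_depth (n : ℕ) :
    ∃ u ∈ T.subtree y, n ≤ T.depth u ∧ (T.subtree u).Infinite := by
  induction n with
  | zero => exact ⟨y, self_mem_subtree, Nat.zero_le _, hy⟩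
  | succ n ih =>
    obtain ⟨u, hu, hn, hinf⟩ := ih
    obtain ⟨w, huw, hd, hinf'⟩ := exists_infinite_child hH hinf
    exact ⟨w, subtree_subset hu (mem_subtree_of_adj huw (by omega)), by omega, hinf'⟩

theorem Flip.exists_le_depth (n : ℕ) : ∃ f : T.Flip, f.lo ∈ T.subtree y ∧ n ≤ T.depth f.lo := by
  obtain ⟨u, hu, hn, hinf⟩ := exists_infinite_subtree_of_le_depth hH hy n
  obtain ⟨w, huw, hd, -⟩ := exists_infinite_child hH hinf
  obtain ⟨f, hf⟩ := Flip.exists_of_child huw hd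
  exact ⟨f, subtree_subset hu hf, hn.trans hf.1⟩

end InfiniteSubtrees

theorem exists_separated (hH : ∀ v, (H.neighborSet v).Finite) (hsupp : H.support.Countable) :
    ∃ S : Set T.Flip, T.Separated S ∧
      ∀ y, (T.subtree y).Infinite → ∃ f ∈ S, f.lo ∈ T.subtree y := by
  rcases {y | (T.subtree y).Infinite}.eq_empty_or_nonempty with hempty | hne
  · exact ⟨∅, Set.pairwise_empty _, fun y hy => (hempty.le hy).elim⟩
  have hcount : {y | (T.subtree y).Infinite}.Countable := hsupp.mono fun y hy =>
    (exists_infinite_child hH hy).imp fun _ h => h.1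
  obtain ⟨y, hy⟩ := hcount.exists_eq_range hne
  have hyinf (k : ℕ) : (T.subtree (y k)).Infinite := hy.ge ⟨k, rfl⟩
  choose flip hmem hdepth using fun k => Flip.exists_le_depth hH (hyinf k)
  let level : ℕ → ℕ := fun k => Nat.rec 0 (fun k n => (flip k n).bound + 2) k
  let f (k : ℕ) : T.Flip := flip k (level k)
  have hlevel (k : ℕ) : level k ≤ T.depth (f k).lo := hdepth k _
  have hmono : Monotone level := monotone_nat_of_le_succ fun k =>
    ((hlevel k).trans (f k).depth_le_bound).trans (Nat.le_add_right _ 2)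
  have hgap {k l : ℕ} (hkl : k < l) : (f k).bound + 2 ≤ T.depth (f l).lo :=
    (hmono (Nat.succ_le_of_lt hkl)).trans (hlevel l)
  refine ⟨Set.range f, ?_, fun z hz => ?_⟩
  · rintro _ ⟨k, rfl⟩ _ ⟨l, rfl⟩ hkl
    rcases lt_trichotomy k l with h | rfl | h
    exacts [.inl (hgap h), (hkl rfl).elim, .inr (hgap h)]
  · obtain ⟨k, rfl⟩ := hy.le hz
    exact ⟨f k, ⟨k, rfl⟩, hmem k _⟩

theorem finite_component_restrict_finite_subtree (v : V) :
    (component (restrict H {y | (T.subtree y).Infinite}ᶜ) v).Finite := by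
  set P := {y | (T.subtree y).Infinite}
  by_cases hv : v ∈ P
  · rw [component_eq_singleton fun u huv => absurd hv (restrict_adj.1 huv).2.1]
    exact Set.finite_singleton v
  obtain ⟨m, hm, hmin⟩ := exists_minimalFor_of_wellFoundedLT (· ∈ component (restrict H Pᶜ) v)
    T.depth ⟨v, Reachable.rfl⟩
  have hmP : m ∉ P := component_restrict_subset hv hm
  rw [← component_eq_of_mem hm]
  refine (Set.not_infinite.1 hmP).subset (component_subset_of_adj self_mem_subtree ?_)
  intro a hma ha b hab
  have hle {c : V} (hc : c ∈ component (restrict H Pᶜ) m) : T.depth m ≤ T.depth c :=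
    (le_total _ _).elim id (hmin (hm.trans hc))
  have hb := hle (hma.trans hab.reachable)
  exact ⟨hb, by rw [← anc_eq_of_adj (restrict_adj.1 hab).1 ha.1 hb, ha.2]⟩

theorem Separated.exists_mem_colour {S : Set T.Flip} (hS : T.Separated S) (v : V) :
    ∃ u, (u = v ∨ H.Adj v u) ∧ (T.depth u = 0 ∨ ∃ w, s(u, w) ∈ T.colour S) := by
  have parent_mem {v : V} {n : ℕ} (hv : T.depth v = n + 1)
      (hnone : ¬∃ f ∈ S, f.lo = T.anc n v ∧ f.hi = v) : s(v, T.anc n v) ∈ T.colour S := by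
    have ht : T.depth (T.anc n v) = n := T.depth_anc (by omega)
    rw [Sym2.eq_swap, mem_colour_iff (adj_anc_of_depth_eq hv) (by omega)]
    exact iff_of_true (by omega) hnone
  obtain hv | ⟨n, hv⟩ : T.depth v = 0 ∨ ∃ n, T.depth v = n + 1 := by
    cases T.depth v <;> simp
  · exact ⟨v, .inl rfl, .inl hv⟩
  by_cases hflip : ∃ f ∈ S, f.lo = T.anc n v ∧ f.hi = v
  · obtain ⟨f, hf, hlo, -⟩ := hflip
    have ht : T.depth (T.anc n v) = n := T.depth_anc (by omega)
    refine ⟨T.anc n v, .inr (adj_anc_of_depth_eq hv).symm, ?_⟩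
    cases n with
    | zero => exact .inl ht
    | succ n =>
      refine .inr ⟨_, parent_mem ht ?_⟩
      rintro ⟨g, hg, hlo', -⟩
      have hg' : T.depth g.lo = n := by rw [hlo', T.depth_anc (by omega)]
      rw [← hlo] at ht
      have := f.depth_le_bound
      have := g.depth_le_bound
      have := hS hf hg (by rintro rfl; omega)
      omega
  · exact ⟨v, .inl rfl, .inr ⟨_, parent_mem hv hflip⟩⟩

end NormalForest

theorem exists_coloring_of_roots {H : SimpleGraph V} (hH : ∀ v, (H.neighborSet v).Finite)
    (hsupp : H.support.Countable) {ρ : V → V} (hρ : ∀ v, H.Reachable v (ρ v))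
    (hρ' : ∀ u v, H.Adj u v → ρ u = ρ v) :
    ∃ E ⊆ H.edgeSet, ∃ P : Set V, (∀ v, (component (restrict H Pᶜ) v).Finite) ∧
      (∀ φ : H ≃g H, (∀ v, φ (ρ v) = ρ (φ v)) → Preserves φ E → ∀ v ∈ P, φ v = v) ∧
      ∀ v, ∃ u, (u = v ∨ H.Adj v u) ∧ (ρ u = u ∨ ∃ w, s(u, w) ∈ E) := by
  obtain ⟨T, hT⟩ := NormalForest.exists_of_countable_support hsupp hρ hρ'
  obtain ⟨S, hS, hflip⟩ := NormalForest.exists_separated (T := T) hH hsupp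
  refine ⟨T.colour S, NormalForest.colour_subset_edgeSet, {y | (T.subtree y).Infinite},
    NormalForest.finite_component_restrict_finite_subtree, fun φ hφ hE y hy => ?_, fun v => ?_⟩
  · obtain ⟨f, hf, hfy⟩ := hflip y hy
    exact NormalForest.map_eq_of_lo_mem_subtree hS hE (by simpa only [hT] using hφ) hf hfy
  · obtain ⟨u, hu, h⟩ := hS.exists_mem_colour v
    exact ⟨u, hu, h.imp_left fun h0 => by rw [← hT, ← h0, T.anc_depth]⟩

/-! ### Locally finite graphs -/

section Outer

variable {K : SimpleGraph V} {C : Set V} {u v : V}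

/-- The vertices lying in an infinite component once the closed neighbourhood of `C` has been
deleted. -/
def outer (K : SimpleGraph V) (C : Set V) : Set V :=
  {v | (component (restrict K (closedNbhd K C)ᶜ) v).Infinite}

theorem notMem_closedNbhd_of_mem_outer (hv : v ∈ outer K C) : v ∉ closedNbhd K C := fun hmem => by
  refine hv ?_
  rw [component_eq_singleton fun u huv => absurd hmem (restrict_adj.1 huv).2.1]
  exact Set.finite_singleton v

theorem notMem_outer_of_mem (hv : v ∈ C) : v ∉ outer K C := fun h =>
  notMem_closedNbhd_of_mem_outer h (subset_closedNbhd K C hv)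

theorem mem_outer_of_adj (hv : v ∈ outer K C) (hvu : K.Adj v u) (hu : u ∉ closedNbhd K C) :
    u ∈ outer K C := by
  have hadj : (restrict K (closedNbhd K C)ᶜ).Adj v u :=
    restrict_adj.2 ⟨hvu, notMem_closedNbhd_of_mem_outer hv, hu⟩
  rwa [outer, Set.mem_ofPred_eq, component_eq_of_mem hadj.reachable]

theorem component_infinite_of_mem_outer (hv : v ∈ outer K C) : (component K v).Infinite :=
  hv.mono (component_mono (restrict_le _ _) v)

theorem map_mem_iff_of_forall {φ : K ≃g K} {S : Set V} (h : ∀ v ∈ S, φ v ∈ S)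
    (h' : ∀ v ∈ S, φ.symm v ∈ S) (v : V) : φ v ∈ S ↔ v ∈ S :=
  ⟨fun hv => by simpa using h' _ hv, h v⟩

theorem map_mem_closedNbhd_iff {φ : K ≃g K} (hC : ∀ v, φ v ∈ C ↔ v ∈ C) :
    φ v ∈ closedNbhd K C ↔ v ∈ closedNbhd K C := by
  refine ⟨fun ⟨s, hs, h⟩ => ?_, fun ⟨s, hs, h⟩ => ⟨φ s, (hC s).2 hs, ?_⟩⟩
  · obtain ⟨s, rfl⟩ := φ.surjective s
    exact ⟨s, (hC s).1 hs, h.imp (fun h => φ.injective h) φ.map_adj_iff.1⟩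
  · exact h.imp (congrArg φ) φ.map_adj_iff.2

theorem map_mem_outer_iff {φ : K ≃g K} (hC : ∀ v, φ v ∈ C ↔ v ∈ C) :
    φ v ∈ outer K C ↔ v ∈ outer K C :=
  component_map_infinite_iff
    (restrictIso φ fun _ => not_congr (map_mem_closedNbhd_iff hC)) (v := v)

theorem closedNbhd_inter_component_subset (S : Set V) (v : V) :
    closedNbhd K S ∩ component K v ⊆ closedNbhd K (S ∩ component K v) := by
  rintro u ⟨⟨s, hs, hsu⟩, hvu⟩
  refine ⟨s, ⟨hs, Reachable.trans hvu ?_⟩, hsu⟩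
  rcases hsu with rfl | hsu
  exacts [Reachable.rfl, hsu.symm.reachable]

theorem finite_component_of_outer (hK : ∀ v, (K.neighborSet v).Finite)
    (hC : ∀ v, (C ∩ component K v).Finite) {P : Set V}
    (hP : ∀ v, (component (restrict (restrict K (outer K C)) Pᶜ) v).Finite) (v : V) :
    (component (restrict K Pᶜ) v).Finite := by
  have hle := restrict_le K Pᶜ
  refine finite_component_of_restrict_compl (B := closedNbhd K C)
    (finite_neighborSet_restrict hK _) ?_ fun u => ?_
  · exact (finite_closedNbhd hK (hC v)).subset
      ((Set.inter_subset_inter_right _ (component_mono hle v)).trans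
        (closedNbhd_inter_component_subset C v))
  · by_contra hinf
    have houter {a : V} (ha : a ∈ component (restrict (restrict K Pᶜ) (closedNbhd K C)ᶜ) u) :
        a ∈ outer K C := by
      rw [← component_eq_of_mem ha] at hinf
      refine Set.Infinite.mono (component_mono (fun x y hxy => ?_) a) hinf
      rw [restrict_adj] at hxy
      exact restrict_adj.2 ⟨hle hxy.1, hxy.2⟩
    refine hinf ((hP u).subset (component_subset_of_adj Reachable.rfl ?_))
    intro a ha ha' b hab
    have hb := houter (ha.trans hab.reachable)
    have hab' := restrict_adj.1 (restrict_adj.1 hab).1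
    exact ha'.trans
      (Adj.reachable (restrict_adj.2 ⟨restrict_adj.2 ⟨hab'.1, houter ha, hb⟩, hab'.2⟩))

end Outer

/-- A choice of a root in each component of the graph on `outer K C`, together with a neighbour
`exit r` of each root `r` outside `outer K C`. -/
structure Rooting (K : SimpleGraph V) (C : Set V) where
  /-- The root of the component of a vertex. -/
  root : V → V
  /-- A neighbour of a given root; junk for other vertices. -/
  exit : V → V
  reachable_root : ∀ v, (restrict K (outer K C)).Reachable v (root v)
  root_eq_of_reachable : ∀ u v, (restrict K (outer K C)).Reachable u v → root u = root v
  adj_exit : ∀ v ∈ outer K C, K.Adj (root v) (exit (root v))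
  exit_notMem : ∀ v ∈ outer K C, exit (root v) ∉ outer K C

theorem exists_adj_notMem_outer {K : SimpleGraph V} {C : Set V} {v c : V} (hv : v ∈ outer K C)
    (hc : c ∈ C) (hvc : K.Reachable v c) :
    ∃ u ∈ component (restrict K (outer K C)) v, ∃ x, K.Adj u x ∧ x ∉ outer K C := by
  by_contra! h
  have hsubset : component K v ⊆ component (restrict K (outer K C)) v :=
    component_subset_of_adj Reachable.rfl fun a _ ha b hab => ha.trans
      (Adj.reachable (restrict_adj.2 ⟨hab, component_restrict_subset hv ha, h a ha b hab⟩))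
  exact notMem_outer_of_mem hc (component_restrict_subset hv (hsubset hvc))

theorem Rooting.nonempty {K : SimpleGraph V} {C : Set V}
    (hC : ∀ v ∈ outer K C, ∃ c ∈ C, K.Reachable v c) : Nonempty (Rooting K C) := by
  set H := restrict K (outer K C)
  have hroot : ∀ c : H.ConnectedComponent, ∃ r, H.connectedComponentMk r = c ∧
      ∀ v ∈ outer K C, H.connectedComponentMk v = c → ∃ x, K.Adj r x ∧ x ∉ outer K C := by
    intro c
    by_cases hc : ∃ v ∈ outer K C, H.connectedComponentMk v = c
    · obtain ⟨v, hv, rfl⟩ := hc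
      obtain ⟨a, ha, hva⟩ := hC v hv
      obtain ⟨r, hvr, hr⟩ := exists_adj_notMem_outer hv ha hva
      exact ⟨r, (ConnectedComponent.sound hvr).symm, fun _ _ _ => hr⟩
    · exact ⟨c.out, c.out_eq, fun v hv hvc => (hc ⟨v, hv, hvc⟩).elim⟩
  have hexit : ∀ r, ∃ y, (∃ x, K.Adj r x ∧ x ∉ outer K C) → K.Adj r y ∧ y ∉ outer K C := by
    intro r
    by_cases h : ∃ x, K.Adj r x ∧ x ∉ outer K C
    · exact h.imp fun _ hx _ => hx
    · exact ⟨r, fun h' => (h h').elim⟩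
  choose root hmk hroot using hroot
  choose exit hexit using hexit
  refine ⟨⟨fun v => root (H.connectedComponentMk v), exit,
    fun v => ConnectedComponent.exact (hmk _).symm,
    fun u v huv => congrArg root (ConnectedComponent.sound huv),
    fun v hv => (hexit _ (hroot _ v hv rfl)).1, fun v hv => (hexit _ (hroot _ v hv rfl)).2⟩⟩

namespace Rooting

variable {K : SimpleGraph V} {C : Set V} (R : Rooting K C) (E : Set (Sym2 V))

/-- The colour class extending a colour class `E` on `outer K C`: edges from a root to its exit are
added, and so are all edges avoiding `outer K C` except those within `C`. -/
def colour : Set (Sym2 V) :=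
  E ∪ (fun v => s(R.root v, R.exit (R.root v))) '' outer K C ∪
    {e | ∃ u v, K.Adj u v ∧ u ∉ outer K C ∧ v ∉ outer K C ∧ ¬(u ∈ C ∧ v ∈ C) ∧ e = s(u, v)}

variable {R E} {u v : V}

theorem root_mem_outer (hv : v ∈ outer K C) : R.root v ∈ outer K C :=
  component_restrict_subset hv (R.reachable_root v)

theorem root_root : R.root (R.root v) = R.root v :=
  (R.root_eq_of_reachable _ _ (R.reachable_root v)).symm

theorem root_of_notMem_outer (hv : v ∉ outer K C) : R.root v = v := by
  have hmem : R.root v ∈ component (restrict K (outer K C)) v := R.reachable_root v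
  rwa [component_eq_singleton fun u huv => hv (restrict_adj.1 huv).2.1] at hmem

theorem mem_colour_iff_of_mem (hu : u ∈ outer K C) (hv : v ∈ outer K C) :
    s(u, v) ∈ R.colour E ↔ s(u, v) ∈ E := by
  refine ⟨?_, fun h => .inl (.inl h)⟩
  rintro ((h | ⟨w, hw, h⟩) | ⟨a, b, -, ha, hb, -, h⟩)
  · exact h
  · have := R.exit_notMem w hw
    rcases Sym2.eq_iff.1 h with ⟨-, rfl⟩ | ⟨-, rfl⟩
    exacts [(this hv).elim, (this hu).elim]
  · rcases Sym2.eq_iff.1 h with ⟨rfl, -⟩ | ⟨rfl, -⟩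
    exacts [(ha hu).elim, (hb hu).elim]

variable (hE : E ⊆ (restrict K (outer K C)).edgeSet)
include hE

theorem colour_subset_edgeSet : R.colour E ⊆ K.edgeSet := by
  rintro _ ((he | ⟨v, hv, rfl⟩) | ⟨u, v, huv, -, -, -, rfl⟩)
  · exact edgeSet_mono (restrict_le _ _) (hE he)
  · exact R.adj_exit v hv
  · exact huv

theorem mem_colour_iff_of_mem_of_notMem (hu : u ∈ outer K C) (hv : v ∉ outer K C) :
    s(u, v) ∈ R.colour E ↔ R.root u = u ∧ R.exit u = v := by
  refine ⟨?_, fun ⟨hr, he⟩ => .inl (.inr ⟨u, hu, by simp only [hr, he]⟩)⟩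
  rintro ((h | ⟨w, hw, h⟩) | ⟨a, b, -, ha, hb, -, h⟩)
  · exact (hv (restrict_adj.1 (hE h)).2.2).elim
  · rcases Sym2.eq_iff.1 h with ⟨rfl, rfl⟩ | ⟨rfl, rfl⟩
    · exact ⟨R.root_root, rfl⟩
    · exact (hv (root_mem_outer hw)).elim
  · rcases Sym2.eq_iff.1 h with ⟨rfl, -⟩ | ⟨rfl, -⟩
    exacts [(ha hu).elim, (hb hu).elim]

theorem mem_colour_iff_of_notMem (huv : K.Adj u v) (hu : u ∉ outer K C) (hv : v ∉ outer K C) :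
    s(u, v) ∈ R.colour E ↔ ¬(u ∈ C ∧ v ∈ C) := by
  refine ⟨?_, fun h => .inr ⟨u, v, huv, hu, hv, h, rfl⟩⟩
  rintro ((h | ⟨w, hw, h⟩) | ⟨a, b, -, -, -, hab, h⟩)
  · exact (hu (restrict_adj.1 (hE h)).2.1).elim
  · have := R.root_mem_outer hw
    rcases Sym2.eq_iff.1 h with ⟨rfl, -⟩ | ⟨rfl, -⟩
    exacts [(hu this).elim, (hv this).elim]
  · rcases Sym2.eq_iff.1 h with ⟨rfl, rfl⟩ | ⟨rfl, rfl⟩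
    exacts [hab, fun h => hab h.symm]

end Rooting

section Quiet

variable {K : SimpleGraph V} {C : Set V} {R : Rooting K C} {E : Set (Sym2 V)} {φ : K ≃g K} {v : V}

/-- The vertex `v` lies in an infinite component, and no edge at `v` or at a neighbour of `v` is
coloured. -/
def Quiet (K : SimpleGraph V) (E : Set (Sym2 V)) (v : V) : Prop :=
  (component K v).Infinite ∧ ∀ u ∈ closedNbhd K {v}, ∀ t, K.Adj u t → s(u, t) ∉ E

theorem Quiet.map (hφ : Preserves φ E) (hv : Quiet K E v) : Quiet K E (φ v) := by
  refine ⟨(component_map_infinite_iff φ).2 hv.1, ?_⟩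
  rintro u ⟨_, rfl, hu⟩ t hut
  obtain ⟨u, rfl⟩ := φ.surjective u
  obtain ⟨t, rfl⟩ := φ.surjective t
  rw [φ.map_adj_iff] at hut
  rw [hφ u t hut]
  exact hv.2 u ⟨v, rfl, hu.imp (fun h => φ.injective h) φ.map_adj_iff.1⟩ t hut

variable (hE : E ⊆ (restrict K (outer K C)).edgeSet)
include hE

theorem quiet_colour_of_closedNbhd_subset (hv : (component K v).Infinite)
    (hC : closedNbhd K (closedNbhd K {v}) ⊆ C) : Quiet K (R.colour E) v := by
  refine ⟨hv, fun u hu t hut => ?_⟩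
  have huC := hC (subset_closedNbhd _ _ hu)
  have htC := hC ⟨u, hu, .inr hut⟩
  rw [R.mem_colour_iff_of_notMem hE hut (notMem_outer_of_mem huC) (notMem_outer_of_mem htC)]
  exact not_not.2 ⟨huC, htC⟩

theorem mem_of_quiet_colour (hQ : Quiet K (R.colour E) v)
    (hnear : ∀ v, ∃ u, (u = v ∨ (restrict K (outer K C)).Adj v u) ∧
      (R.root u = u ∨ ∃ w, s(u, w) ∈ E)) : v ∈ C := by
  by_contra hvC
  by_cases hv : v ∈ outer K C
  · obtain ⟨u, huv, hu⟩ := hnear v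
    have hu' : u ∈ closedNbhd K {v} := ⟨v, rfl, huv.imp_right fun h => (restrict_adj.1 h).1⟩
    have huo : u ∈ outer K C := huv.elim (· ▸ hv) fun h => (restrict_adj.1 h).2.2
    rcases hu with hroot | ⟨w, hw⟩
    · refine hQ.2 u hu' (R.exit u) ?_ ?_
      · simpa only [hroot] using R.adj_exit u huo
      · have := R.exit_notMem u huo
        rw [hroot] at this
        exact (R.mem_colour_iff_of_mem_of_notMem hE huo this).2 ⟨hroot, rfl⟩
    · exact hQ.2 u hu' w (restrict_adj.1 (hE hw)).1 (.inl (.inl hw))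
  · obtain ⟨t, hvt, ht⟩ : ∃ t, K.Adj v t ∧ t ∉ outer K C := by
      by_cases hmem : v ∈ closedNbhd K C
      · obtain ⟨s, hs, rfl | hsv⟩ := hmem
        exacts [(hvC hs).elim, ⟨s, hsv.symm, notMem_outer_of_mem hs⟩]
      · obtain ⟨t, hvt⟩ : ∃ t, K.Adj v t := by
          by_contra! hisol
          exact hQ.1 (component_eq_singleton hisol ▸ Set.finite_singleton v)
        exact ⟨t, hvt, fun ht => hv (mem_outer_of_adj ht hvt.symm hmem)⟩
    exact hQ.2 v ⟨v, rfl, .inl rfl⟩ t hvt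
      ((R.mem_colour_iff_of_notMem hE hvt hv ht).2 fun h => hvC h.1)

theorem map_mem_of_adj (hφ : Preserves φ (R.colour E)) {a b : V} (hab : K.Adj a b) (ha : a ∈ C)
    (hb : b ∈ C) (ha' : φ a ∈ C) : φ b ∈ C := by
  have hab' : K.Adj (φ a) (φ b) := φ.map_adj_iff.2 hab
  have hnot : s(φ a, φ b) ∉ R.colour E := by
    rw [hφ a b hab,
      R.mem_colour_iff_of_notMem hE hab (notMem_outer_of_mem ha) (notMem_outer_of_mem hb)]
    exact not_not.2 ⟨ha, hb⟩
  rw [R.mem_colour_iff_of_notMem hE hab' (notMem_outer_of_mem ha')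
    fun h => notMem_closedNbhd_of_mem_outer h ⟨_, ha', .inr hab'⟩, not_not] at hnot
  exact hnot.2

theorem map_mem_of_mem_closedNbhd (hφ : Preserves φ (R.colour E)) {S : Set V}
    (hSC : closedNbhd K S ⊆ C) (hS : ∀ v ∈ S, φ v ∈ C) (hv : v ∈ closedNbhd K S) : φ v ∈ C := by
  obtain ⟨s, hs, rfl | hsv⟩ := id hv
  · exact hS _ hs
  · exact map_mem_of_adj hE hφ hsv (hSC (subset_closedNbhd K S hs)) (hSC hv) (hS s hs)

theorem map_root (hφ : Preserves φ (R.colour E)) (hC : ∀ v, φ v ∈ C ↔ v ∈ C) (v : V) :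
    φ (R.root v) = R.root (φ v) := by
  have houter : ∀ v, φ v ∈ outer K C ↔ v ∈ outer K C := fun v => map_mem_outer_iff hC
  by_cases hv : v ∈ outer K C
  · have hroot := R.root_mem_outer hv
    have hexit := R.exit_notMem v hv
    have hcolour := (hφ _ _ (R.adj_exit v hv)).2
      ((R.mem_colour_iff_of_mem_of_notMem hE hroot hexit).2 ⟨R.root_root, rfl⟩)
    rw [R.mem_colour_iff_of_mem_of_notMem hE ((houter _).2 hroot) (by rwa [houter])] at hcolour
    rw [← hcolour.1]
    exact (R.root_eq_of_reachable _ _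
      ((restrictIso φ houter).reachable_iff.2 (R.reachable_root v))).symm
  · rw [R.root_of_notMem_outer hv, R.root_of_notMem_outer (by rwa [houter])]

end Quiet

theorem exists_representatives (K : SimpleGraph V) : ∃ R : Set V,
    (∀ v, ∃ r ∈ R, K.Reachable v r) ∧ ∀ v, (R ∩ component K v).Finite := by
  refine ⟨Set.range fun c : K.ConnectedComponent => c.out,
    fun v => ⟨_, ⟨K.connectedComponentMk v, rfl⟩, ConnectedComponent.exact (Quot.out_eq _).symm⟩,
    fun v => (Set.finite_singleton (K.connectedComponentMk v).out).subset ?_⟩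
  rintro _ ⟨⟨c, rfl⟩, hc⟩
  rw [Set.mem_singleton_iff, ConnectedComponent.sound hc]
  exact congrArg Quot.out (Quot.out_eq c).symm

theorem exists_coloring_of_locallyFinite {K : SimpleGraph V} (hK : ∀ v, (K.neighborSet v).Finite)
    (hsupp : K.support.Countable) :
    ∃ E ⊆ K.edgeSet, ∃ P : Set V, (∀ v, (component (restrict K Pᶜ) v).Finite) ∧
      ∀ φ : K ≃g K, Preserves φ E → ∀ v ∈ P, φ v = v := by
  obtain ⟨reps, hreps, hfin⟩ := exists_representatives K
  set S := {r ∈ reps | (component K r).Infinite}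
  set C := closedNbhd K (closedNbhd K S)
  have hSC : S ⊆ C := (subset_closedNbhd K S).trans (subset_closedNbhd K _)
  obtain ⟨R⟩ : Nonempty (Rooting K C) := Rooting.nonempty fun v hv => by
    obtain ⟨r, hr, hvr⟩ := hreps v
    refine ⟨r, hSC ⟨hr, ?_⟩, hvr⟩
    rw [component_eq_of_mem hvr]
    exact component_infinite_of_mem_outer hv
  have hle := restrict_le K (outer K C)
  obtain ⟨E, hE, P, hP, hfix, hnear⟩ := exists_coloring_of_roots
    (finite_neighborSet_restrict hK _) (hsupp.mono (support_mono hle))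
    R.reachable_root fun u v huv => R.root_eq_of_reachable u v huv.reachable
  have hCfin (v : V) : (C ∩ component K v).Finite := by
    refine (finite_closedNbhd hK (finite_closedNbhd hK (hfin v))).subset ?_
    refine (closedNbhd_inter_component_subset _ v).trans (closedNbhd_mono ?_)
    refine (closedNbhd_inter_component_subset _ v).trans (closedNbhd_mono ?_)
    exact Set.inter_subset_inter_left _ (Set.sep_subset _ _)
  have hmap {φ : K ≃g K} (hφ : Preserves φ (R.colour E)) (v : V) (hv : v ∈ C) : φ v ∈ C := by
    refine map_mem_of_mem_closedNbhd hE hφ subset_rfl (fun u hu => ?_) hv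
    refine map_mem_of_mem_closedNbhd hE hφ (subset_closedNbhd K _) (fun r hr => ?_) hu
    refine mem_of_quiet_colour hE (Quiet.map hφ ?_) hnear
    exact quiet_colour_of_closedNbhd_subset hE hr.2
      (closedNbhd_mono (closedNbhd_mono (Set.singleton_subset_iff.2 hr)))
  refine ⟨R.colour E, R.colour_subset_edgeSet hE, P,
    finite_component_of_outer hK hCfin hP, fun φ hφ => ?_⟩
  have hC := map_mem_iff_of_forall (hmap hφ) (hmap hφ.symm)
  have houter : ∀ v, φ v ∈ outer K C ↔ v ∈ outer K C := fun v => map_mem_outer_iff hC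
  refine hfix (restrictIso φ houter) (map_root hE hφ hC) fun u v huv => ?_
  obtain ⟨huv, hu, hv⟩ := restrict_adj.1 huv
  have := hφ u v huv
  rwa [R.mem_colour_iff_of_mem hu hv,
    R.mem_colour_iff_of_mem ((houter u).2 hu) ((houter v).2 hv)] at this

/-! ### Countable graphs -/

section InfiniteDegree

variable {G : SimpleGraph V} {I : Set V} {ι : V → ℕ} {A : Set (Sym2 V)} {φ : G ≃g G}

theorem finite_setOf_lt_of_injOn (hι : Set.InjOn ι I) (n : ℕ) : {u ∈ I | ι u < n}.Finite := by
  refine Set.Finite.of_finite_image ((Set.finite_lt_nat n).subset ?_)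
    (hι.mono (Set.sep_subset _ _))
  exact Set.image_subset_iff.2 fun u hu => hu.2

theorem ncard_setOf_lt_le_of_injOn (hι : Set.InjOn ι I) (n : ℕ) :
    {u ∈ I | ι u < n}.ncard ≤ n := by
  simpa using Set.ncard_le_ncard_of_injOn (t := Set.Iio n) ι (fun u hu => hu.2)
    (hι.mono (Set.sep_subset _ _)) (Set.finite_Iio n)

theorem exists_finsets_avoiding_lower (hι : Set.InjOn ι I)
    (hI : ∀ v ∈ I, (G.neighborSet v).Infinite) (f : V → ℕ) :
    ∃ N : V → Finset V, ∀ v ∈ I,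
      ↑(N v) ⊆ G.neighborSet v \ {u ∈ I | ι u < ι v} ∧ (N v).card = f v := by
  have hN (v : V) : ∃ N : Finset V, v ∈ I →
      ↑N ⊆ G.neighborSet v \ {u ∈ I | ι u < ι v} ∧ N.card = f v := by
    by_cases hv : v ∈ I
    · obtain ⟨N, hN⟩ := ((hI v hv).sdiff
        (finite_setOf_lt_of_injOn hι (ι v))).exists_subset_card_eq (f v)
      exact ⟨N, fun _ => hN⟩
    · exact ⟨∅, fun h => (hv h).elim⟩
  choose N hN using hN
  exact ⟨N, hN⟩

theorem sqrt_ncard_union {s t : Set V} {n : ℕ} (hs : s.ncard = (n + 1) ^ 2) (ht : t.Finite)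
    (htn : t.ncard ≤ n) : Nat.sqrt (s ∪ t).ncard = n + 1 := by
  have hsfin : s.Finite := Set.finite_of_ncard_ne_zero (by rw [hs]; positivity)
  have hge := Set.ncard_le_ncard (Set.subset_union_left (s := s)) (hsfin.union ht)
  have hle := Set.ncard_union_le s t
  rw [hs] at hge hle
  exact (Nat.eq_sqrt'.2 ⟨hge, by nlinarith⟩).symm

-- Each `v ∈ I` selects `(ι v + 1) ^ 2` edges, none of them to a vertex of smaller label; conversely
-- only the at most `ι v` vertices of smaller label can select an edge to `v`.
theorem exists_edges_sqrt_ncard_eq (hι : Set.InjOn ι I)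
    (hI : ∀ v ∈ I, (G.neighborSet v).Infinite) :
    ∃ A ⊆ G.edgeSet, (∀ u v, s(u, v) ∈ A → u ∈ I ∨ v ∈ I) ∧
      ∀ v ∈ I, Nat.sqrt {u | s(v, u) ∈ A}.ncard = ι v + 1 := by
  obtain ⟨N, hN⟩ := exists_finsets_avoiding_lower hι hI fun v => (ι v + 1) ^ 2
  refine ⟨{e | ∃ v ∈ I, ∃ u ∈ N v, e = s(v, u)}, ?_, ?_, fun v hv => ?_⟩
  · rintro _ ⟨v, hv, u, hu, rfl⟩
    exact ((hN v hv).1 hu).1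
  · rintro a b ⟨v, hv, u, -, h⟩
    rcases Sym2.eq_iff.1 h with ⟨rfl, -⟩ | ⟨-, rfl⟩
    exacts [.inl hv, .inr hv]
  · have hunion : {u | s(v, u) ∈ {e | ∃ v ∈ I, ∃ u ∈ N v, e = s(v, u)}} =
        ↑(N v) ∪ {u ∈ I | v ∈ N u} := by
      ext u
      refine ⟨?_, ?_⟩
      · rintro ⟨a, ha, b, hb, h⟩
        rcases Sym2.eq_iff.1 h with ⟨rfl, rfl⟩ | ⟨rfl, rfl⟩
        exacts [.inl hb, .inr ⟨ha, hb⟩]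
      · rintro (hu | ⟨hu, hvu⟩)
        exacts [⟨v, hv, u, hu, rfl⟩, ⟨u, hu, v, hvu, Sym2.eq_swap⟩]
    have hsub : {u ∈ I | v ∈ N u} ⊆ {u ∈ I | ι u < ι v} := by
      rintro u ⟨hu, hvu⟩
      obtain ⟨hadj, hnot⟩ := (hN u hu).1 hvu
      refine ⟨hu, (not_lt.1 fun h => hnot ⟨hv, h⟩).lt_of_ne fun h => hadj.ne (hι hu hv h)⟩
    have hlow := finite_setOf_lt_of_injOn hι (ι v)
    rw [hunion]
    exact sqrt_ncard_union (by rw [Set.ncard_coe_finset, (hN v hv).2]) (hlow.subset hsub)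
      ((Set.ncard_le_ncard hsub hlow).trans (ncard_setOf_lt_le_of_injOn hι _))

theorem ncard_map_eq_of_preserves (hA : A ⊆ G.edgeSet) (hφ : Preserves φ A) (v : V) :
    {u | s(φ v, u) ∈ A}.ncard = {u | s(v, u) ∈ A}.ncard := by
  have himage : {u | s(φ v, u) ∈ A} = φ '' {u | s(v, u) ∈ A} := by
    ext u
    obtain ⟨u, rfl⟩ := φ.surjective u
    rw [φ.injective.mem_set_image]
    exact ⟨fun h => (hφ v u (φ.map_adj_iff.1 (hA h))).1 h, fun h => (hφ v u (hA h)).2 h⟩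
  rw [himage, Set.ncard_image_of_injective _ φ.injective]

theorem neighborSet_map_infinite_iff (φ : G ≃g G) {v : V} :
    (G.neighborSet (φ v)).Infinite ↔ (G.neighborSet v).Infinite := by
  have : G.neighborSet (φ v) = φ '' G.neighborSet v := by
    ext u
    obtain ⟨u, rfl⟩ := φ.surjective u
    rw [φ.injective.mem_set_image, mem_neighborSet, φ.map_adj_iff, mem_neighborSet]
  rw [this, Set.infinite_image_iff φ.injective.injOn]

theorem exists_edges_fixing_infinite_degree (hG : G.support.Countable) :
    ∃ A : Set (Sym2 V),
      (∀ u v, s(u, v) ∈ A → (G.neighborSet u).Infinite ∨ (G.neighborSet v).Infinite) ∧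
      ∀ φ : G ≃g G, Preserves φ A → ∀ v, (G.neighborSet v).Infinite → φ v = v := by
  obtain ⟨ι, hι⟩ := Set.countable_iff_exists_injOn.1 hG
  have hsub : {v | (G.neighborSet v).Infinite} ⊆ G.support := fun v hv => hv.nonempty
  replace hι := hι.mono hsub
  obtain ⟨A, hA, hmeet, hsqrt⟩ := exists_edges_sqrt_ncard_eq hι fun v hv => hv
  refine ⟨A, hmeet, fun φ hφ v hv => ?_⟩
  have hv' := (neighborSet_map_infinite_iff φ).2 hv
  refine hι hv' hv (Nat.succ_injective ?_)
  rw [← Nat.add_one, ← hsqrt _ hv', ncard_map_eq_of_preserves hA hφ, hsqrt v hv]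

theorem exists_coloring_of_countable_support (hsupp : G.support.Countable) :
    ∃ E : Set (Sym2 V), ∃ P : Set V, (∀ v ∉ P, (G.neighborSet v).Finite) ∧
      (∀ v, (component (restrict G Pᶜ) v).Finite) ∧
      ∀ φ : G ≃g G, Preserves φ E → ∀ v ∈ P, φ v = v := by
  let I := {v | (G.neighborSet v).Infinite}
  let K := restrict G Iᶜ
  have hKdeg (v : V) : (K.neighborSet v).Finite := by
    by_cases hv : v ∈ I
    · exact Set.finite_empty.subset fun u hu => (restrict_adj.1 hu).2.1 hv
    · exact (Set.not_infinite.1 hv).subset fun u hu => (restrict_adj.1 hu).1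
  obtain ⟨A, hAI, hA⟩ := exists_edges_fixing_infinite_degree hsupp
  obtain ⟨E, hE, P, hP, hfix⟩ := exists_coloring_of_locallyFinite hKdeg
    (hsupp.mono (support_mono (restrict_le G Iᶜ)))
  have hgraph : restrict G (I ∪ P)ᶜ = restrict K Pᶜ := by
    ext u v
    simp only [restrict_adj, K, Set.compl_union, Set.mem_inter_iff]
    tauto
  refine ⟨A ∪ E, I ∪ P, fun v hv => Set.not_infinite.1 fun h => hv (.inl h), hgraph ▸ hP,
    fun φ hφ => ?_⟩
  have hI (v : V) : φ v ∈ I ↔ v ∈ I := neighborSet_map_infinite_iff φ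
  have mem_left {u v : V} (h : u ∈ I ∨ v ∈ I) : s(u, v) ∈ A ∪ E ↔ s(u, v) ∈ A :=
    or_iff_left fun hmem => h.elim (restrict_adj.1 (hE hmem)).2.1 (restrict_adj.1 (hE hmem)).2.2
  have mem_right {u v : V} (h : ¬(u ∈ I ∨ v ∈ I)) : s(u, v) ∈ A ∪ E ↔ s(u, v) ∈ E :=
    or_iff_right fun hmem => h (hAI u v hmem)
  have hφA : Preserves φ A := fun u v huv => by
    by_cases h : u ∈ I ∨ v ∈ I
    · simpa only [mem_left h, mem_left ((or_congr (hI u) (hI v)).2 h)] using hφ u v huv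
    · exact iff_of_false (fun hmem => h ((or_congr (hI u) (hI v)).1 (hAI _ _ hmem)))
        fun hmem => h (hAI _ _ hmem)
  have hφE : Preserves (restrictIso φ fun v => not_congr (hI v)) E := fun u v huv => by
    obtain ⟨huv, hu, hv⟩ := restrict_adj.1 huv
    have h : ¬(u ∈ I ∨ v ∈ I) := not_or.2 ⟨hu, hv⟩
    have := hφ u v huv
    rwa [mem_right h, mem_right (mt (or_congr (hI u) (hI v)).1 h)] at this
  rintro v (hv | hv)
  exacts [hA φ hφA v hv, hfix _ hφE v hv]

end InfiniteDegree

section Motion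

variable {G : SimpleGraph V}

/-- Every automorphism of `G` moving some edge moves infinitely many edges. -/
def InfiniteEdgeMotion (G : SimpleGraph V) : Prop :=
  ∀ φ : G ≃g G, (∃ e ∈ G.edgeSet, e.map φ ≠ e) → {e ∈ G.edgeSet | e.map φ ≠ e}.Infinite

theorem finite_setOf_map_ne {φ : G ≃g G} {X : Set V} (hX : X.Finite)
    (hdeg : ∀ v ∈ X, (G.neighborSet v).Finite) (hφ : ∀ v, φ v ≠ v → v ∈ X) :
    {e ∈ G.edgeSet | e.map φ ≠ e}.Finite := by
  refine (hX.biUnion fun v hv => (hdeg v hv).image (s(v, ·))).subset ?_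
  rintro e ⟨he, hne⟩
  induction e with | _ u v
  rw [Sym2.map_mk] at hne
  by_cases hu : φ u = u
  · have hv : φ v ≠ v := fun hv => hne (by rw [hu, hv])
    exact Set.mem_biUnion (hφ v hv) ⟨u, he.symm, Sym2.eq_swap⟩
  · exact Set.mem_biUnion (hφ u hu) ⟨v, he, rfl⟩

theorem InfiniteEdgeMotion.map_eq (hG : InfiniteEdgeMotion G) {φ : G ≃g G} {P : Set V}
    (hφ : ∀ v ∈ P, φ v = v) {a b : V} (hab : G.Adj a b) (ha : a ∉ P)
    (hfin : (component (restrict G Pᶜ) a).Finite) (hdeg : ∀ v ∉ P, (G.neighborSet v).Finite) :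
    s(φ a, φ b) = s(a, b) := by
  set X := component (restrict G Pᶜ) a
  have hswap : Swappable φ X := swappable_component_compl hφ ha
  have hXP : ∀ v ∈ X, v ∉ P := component_restrict_subset ha
  have haX : a ∈ X := Reachable.rfl
  have hmoved : {e ∈ G.edgeSet | e.map hswap.swap ≠ e}.Finite := by
    refine finite_setOf_map_ne (hfin.union (hfin.image φ)) ?_ fun v => hswap.mem_of_swap_ne
    rintro v (hv | ⟨v, hv, rfl⟩)
    · exact hdeg v (hXP v hv)
    · exact hdeg _ fun h => hXP v hv (φ.injective (hφ _ h) ▸ h)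
  have hb : hswap.swap b = φ b := by
    by_cases hb : b ∈ X
    · exact hswap.swap_apply_of_mem hb
    · have hfix := hswap.fixes_boundary a haX b hb hab
      rw [hfix, hswap.swap_apply_of_notMem hb (by rwa [φ.symm_apply_eq.2 hfix.symm])]
  rw [← hswap.swap_apply_of_mem haX, ← hb]
  by_contra hne
  exact hG _ ⟨s(a, b), hab, hne⟩ hmoved

theorem exists_coloring_of_infiniteEdgeMotion (hsupp : G.support.Countable)
    (hG : InfiniteEdgeMotion G) :
    ∃ E : Set (Sym2 V), ∀ φ : G ≃g G, Preserves φ E → ∀ e ∈ G.edgeSet, e.map φ = e := by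
  obtain ⟨E, P, hdeg, hP, hfix⟩ := exists_coloring_of_countable_support hsupp
  refine ⟨E, fun φ hφ e he => ?_⟩
  have hfixed := hfix φ hφ
  induction e with | _ a b
  rw [Sym2.map_mk]
  by_cases ha : a ∈ P
  · by_cases hb : b ∈ P
    · rw [hfixed a ha, hfixed b hb]
    · rw [Sym2.eq_swap, hG.map_eq hfixed he.symm hb (hP b) hdeg, Sym2.eq_swap]
  · exact hG.map_eq hfixed he ha (hP a) hdeg

end Motion

/-! ### Line graphs -/

section LineGraph

variable {G : SimpleGraph V} {γ : G.lineGraph ≃g G.lineGraph} {e f g : G.edgeSet} {v w v' : V}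

theorem lineGraph_adj_of_mem (hne : e ≠ f) (he : v ∈ e.1) (hf : v ∈ f.1) : G.lineGraph.Adj e f :=
  lineGraph_adj_iff_exists.2 ⟨hne, v, he, hf⟩

theorem edge_eq_of_mem_of_mem (hvw : v ≠ w) (hve : v ∈ e.1) (hwe : w ∈ e.1) (hvf : v ∈ f.1)
    (hwf : w ∈ f.1) : e = f :=
  Subtype.ext (((Sym2.mem_and_mem_iff hvw).1 ⟨hve, hwe⟩).trans
    ((Sym2.mem_and_mem_iff hvw).1 ⟨hvf, hwf⟩).symm)

theorem lineGraph_adj_iff_xor {x y : V} (he : e.1 = s(x, y)) :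
    G.lineGraph.Adj f e ↔ Xor (x ∈ f.1) (y ∈ f.1) := by
  have hxe : x ∈ e.1 := by rw [he]; exact Sym2.mem_mk_left x y
  have hye : y ∈ e.1 := by rw [he]; exact Sym2.mem_mk_right x y
  have hxy : x ≠ y := (G.mem_edgeSet.1 (he ▸ e.2)).ne
  rw [lineGraph_adj_iff_exists]
  constructor
  · rintro ⟨hne, z, hzf, hze⟩
    rw [he, Sym2.mem_iff] at hze
    rcases hze with rfl | rfl
    · exact .inl ⟨hzf, fun hy => hne (edge_eq_of_mem_of_mem hxy hzf hy hxe hye)⟩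
    · exact .inr ⟨hzf, fun hx => hne (edge_eq_of_mem_of_mem hxy hx hzf hxe hye)⟩
  · rintro (⟨hx, hy⟩ | ⟨hy, hx⟩)
    · exact ⟨fun h => hy (h ▸ hye), x, hx, hxe⟩
    · exact ⟨fun h => hx (h ▸ hxe), y, hy, hye⟩

/-- Some edge of `G` is adjacent, in the line graph, to an odd number of `e`, `f` and `g`. This
distinguishes stars from triangles among the pairwise adjacent triples of edges. -/
def OddTriple (e f g : G.edgeSet) : Prop :=
  ∃ h, Xor (G.lineGraph.Adj h e) (Xor (G.lineGraph.Adj h f) (G.lineGraph.Adj h g))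

theorem OddTriple.map (h : OddTriple e f g) (γ : G.lineGraph ≃g G.lineGraph) :
    OddTriple (γ e) (γ f) (γ g) := by
  obtain ⟨h, hodd⟩ := h
  exact ⟨γ h, by simpa only [γ.map_adj_iff] using hodd⟩

theorem exists_common_endpoint_of_oddTriple (hef : G.lineGraph.Adj e f)
    (heg : G.lineGraph.Adj e g) (hfg : G.lineGraph.Adj f g) (hodd : OddTriple e f g) :
    ∃ v, v ∈ e.1 ∧ v ∈ f.1 ∧ v ∈ g.1 := by
  by_contra! hcon
  obtain ⟨-, a, hae, haf⟩ := lineGraph_adj_iff_exists.1 hef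
  obtain ⟨-, b, hbe, hbg⟩ := lineGraph_adj_iff_exists.1 heg
  obtain ⟨-, c, hcf, hcg⟩ := lineGraph_adj_iff_exists.1 hfg
  have hab : a ≠ b := fun h => hcon a hae haf (h ▸ hbg)
  have hac : a ≠ c := fun h => hcon a hae haf (h ▸ hcg)
  have hbc : b ≠ c := fun h => hcon b hbe (h ▸ hcf) hbg
  obtain ⟨h, hodd⟩ := hodd
  rw [lineGraph_adj_iff_xor ((Sym2.mem_and_mem_iff hab).1 ⟨hae, hbe⟩),
    lineGraph_adj_iff_xor ((Sym2.mem_and_mem_iff hac).1 ⟨haf, hcf⟩),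
    lineGraph_adj_iff_xor ((Sym2.mem_and_mem_iff hbc).1 ⟨hbg, hcg⟩)] at hodd
  unfold Xor at hodd
  tauto

theorem exists_edge_leaving (hinf : (component G.lineGraph e).Infinite) {W : Set V}
    (hW : W.Finite) (he : ∃ v ∈ W, v ∈ e.1) :
    ∃ x ∈ W, ∃ y ∉ W, G.Adj x y := by
  lift W to Finset V using hW
  by_contra! hcon
  have hclosed (f : G.edgeSet) (hf : ∃ x ∈ W, x ∈ f.1) : f.1 ∈ W.sym2 := by
    obtain ⟨x, hx, hxf⟩ := hf
    obtain ⟨y, hy⟩ := Sym2.mem_iff_exists.1 hxf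
    have hxy : G.Adj x y := G.mem_edgeSet.1 (hy ▸ f.2)
    rw [hy, Finset.mk_mem_sym2_iff]
    exact ⟨hx, by_contra fun hyW => hcon x hx y hyW hxy⟩
  refine hinf ((W.sym2.finite_toSet.preimage Subtype.val_injective.injOn).subset
    (component_subset_of_adj (hclosed e he) fun f _ hf g hfg => hclosed g ?_))
  obtain ⟨-, x, hxf, hxg⟩ := lineGraph_adj_iff_exists.1 hfg
  exact ⟨x, Finset.mem_sym2_iff.1 hf x hxf, hxg⟩

-- An edge leaving the finite set `{v, a, b, c}` meets it in a single vertex, and each of these four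
-- vertices lies on an odd number of the edges `va`, `vb` and `vc`.
theorem oddTriple_of_common_endpoint (hinf : (component G.lineGraph e).Infinite) (hef : e ≠ f)
    (heg : e ≠ g) (hfg : f ≠ g) (he : v ∈ e.1) (hf : v ∈ f.1) (hg : v ∈ g.1) :
    OddTriple e f g := by
  obtain ⟨a, ha⟩ := Sym2.mem_iff_exists.1 he
  obtain ⟨b, hb⟩ := Sym2.mem_iff_exists.1 hf
  obtain ⟨c, hc⟩ := Sym2.mem_iff_exists.1 hg
  have hva : v ≠ a := (G.mem_edgeSet.1 (ha ▸ e.2)).ne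
  have hvb : v ≠ b := (G.mem_edgeSet.1 (hb ▸ f.2)).ne
  have hvc : v ≠ c := (G.mem_edgeSet.1 (hc ▸ g.2)).ne
  have hab : a ≠ b := fun h => hef (Subtype.ext (by rw [ha, hb, h]))
  have hac : a ≠ c := fun h => heg (Subtype.ext (by rw [ha, hc, h]))
  have hbc : b ≠ c := fun h => hfg (Subtype.ext (by rw [hb, hc, h]))
  obtain ⟨x, hx, y, hy, hxy⟩ := exists_edge_leaving (W := {v, a, b, c}) hinf (Set.toFinite _)
    ⟨v, .inl rfl, he⟩
  simp only [Set.mem_insert_iff, Set.mem_singleton_iff, not_or] at hx hy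
  refine ⟨⟨s(x, y), hxy⟩, ?_⟩
  have hmem {p : V} (hp : y ≠ p) : p ∈ s(x, y) ↔ p = x := by
    rw [Sym2.mem_iff, or_iff_left hp.symm]
  rw [lineGraph_adj_iff_xor ha, lineGraph_adj_iff_xor hb, lineGraph_adj_iff_xor hc]
  rw [hmem hy.1, hmem hy.2.1, hmem hy.2.2.1, hmem hy.2.2.2]
  rcases hx with rfl | rfl | rfl | rfl
  · simp [Xor, hva.symm, hvb.symm, hvc.symm]
  · simp [Xor, hva, hab.symm, hac.symm]
  · simp [Xor, hvb, hab, hbc.symm]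
  · simp [Xor, hvc, hac, hbc]

/-- The automorphism `γ` of the line graph carries the edges at `v` to the edges at `v'`. -/
def MapsStar (γ : G.lineGraph ≃g G.lineGraph) (v v' : V) : Prop :=
  ∀ g : G.edgeSet, v' ∈ (γ g).1 ↔ v ∈ g.1

theorem mem_map_of_mem (hinf : (component G.lineGraph e).Infinite) (hef : e ≠ f)
    (he : v ∈ e.1) (hf : v ∈ f.1) (hg : v ∈ g.1) (he' : v' ∈ (γ e).1) (hf' : v' ∈ (γ f).1) :
    v' ∈ (γ g).1 := by
  by_cases heg : e = g
  · rwa [← heg]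
  by_cases hfg : f = g
  · rwa [← hfg]
  obtain ⟨w, hwe, hwf, hwg⟩ := exists_common_endpoint_of_oddTriple
    (γ.map_adj_iff.2 (lineGraph_adj_of_mem hef he hf))
    (γ.map_adj_iff.2 (lineGraph_adj_of_mem heg he hg))
    (γ.map_adj_iff.2 (lineGraph_adj_of_mem hfg hf hg))
    ((oddTriple_of_common_endpoint hinf hef heg hfg he hf hg).map γ)
  have hw : v' = w := by_contra fun hne =>
    hef (γ.injective (edge_eq_of_mem_of_mem hne he' hwe hf' hwf))
  rwa [hw]

theorem exists_mapsStar_of_mem_of_mem (γ : G.lineGraph ≃g G.lineGraph)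
    (hinf : (component G.lineGraph e).Infinite) (hef : e ≠ f) (he : v ∈ e.1) (hf : v ∈ f.1) :
    ∃ v', MapsStar γ v v' := by
  obtain ⟨hne, v', he', hf'⟩ := lineGraph_adj_iff_exists.1
    (γ.map_adj_iff.2 (lineGraph_adj_of_mem hef he hf))
  refine ⟨v', fun g => ⟨fun hg => ?_, fun hg => mem_map_of_mem hinf hef he hf hg he' hf'⟩⟩
  have := mem_map_of_mem (γ := γ.symm) (v' := v) ((component_map_infinite_iff γ).2 hinf) hne
    he' hf' hg (by rwa [RelIso.symm_apply_apply]) (by rwa [RelIso.symm_apply_apply])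
  rwa [RelIso.symm_apply_apply] at this

theorem exists_lineGraph_adj (hinf : (component G.lineGraph e).Infinite) :
    ∃ f, G.lineGraph.Adj e f := by
  by_contra! hcon
  exact hinf (component_eq_singleton hcon ▸ Set.finite_singleton e)

theorem exists_mapsStar_of_leaf (γ : G.lineGraph ≃g G.lineGraph)
    (hinf : (component G.lineGraph e).Infinite) (he : v ∈ e.1) (hleaf : ∀ f, v ∈ f.1 → f = e) :
    ∃ v', MapsStar γ v v' := by
  obtain ⟨u, hu⟩ := Sym2.mem_iff_exists.1 he
  have hue : u ∈ e.1 := hu ▸ Sym2.mem_mk_right v u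
  have eq_u {f : G.edgeSet} (hef : G.lineGraph.Adj e f) : u ∈ f.1 := by
    obtain ⟨hne, w, hwe, hwf⟩ := lineGraph_adj_iff_exists.1 hef
    rcases Sym2.mem_iff.1 (hu ▸ hwe) with rfl | rfl
    exacts [absurd (hleaf f hwf).symm hne, hwf]
  obtain ⟨f, hef⟩ := exists_lineGraph_adj hinf
  obtain ⟨u', hu'⟩ := exists_mapsStar_of_mem_of_mem γ hinf hef.ne hue (eq_u hef)
  obtain ⟨v', hv'⟩ := Sym2.mem_iff_exists.1 ((hu' e).2 hue)
  have hne : u' ≠ v' := (G.mem_edgeSet.1 (hv' ▸ (γ e).2)).ne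
  have hv'e : v' ∈ (γ e).1 := hv' ▸ Sym2.mem_mk_right u' v'
  refine ⟨v', fun g => ⟨fun hg => ?_, fun hg => hleaf g hg ▸ hv'e⟩⟩
  by_cases heg : e = g
  · rwa [← heg]
  have hadj := γ.map_adj_iff.1 (lineGraph_adj_of_mem (γ.injective.ne heg) hv'e hg)
  exact absurd (γ.injective (edge_eq_of_mem_of_mem hne ((hu' e).2 hue) hv'e
    ((hu' g).2 (eq_u hadj)) hg)) heg

theorem exists_mapsStar (γ : G.lineGraph ≃g G.lineGraph)
    (hinf : (component G.lineGraph e).Infinite) (he : v ∈ e.1) : ∃ v', MapsStar γ v v' := by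
  by_cases hleaf : ∀ f : G.edgeSet, v ∈ f.1 → f = e
  · exact exists_mapsStar_of_leaf γ hinf he hleaf
  · push Not at hleaf
    obtain ⟨f, hf, hfe⟩ := hleaf
    exact exists_mapsStar_of_mem_of_mem γ hinf hfe.symm he hf

theorem eq_of_star_eq (hinf : (component G.lineGraph e).Infinite) (he : v ∈ e.1)
    (h : ∀ g : G.edgeSet, w ∈ g.1 ↔ v ∈ g.1) : w = v := by
  by_contra hne
  obtain ⟨f, hef⟩ := exists_lineGraph_adj hinf
  obtain ⟨hef, x, hxe, hxf⟩ := lineGraph_adj_iff_exists.1 hef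
  have hwe := (h e).2 he
  rw [(Sym2.mem_and_mem_iff hne).1 ⟨hwe, he⟩, Sym2.mem_iff] at hxe
  have hvf : v ∈ f.1 := by
    rcases hxe with rfl | rfl
    exacts [(h f).1 hxf, hxf]
  exact hef (edge_eq_of_mem_of_mem hne hwe he ((h f).2 hvf) hvf)

/-- The set of vertices lying on an edge whose component in the line graph is infinite. -/
def infinitePart (G : SimpleGraph V) : Set V :=
  {v | ∃ e : G.edgeSet, (component G.lineGraph e).Infinite ∧ v ∈ e.1}

theorem mapsStar_self (hγ : ∀ e, (component G.lineGraph e).Finite → γ e = e)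
    (hv : v ∉ infinitePart G) : MapsStar γ v v := by
  have hfix (g : G.edgeSet) (hg : v ∈ g.1) : γ g = g :=
    hγ g (Set.not_infinite.1 fun h => hv ⟨g, h, hg⟩)
  refine fun g => ⟨fun hg => ?_, fun hg => (hfix g hg).symm ▸ hg⟩
  rwa [γ.injective (hfix _ hg)] at hg

theorem exists_vertexMap (hγ : ∀ e, (component G.lineGraph e).Finite → γ e = e) :
    ∃ φ : V → V, (∀ v, MapsStar γ v (φ v)) ∧ ∀ v ∉ infinitePart G, φ v = v := by
  have (v : V) : ∃ v', MapsStar γ v v' ∧ (v ∉ infinitePart G → v' = v) := by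
    by_cases hv : v ∈ infinitePart G
    · obtain ⟨e, hinf, he⟩ := hv
      obtain ⟨v', hv'⟩ := exists_mapsStar γ hinf he
      exact ⟨v', hv', fun h => absurd ⟨e, hinf, he⟩ h⟩
    · exact ⟨v, mapsStar_self hγ hv, fun _ => rfl⟩
  choose φ hφ using this
  exact ⟨φ, fun v => (hφ v).1, fun v => (hφ v).2⟩

theorem leftInverse_of_mapsStar {φ ψ : V → V} (hφ : ∀ v, MapsStar γ v (φ v))
    (hψ : ∀ v, MapsStar γ.symm v (ψ v)) (hφ' : ∀ v ∉ infinitePart G, φ v = v)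
    (hψ' : ∀ v ∉ infinitePart G, ψ v = v) : Function.LeftInverse ψ φ := by
  intro v
  by_cases hv : v ∈ infinitePart G
  · obtain ⟨e, hinf, he⟩ := hv
    refine eq_of_star_eq hinf he fun g => ?_
    rw [← hφ v g, ← hψ (φ v) (γ g), RelIso.symm_apply_apply]
  · rw [hφ' v hv, hψ' v hv]

theorem map_edge_eq_of_mapsStar {φ : V → V} (hinj : φ.Injective)
    (hφ : ∀ v, MapsStar γ v (φ v)) (e : G.edgeSet) : (γ e).1 = e.1.map φ := by
  obtain ⟨e, he⟩ := e
  induction e with | _ u v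
  rw [Sym2.map_mk, ← Sym2.mem_and_mem_iff (hinj.ne he.ne)]
  exact ⟨(hφ u _).2 (Sym2.mem_mk_left u v), (hφ v _).2 (Sym2.mem_mk_right u v)⟩

theorem adj_map_of_mapsStar {φ : V → V} (hinj : φ.Injective) (hφ : ∀ v, MapsStar γ v (φ v))
    {u v : V} (huv : G.Adj u v) : G.Adj (φ u) (φ v) := by
  have := (γ ⟨s(u, v), huv⟩).2
  rwa [map_edge_eq_of_mapsStar hinj hφ] at this

theorem exists_iso_of_lineGraph_iso (hγ : ∀ e, (component G.lineGraph e).Finite → γ e = e) :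
    ∃ φ : G ≃g G, ∀ e, (γ e).1 = e.1.map φ := by
  have hγ' (e) (he : (component G.lineGraph e).Finite) : γ.symm e = e :=
    γ.symm_apply_eq.2 (hγ e he).symm
  obtain ⟨φ, hφ, hφ'⟩ := exists_vertexMap hγ
  obtain ⟨ψ, hψ, hψ'⟩ := exists_vertexMap hγ'
  have hleft := leftInverse_of_mapsStar hφ hψ hφ' hψ'
  have hright : Function.LeftInverse φ ψ := leftInverse_of_mapsStar hψ hφ hψ' hφ'
  refine ⟨⟨⟨φ, ψ, hleft, hright⟩, ⟨fun h => ?_, adj_map_of_mapsStar hleft.injective hφ⟩⟩,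
    map_edge_eq_of_mapsStar hleft.injective hφ⟩
  simpa only [Equiv.coe_fn_mk, hleft _] using adj_map_of_mapsStar hright.injective hψ h

end LineGraph

section VertexMotion

variable {L : SimpleGraph V}

theorem map_eq_of_component_finite
    (hL : ∀ γ : L ≃g L, (∃ v, γ v ≠ v) → {v | γ v ≠ v}.Infinite) (γ : L ≃g L) {v : V}
    (hv : (component L v).Finite) : γ v = v := by
  have hswap : Swappable γ (component L v) := by
    have hrestrict : restrict L ∅ᶜ = L := by ext; simp
    simpa only [hrestrict] using
      swappable_component_compl (P := ∅) (φ := γ) (fun _ h => h.elim) (Set.notMem_empty v)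
  rw [← hswap.swap_apply_of_mem (v := v) Reachable.rfl]
  by_contra hne
  exact hL hswap.swap ⟨v, hne⟩ ((hv.union (hv.image γ)).subset fun _ => hswap.mem_of_swap_ne)

end VertexMotion

theorem infiniteEdgeMotion_of_lineGraph {G : SimpleGraph V}
    (hmotion : ∀ γ : G.lineGraph ≃g G.lineGraph, (∃ e, γ e ≠ e) → {e | γ e ≠ e}.Infinite) :
    InfiniteEdgeMotion G := by
  rintro φ ⟨e, he, hne⟩
  have hinf := hmotion (Iso.lineGraph φ) ⟨⟨e, he⟩, fun h => hne (congrArg Subtype.val h)⟩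
  refine (hinf.image Subtype.val_injective.injOn).mono ?_
  rintro _ ⟨f, hf, rfl⟩
  exact ⟨f.2, fun h => hf (Subtype.ext h)⟩

theorem countable_support {G : SimpleGraph V} [Countable G.edgeSet] : G.support.Countable := by
  have hfin (e : Sym2 V) : {v | v ∈ e}.Finite := by
    induction e with | _ x y
    exact (Set.toFinite {x, y}).subset fun v hv => Sym2.mem_iff.1 hv
  have hcount : (⋃ e : G.edgeSet, {v | v ∈ e.1}).Countable :=
    Set.countable_iUnion fun e => (hfin e.1).countable
  exact hcount.mono fun v ⟨u, huv⟩ => Set.mem_iUnion.2 ⟨⟨s(v, u), huv⟩, Sym2.mem_mk_left v u⟩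

end DistinguishingColoring

open DistinguishingColoring in
theorem stmt_4_general {V : Type*} (G : SimpleGraph V) [Countable G.edgeSet]
    (hmotion : ∀ γ : G.lineGraph ≃g G.lineGraph, (∃ e, γ e ≠ e) →
      {e : G.edgeSet | γ e ≠ e}.Infinite) :
    ∃ c : G.edgeSet → Fin 2, ∀ γ : G.lineGraph ≃g G.lineGraph,
      (∀ e, c (γ e) = c e) → ∀ e, γ e = e := by
  classical
  obtain ⟨E, hE⟩ := exists_coloring_of_infiniteEdgeMotion countable_support
    (infiniteEdgeMotion_of_lineGraph hmotion)
  refine ⟨fun e => if e.1 ∈ E then 1 else 0, fun γ hγ e => ?_⟩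
  obtain ⟨φ, hφ⟩ := exists_iso_of_lineGraph_iso fun e => map_eq_of_component_finite hmotion γ
  have hpres : Preserves φ E := fun u v huv => by
    have hcol : (γ ⟨s(u, v), huv⟩).1 ∈ E ↔ s(u, v) ∈ E := by
      have := hγ ⟨s(u, v), huv⟩
      by_cases h : (γ ⟨s(u, v), huv⟩).1 ∈ E <;> by_cases h' : s(u, v) ∈ E <;> simp_all
    rwa [hφ] at hcol
  exact Subtype.ext ((hφ e).trans (hE φ hpres e.1 e.2))

/-- If the line graph `L(G)` of a graph `G` is countable and connected and
every non-trivial automorphism of `L(G)` moves infinitely many vertices, then `L(G)`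
admits a distinguishing 2-vertex colouring. -/
theorem stmt_4 {V : Type} (G : SimpleGraph V)
    [Countable G.edgeSet] (hconn : G.lineGraph.Connected)
    (hmotion : ∀ γ : G.lineGraph ≃g G.lineGraph, (∃ e, γ e ≠ e) →
      {e : G.edgeSet | γ e ≠ e}.Infinite) :
    ∃ c : G.edgeSet → Fin 2, ∀ γ : G.lineGraph ≃g G.lineGraph,
      (∀ e, c (γ e) = c e) → ∀ e, γ e = e :=
  stmt_4_general G hmotion
end

section
/- For every connected graph G (finite or infinite), the distinguishing index satisfies D'(G) ≤ D(G) + 1. -/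
open Cardinal

/-- The distinguishing number `D(G)`: the least cardinal number of colours in a
distinguishing vertex colouring of `G`. -/
noncomputable def distinguishingNumber {V : Type u} (G : SimpleGraph V) : Cardinal.{u} :=
  sInf {κ : Cardinal.{u} | ∃ (C : Type u) (c : V → C), #C = κ ∧
    ∀ γ : G ≃g G, (∀ v, c (γ v) = c v) → ∀ v, γ v = v}

/-- The distinguishing index `D'(G)`: the least cardinal number of colours in a
distinguishing edge colouring of `G`. -/
noncomputable def distinguishingIndex {V : Type u} (G : SimpleGraph V) : Cardinal.{u} :=
  sInf {κ : Cardinal.{u} | ∃ (C : Type u) (c : G.edgeSet → C), #C = κ ∧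
    ∀ γ : G ≃g G, (∀ e : G.edgeSet, c (γ.mapEdgeSet e) = c e) → ∀ v, γ v = v}

/-!
Given a distinguishing vertex colouring `c` with palette `C`, we colour edges with `Option C`.
Fix a subgraph `Z` (one edge or one cycle) and a spanning subgraph in which every vertex off `Z` has
a parent edge, leading it towards `Z`. Giving each parent edge the `c`-colour of its child, an
automorphism that preserves the edge colours and `Z` must preserve `c` off `Z`.

If `G` has a cycle, let `Z` be one, and let `none` be the colour of the edges outside the unicyclic
spanning subgraph, so that automorphisms preserve `Z` and act on it as dihedral symmetries. If `G`
is a tree, let `Z` be an edge, the only one coloured `none`. An edge whose ends have equal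
`c`-colours works at once. Otherwise take a path `x y z`, let `Z` be the edge `xy`, and recolour
`yz` by the colour of `x`, which no edge from `x` to a child carries: this rules out a swap of `x`
and `y`. Only on a single edge is this impossible, and there no edge colouring is distinguishing.
-/

namespace DistinguishingColoring

open SimpleGraph

variable {V : Type*} {C : Type*} {G : SimpleGraph V} {Z : Set V} {p : V → V}

section Colorings

/-- The vertex colouring `c` is distinguishing: only the identity preserves it. -/
def IsVertexDistinguishing (G : SimpleGraph V) (c : V → C) : Prop :=
  ∀ γ : G ≃g G, (∀ v, c (γ v) = c v) → ∀ v, γ v = v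

/-- The automorphism `γ` preserves the edge colouring `f`. Edge colourings are defined on all of
`Sym2 V`, but only their values on edges matter. -/
def PreservesEdgeColoring (γ : G ≃g G) (f : Sym2 V → C) : Prop :=
  ∀ ⦃u v⦄, G.Adj u v → f s(γ u, γ v) = f s(u, v)

/-- The edge colouring `f` is distinguishing: only the identity preserves it. -/
def IsEdgeDistinguishing (G : SimpleGraph V) (f : Sym2 V → C) : Prop :=
  ∀ γ : G ≃g G, PreservesEdgeColoring γ f → ∀ v, γ v = v

lemma PreservesEdgeColoring.symm {γ : G ≃g G} {f : Sym2 V → C} (hγ : PreservesEdgeColoring γ f) :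
    PreservesEdgeColoring γ.symm f := by
  intro u v huv
  simpa only [RelIso.apply_symm_apply] using (hγ (γ.symm.map_adj_iff.2 huv)).symm

lemma apply_mem_iff_of_forall_mapsTo {f : Sym2 V → C}
    (hf : ∀ γ : G ≃g G, PreservesEdgeColoring γ f → Set.MapsTo γ Z Z)
    {γ : G ≃g G} (hγ : PreservesEdgeColoring γ f) (v : V) : γ v ∈ Z ↔ v ∈ Z :=
  ⟨fun hv => by simpa only [RelIso.symm_apply_apply] using hf γ.symm hγ.symm hv,
    fun hv => hf γ hγ hv⟩

lemma isEdgeDistinguishing_of_edgeSet_subsingleton {D : Type*} (hG : G.edgeSet.Subsingleton)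
    {g : Sym2 V → D} (hg : IsEdgeDistinguishing G g) (f : Sym2 V → C) :
    IsEdgeDistinguishing G f := fun γ _ => hg γ fun _ _ huv =>
  congrArg g (hG (γ.map_adj_iff.2 huv) huv)

lemma isEdgeDistinguishing_iff_edgeSet {f : Sym2 V → C} :
    IsEdgeDistinguishing G f ↔ ∀ γ : G ≃g G,
      (∀ e : G.edgeSet, f (γ.mapEdgeSet e) = f e) → ∀ v, γ v = v := by
  refine forall_congr' fun γ => imp_congr_left ⟨fun h => ?_, fun h u v huv => h ⟨s(u, v), huv⟩⟩
  rintro ⟨⟨u, v⟩, huv⟩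
  exact h huv

lemma exists_isEdgeDistinguishing_of_edgeSet {g : G.edgeSet → C}
    (hg : ∀ γ : G ≃g G, (∀ e : G.edgeSet, g (γ.mapEdgeSet e) = g e) → ∀ v, γ v = v) :
    ∃ f : Sym2 V → Option C, IsEdgeDistinguishing G f := by
  refine ⟨Function.extend Subtype.val (fun e => some (g e)) fun _ => none,
    isEdgeDistinguishing_iff_edgeSet.2 fun γ hγ => hg γ fun e => ?_⟩
  simpa only [Subtype.val_injective.extend_apply, Option.some.injEq] using hγ e

end Colorings

section Depth

/-- The distance from `v` to the set `Z`, with junk value `0` when `Z` is empty. -/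
noncomputable def depth (G : SimpleGraph V) (Z : Set V) (v : V) : ℕ :=
  ⨅ z : Z, G.dist v z

lemma dist_iso_apply {W : Type*} {H : SimpleGraph W} (γ : G ≃g H) (u v : V) :
    H.dist (γ u) (γ v) = G.dist u v := by
  simp only [dist_eq_sInf]
  congr 1
  refine Set.Subset.antisymm ?_ ?_
  · rintro _ ⟨w, rfl⟩
    exact ⟨(w.map γ.symm.toHom).copy (γ.symm_apply_apply u) (γ.symm_apply_apply v), by simp⟩
  · rintro _ ⟨w, rfl⟩
    exact ⟨w.map γ.toHom, by simp⟩

lemma depth_apply {γ : G ≃g G} (hγ : ∀ v, γ v ∈ Z ↔ v ∈ Z) (v : V) :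
    depth G Z (γ v) = depth G Z v :=
  ((γ.toEquiv.subtypeEquiv fun z => (hγ z).symm).iInf_congr fun z => dist_iso_apply γ v z).symm

lemma exists_adj_depth_lt (hG : G.Connected) (hZ : Z.Nonempty) {v : V} (hv : v ∉ Z) :
    ∃ u, G.Adj v u ∧ depth G Z u < depth G Z v := by
  have := hZ.to_subtype
  obtain ⟨z, hz⟩ : ∃ z : Z, G.dist v z = depth G Z v := ciInf_mem fun z : Z => G.dist v z
  obtain ⟨w, hw⟩ := hG.exists_walk_length_eq_dist v z
  cases w with
  | nil => exact absurd z.2 hv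
  | @cons _ u _ hvu w =>
    refine ⟨u, hvu, ?_⟩
    calc depth G Z u ≤ G.dist u z := ciInf_le (OrderBot.bddBelow _) z
      _ ≤ w.length := dist_le w
      _ < depth G Z v := by rw [← hz, ← hw, Walk.length_cons]; exact Nat.lt_succ_self _

end Depth

section ParentMap

/-- `p` sends every vertex to a neighbour, maps the root set `Z` to itself, and outside `Z` leads
towards `Z`. -/
structure IsParentMap (G : SimpleGraph V) (Z : Set V) (p : V → V) : Prop where
  adj : ∀ v, G.Adj v (p v)
  mapsTo : Set.MapsTo p Z Z
  depth_lt : ∀ v ∉ Z, depth G Z (p v) < depth G Z v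

lemma exists_isParentMap_eqOn (hG : G.Connected) (hZ : Z.Nonempty) {q : V → V}
    (hqadj : ∀ v ∈ Z, G.Adj v (q v)) (hqZ : Set.MapsTo q Z Z) :
    ∃ p, IsParentMap G Z p ∧ Set.EqOn p q Z := by
  have hstep : ∀ v, ∃ u, G.Adj v u ∧ (v ∈ Z → u = q v) ∧
      (v ∉ Z → depth G Z u < depth G Z v) := by
    intro v
    by_cases hv : v ∈ Z
    · exact ⟨q v, hqadj v hv, fun _ => rfl, fun h => absurd hv h⟩
    · obtain ⟨u, hvu, hu⟩ := exists_adj_depth_lt hG hZ hv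
      exact ⟨u, hvu, fun h => absurd h hv, fun _ => hu⟩
  choose p hadj hpq hlt using hstep
  exact ⟨p, ⟨hadj, hqZ.congr fun v hv => (hpq v hv).symm, hlt⟩, hpq⟩

lemma IsParentMap.mem_of_apply_apply_eq (hp : IsParentMap G Z p) {v : V} (hv : p (p v) = v) :
    v ∈ Z := by
  by_contra hvZ
  have hpv : p v ∉ Z := fun h => hvZ (hv ▸ hp.mapsTo h)
  have := hp.depth_lt _ hpv
  rw [hv] at this
  exact this.asymm (hp.depth_lt v hvZ)

lemma IsParentMap.exists_reachable (hp : IsParentMap G Z p) {H : SimpleGraph V}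
    (hH : ∀ v, H.Adj v (p v)) (v : V) : ∃ z ∈ Z, H.Reachable v z := by
  induction hn : depth G Z v using Nat.strong_induction_on generalizing v with
  | _ n ih =>
    by_cases hv : v ∈ Z
    · exact ⟨v, hv, Reachable.refl v⟩
    · obtain ⟨z, hz, hvz⟩ := ih _ (hn ▸ hp.depth_lt v hv) (p v) rfl
      exact ⟨z, hz, (hH v).reachable.trans hvz⟩

/-- The subgraph formed by the edges `s(v, p v)` is connected, and trees are minimal connected. -/
lemma IsParentMap.eq_or_eq_of_isTree {x y u v : V} (hp : IsParentMap G {x, y} p) (hG : G.IsTree)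
    (huv : G.Adj u v) : p u = v ∨ p v = u := by
  let H : SimpleGraph V := fromRel fun a b => p a = b
  have hH : ∀ a, H.Adj a (p a) := fun a => ⟨(hp.adj a).ne, Or.inl rfl⟩
  have hHG : H ≤ G := by
    rintro a b ⟨-, rfl | rfl⟩
    exacts [hp.adj a, (hp.adj b).symm]
  have hpx : p x = y := (hp.mapsTo (Set.mem_insert x {y})).resolve_left (hp.adj x).ne'
  have hreach : ∀ a, H.Reachable a x := by
    intro a
    obtain ⟨z, rfl | rfl, haz⟩ := hp.exists_reachable hH a
    exacts [haz, haz.trans (hpx ▸ hH x).symm.reachable]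
  have hconn : H.Connected :=
    connected_iff_exists_forall_reachable H |>.2 ⟨x, fun a => (hreach a).symm⟩
  exact ((isTree_iff_minimal_connected.1 hG).le_of_le hconn hHG huv).2

lemma IsParentMap.mem_of_cycle (hp : IsParentMap G Z p) {n : ℕ} [Fact (2 < n)] {y : ZMod n → V}
    (hinj : Function.Injective y) (hy : ∀ i, p (y i) = y (i + 1) ∨ p (y (i + 1)) = y i)
    (i : ZMod n) : y i ∈ Z := by
  have : NeZero n := ⟨(lt_trans two_pos (Fact.out : 2 < n)).ne'⟩
  by_contra hi
  -- Both cyclic neighbours of a deepest `y j` outside `Z` would be its parent.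
  obtain ⟨j, hj, hmax⟩ := Set.exists_max_image {j | y j ∉ Z} (fun j => depth G Z (y j))
    (Set.toFinite _) ⟨i, hi⟩
  have hparent : ∀ k, p (y j) = y k ∨ p (y k) = y j → p (y j) = y k := by
    rintro k (h | h)
    · exact h
    · have hk : y k ∉ Z := fun hk => hj (h ▸ hp.mapsTo hk)
      exact absurd (h ▸ hp.depth_lt _ hk) (hmax k hk).not_gt
  have hnext := hparent (j + 1) (hy j)
  have hprev := hparent (j - 1) (by simpa only [sub_add_cancel] using (hy (j - 1)).symm)
  have : j + 1 = j - 1 := hinj (hnext.symm.trans hprev)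
  exact ZMod.neg_one_ne_one (n := n) (by linear_combination -this)

end ParentMap

section ParentColoring

open Classical in
/-- The edge colouring that gives `s(v, p v)` the colour `c v` and all other edges the colour
`none`. If `p` swaps two vertices, they compete for the colour of the edge between them. -/
noncomputable def parentColoring (p : V → V) (c : V → Option C) (e : Sym2 V) : Option C :=
  if h : ∃ v, e = s(v, p v) then c h.choose else none

lemma parentColoring_mk {c : V → Option C} (hc : ∀ v, p (p v) = v → c (p v) = c v) (v : V) :
    parentColoring p c s(v, p v) = c v := by
  have h : ∃ u, s(v, p v) = s(u, p u) := ⟨v, rfl⟩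
  rw [parentColoring, dif_pos h]
  rcases Sym2.eq_iff.1 h.choose_spec with ⟨hv, -⟩ | ⟨hv, hpv⟩
  · rw [← hv]
  · rw [← hpv]
    exact hc v (by rw [hpv, ← hv])

lemma eq_and_eq_or_of_parentColoring_eq_some {c : V → Option C} {u v : V} {a : C}
    (h : parentColoring p c s(u, v) = some a) :
    p u = v ∧ c u = some a ∨ p v = u ∧ c v = some a := by
  unfold parentColoring at h
  split_ifs at h with hex
  rcases Sym2.eq_iff.1 hex.choose_spec with ⟨hu, hv⟩ | ⟨hu, hv⟩
  · rw [← hu] at h hv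
    exact Or.inl ⟨hv.symm, h⟩
  · rw [← hv] at h hu
    exact Or.inr ⟨hu.symm, h⟩

lemma IsParentMap.color_apply (hp : IsParentMap G Z p) {c : V → Option C}
    (hc : ∀ v, p (p v) = v → c (p v) = c v) {γ : G ≃g G}
    (hγ : PreservesEdgeColoring γ (parentColoring p c)) (hγZ : ∀ v, γ v ∈ Z ↔ v ∈ Z)
    {v : V} (hv : v ∉ Z) (hcv : c v ≠ none) : c (γ v) = c v := by
  obtain ⟨a, ha⟩ := Option.ne_none_iff_exists'.1 hcv
  have hcolor : parentColoring p c s(γ v, γ (p v)) = some a := by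
    rw [hγ (hp.adj v), parentColoring_mk hc, ha]
  rcases eq_and_eq_or_of_parentColoring_eq_some hcolor with ⟨-, h⟩ | ⟨h, -⟩
  · exact h.trans ha.symm
  · have hpv : γ (p v) ∉ Z := fun hmem => hv ((hγZ v).1 (h ▸ hp.mapsTo hmem))
    have hlt := hp.depth_lt _ hpv
    rw [h, depth_apply hγZ, depth_apply hγZ] at hlt
    exact absurd hlt (hp.depth_lt v hv).asymm

end ParentColoring

section Tree

variable {c : V → C} {x y z : V}

lemma exists_edgeColoring_of_isTree (hG : G.IsTree) (hxy : G.Adj x y) (c : V → C) :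
    ∃ f : Sym2 V → Option C, ∀ γ : G ≃g G, PreservesEdgeColoring γ f →
      (∀ v, γ v ∈ ({x, y} : Set V) ↔ v ∈ ({x, y} : Set V)) ∧
        ∀ v ∉ ({x, y} : Set V), c (γ v) = c v := by
  classical
  set Z : Set V := {x, y} with hZ
  have hswap : ∀ v ∈ Z, G.Adj v (Equiv.swap x y v) ∧ Equiv.swap x y v ∈ Z := by
    rintro v (rfl | rfl)
    · simpa [hZ] using hxy
    · simpa [hZ] using hxy.symm
  obtain ⟨p, hp, -⟩ := exists_isParentMap_eqOn hG.connected ⟨x, Set.mem_insert x {y}⟩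
    (fun v hv => (hswap v hv).1) (fun v hv => (hswap v hv).2)
  let d : V → Option C := fun v => if v ∈ Z then none else some (c v)
  have hd : ∀ v, d v = none ↔ v ∈ Z := by simp [d]
  have hdp : ∀ v, p (p v) = v → d (p v) = d v := by
    intro v hv
    have hvZ := hp.mem_of_apply_apply_eq hv
    rw [(hd v).2 hvZ, (hd _).2 (hp.mapsTo hvZ)]
  have hmem : ∀ u v, G.Adj u v → parentColoring p d s(u, v) = none → u ∈ Z := by
    intro u v huv huv_none
    rcases hp.eq_or_eq_of_isTree hG huv with rfl | rfl
    · rwa [parentColoring_mk hdp, hd] at huv_none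
    · rw [Sym2.eq_swap, parentColoring_mk hdp, hd] at huv_none
      exact hp.mapsTo huv_none
  have hmaps : ∀ γ : G ≃g G, PreservesEdgeColoring γ (parentColoring p d) → Set.MapsTo γ Z Z := by
    intro γ hγ v hv
    refine hmem _ _ (γ.map_adj_iff.2 (hp.adj v)) ?_
    rw [hγ (hp.adj v), parentColoring_mk hdp, hd]
    exact hv
  refine ⟨parentColoring p d, fun γ hγ => ?_⟩
  have hγZ := apply_mem_iff_of_forall_mapsTo hmaps hγ
  refine ⟨hγZ, fun v hv => ?_⟩
  have := hp.color_apply hdp hγ hγZ hv (by rwa [Ne, hd])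
  simpa only [d, hγZ, hv, if_false, Option.some.injEq] using this

lemma exists_isEdgeDistinguishing_of_adj_eq (hG : G.IsTree) (hc : IsVertexDistinguishing G c)
    (hxy : G.Adj x y) (hcxy : c x = c y) : ∃ f : Sym2 V → Option C, IsEdgeDistinguishing G f := by
  obtain ⟨f, hf⟩ := exists_edgeColoring_of_isTree hG hxy c
  refine ⟨f, fun γ hγ => hc γ fun v => ?_⟩
  obtain ⟨hγZ, hoff⟩ := hf γ hγ
  have hconst : ∀ w ∈ ({x, y} : Set V), c w = c x := by
    rintro w (rfl | rfl)
    exacts [rfl, hcxy.symm]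
  by_cases hv : v ∈ ({x, y} : Set V)
  · rw [hconst _ ((hγZ v).2 hv), hconst v hv]
  · exact hoff v hv

lemma not_adj_of_isTree (hG : G.IsTree) (hxy : G.Adj x y) (hyz : G.Adj y z) : ¬ G.Adj x z :=
  fun hxz => hG.dist_ne_of_adj x hyz
    ((dist_eq_one_iff_adj.2 hxy).trans (dist_eq_one_iff_adj.2 hxz).symm)

open Classical in
lemma apply_eq_of_proper (hG : G.IsTree) (hproper : ∀ a b, G.Adj a b → c a ≠ c b)
    (hxy : G.Adj x y) (hyz : G.Adj y z) {γ : G ≃g G}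
    (hγZ : ∀ v, γ v ∈ ({x, y} : Set V) ↔ v ∈ ({x, y} : Set V))
    (hcz : Function.update c z (c x) (γ z) = c x) : γ x = x ∧ γ y = y := by
  have hyz' : G.Adj (γ y) (γ z) := γ.map_adj_iff.2 hyz
  have hγy : γ y = y := by
    refine ((hγZ y).2 (by simp)).resolve_left fun hγy => ?_
    rw [hγy] at hyz'
    have hγz : γ z ≠ z := fun h => not_adj_of_isTree hG hxy hyz (h ▸ hyz')
    rw [Function.update_of_ne hγz] at hcz
    exact hproper _ _ hyz' hcz.symm
  refine ⟨((hγZ x).2 (by simp)).resolve_right fun hγx => hxy.ne (γ.injective ?_), hγy⟩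
  rw [hγy]
  exact hγx

/-- By `hz`, the recoloured vertex `z` either keeps its colour or is the only neighbour of `y` other
than `x` to have its new colour. -/
lemma exists_isEdgeDistinguishing_of_proper (hG : G.IsTree) (hc : IsVertexDistinguishing G c)
    (hproper : ∀ a b, G.Adj a b → c a ≠ c b) (hxy : G.Adj x y) (hyz : G.Adj y z) (hxz : x ≠ z)
    (hz : ∀ w, G.Adj y w → x ≠ w → c w = c x → c z = c x) :
    ∃ f : Sym2 V → Option C, IsEdgeDistinguishing G f := by
  classical
  obtain ⟨f, hf⟩ := exists_edgeColoring_of_isTree hG hxy (Function.update c z (c x))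
  refine ⟨f, fun γ hγ => hc γ fun v => ?_⟩
  obtain ⟨hγZ, hoff⟩ := hf γ hγ
  have hzZ : z ∉ ({x, y} : Set V) := by simp [hxz.symm, hyz.ne']
  have hcz := hoff z hzZ
  rw [Function.update_self] at hcz
  obtain ⟨hγx, hγy⟩ := apply_eq_of_proper hG hproper hxy hyz hγZ hcz
  by_cases hv : v ∈ ({x, y} : Set V)
  · rcases hv with rfl | rfl
    exacts [congrArg c hγx, congrArg c hγy]
  by_cases hγz : γ z = z
  · rcases eq_or_ne v z with rfl | hvz
    · rw [hγz]
    · have hγv : γ v ≠ z := fun h => hvz (γ.injective (h.trans hγz.symm))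
      simpa only [Function.update_of_ne hvz, Function.update_of_ne hγv] using hoff v hv
  · have hyγz : G.Adj y (γ z) := hγy ▸ γ.map_adj_iff.2 hyz
    have hxγz : x ≠ γ z := fun h => hzZ ((hγZ z).1 (h ▸ Set.mem_insert x {y}))
    rw [Function.update_of_ne hγz] at hcz
    have hczx : c z = c x := hz _ hyγz hxγz hcz
    simpa only [← hczx, Function.update_eq_self] using hoff v hv

lemma edgeSet_subsingleton_of_forall_eq (hG : G.Connected)
    (hpath : ∀ x y z, G.Adj x y → G.Adj y z → x = z) : G.edgeSet.Subsingleton := by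
  have hends : ∀ {x y}, G.Adj x y → ∀ v, v = x ∨ v = y := by
    intro x y hxy v
    by_contra hv
    obtain ⟨w⟩ := hG.preconnected x v
    obtain ⟨⟨⟨a, b⟩, hab⟩, -, rfl | rfl, hb⟩ :=
      w.exists_boundary_dart {x, y} (Set.mem_insert x {y}) hv
    · exact hb (Or.inr (hpath _ _ _ hxy.symm hab).symm)
    · exact hb (Or.inl (hpath _ _ _ hxy hab).symm)
  rintro ⟨x, y⟩ hxy ⟨u, v⟩ huv
  have huv' : u ≠ v := Adj.ne huv
  have hu := hends hxy u
  have hv := hends hxy v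
  refine Sym2.eq_iff.2 ?_
  grind

theorem exists_isEdgeDistinguishing_of_isTree (hG : G.IsTree) (hc : IsVertexDistinguishing G c)
    {D : Type*} {g : Sym2 V → D} (hg : IsEdgeDistinguishing G g) :
    ∃ f : Sym2 V → Option C, IsEdgeDistinguishing G f := by
  by_cases hproper : ∀ a b, G.Adj a b → c a ≠ c b
  · by_cases hsame : ∃ x y z, G.Adj x y ∧ G.Adj y z ∧ x ≠ z ∧ c z = c x
    · obtain ⟨x, y, z, hxy, hyz, hxz, hczx⟩ := hsame
      exact exists_isEdgeDistinguishing_of_proper hG hc hproper hxy hyz hxz fun _ _ _ _ => hczx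
    by_cases hpath : ∃ x y z, G.Adj x y ∧ G.Adj y z ∧ x ≠ z
    · obtain ⟨x, y, z, hxy, hyz, hxz⟩ := hpath
      exact exists_isEdgeDistinguishing_of_proper hG hc hproper hxy hyz hxz
        fun w hyw hxw hcw => absurd ⟨x, y, w, hxy, hyw, hxw, hcw⟩ hsame
    · push Not at hpath
      exact ⟨fun _ => none, isEdgeDistinguishing_of_edgeSet_subsingleton
        (edgeSet_subsingleton_of_forall_eq hG.connected hpath) hg _⟩
  · push Not at hproper
    obtain ⟨a, b, hab, hcab⟩ := hproper
    exact exists_isEdgeDistinguishing_of_adj_eq hG hc hab hcab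

end Tree

section Cycle

variable {n : ℕ} [Fact (2 < n)]

lemma zmod_two_ne_zero : (2 : ZMod n) ≠ 0 := fun h =>
  ZMod.neg_one_ne_one (n := n) (by linear_combination -h)

lemma apply_eq_apply_zero_of_add_one {α : Type*} {n : ℕ} {f : ZMod n → α}
    (hf : ∀ i, f (i + 1) = f i) (i : ZMod n) : f i = f 0 := by
  obtain ⟨m, rfl⟩ := ZMod.intCast_surjective i
  simpa using (show Function.Periodic f 1 from hf).int_mul_eq m

/-- The slope `σ (i + 1) - σ i = ± 1` cannot change sign, as `σ (i + 2) ≠ σ i`. -/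
lemma exists_eq_add_or_eq_sub {σ : ZMod n → ZMod n} (hσ : Function.Injective σ)
    (hstep : ∀ i, σ (i + 1) = σ i + 1 ∨ σ i = σ (i + 1) + 1) :
    ∃ t, (∀ i, σ i = t + i) ∨ ∀ i, σ i = t - i := by
  have hslope : ∀ i, σ (i + 1) - σ i = σ (0 + 1) - σ 0 := by
    refine apply_eq_apply_zero_of_add_one (f := fun i => σ (i + 1) - σ i) fun i => ?_
    have hne : σ (i + 1 + 1) ≠ σ i := fun h =>
      zmod_two_ne_zero (n := n) (by linear_combination hσ h)
    rcases hstep i with h | h <;> rcases hstep (i + 1) with h' | h'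
    · linear_combination h' - h
    · exact absurd (by linear_combination h - h') hne
    · exact absurd (by linear_combination h' - h) hne
    · linear_combination h - h'
  have hlinear : ∀ i, σ i - i * (σ (0 + 1) - σ 0) = σ 0 - 0 * (σ (0 + 1) - σ 0) :=
    apply_eq_apply_zero_of_add_one fun i => by linear_combination hslope i
  refine ⟨σ 0, (hstep 0).imp (fun h i => ?_) fun h i => ?_⟩
  · linear_combination hlinear i + i * h
  · linear_combination hlinear i - i * h

/-- Here `i` stands for the edge between the vertices `i` and `i + 1` of an `n`-cycle, so that the
reflection `j ↦ t - j` of the vertices sends the edge `i` to the edge `t - i - 1`. -/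
lemma exists_edges_forall_reflection_eq (s : ZMod n) :
    ∃ M : Set (ZMod n), (∀ t, (∀ i ∈ M, t + i ∈ M) → t = 0) ∧
      ∀ t, (∀ i ∈ M, t - i - 1 ∈ M) → t = s := by
  have h2 := zmod_two_ne_zero (n := n)
  obtain ⟨m, rfl⟩ := ZMod.intCast_surjective s
  obtain ⟨q, rfl | rfl⟩ := Int.even_or_odd' m
  · refine ⟨{(q : ZMod n), (q : ZMod n) - 1}, fun t ht => ?_, fun t ht => ?_⟩ <;>
      simp only [Set.mem_insert_iff, Set.mem_singleton_iff, forall_eq_or_imp, forall_eq] at ht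
    · obtain ⟨h | h, h' | h'⟩ := ht
      · linear_combination h
      · linear_combination h
      · exact absurd (by linear_combination h - h') h2
      · linear_combination h'
    · push_cast
      obtain ⟨h | h, h' | h'⟩ := ht
      · linear_combination h'
      · exact absurd (by linear_combination h' - h) h2
      · linear_combination h
      · linear_combination h
  · refine ⟨{(q : ZMod n)}, fun t ht => ?_, fun t ht => ?_⟩
    · linear_combination Set.mem_singleton_iff.1 (ht q rfl)
    · push_cast
      linear_combination Set.mem_singleton_iff.1 (ht q rfl)

/-- If no reflection preserves `c`, copy `c` along an orientation of the cycle; otherwise mark edges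
so that the only nontrivial symmetry left is one such reflection. -/
lemma exists_cycle_edgeColoring_of_translation_reflection [Nontrivial C] (c : ZMod n → C) :
    ∃ k : ZMod n → C, (∀ t, (∀ i, k (t + i) = k i) → ∀ i, c (t + i) = c i) ∧
      ∀ t, (∀ i, k (t - i - 1) = k i) → ∀ i, c (t - i) = c i := by
  classical
  by_cases hs : ∃ s, ∀ i, c (s - i) = c i
  · obtain ⟨s, hs⟩ := hs
    obtain ⟨a, b, hab⟩ := exists_pair_ne C
    obtain ⟨M, htrans, hrefl⟩ := exists_edges_forall_reflection_eq s
    have hM : ∀ i j, (if j ∈ M then a else b) = (if i ∈ M then a else b) → i ∈ M → j ∈ M := by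
      grind
    refine ⟨fun i => if i ∈ M then a else b, fun t ht i => ?_, fun t ht => ?_⟩
    · rw [htrans t fun i => hM _ _ (ht i), zero_add]
    · rwa [hrefl t fun i => hM _ _ (ht i)]
  · refine ⟨c, fun _ ht => ht, fun t ht => absurd ⟨t - 1, fun i => ?_⟩ hs⟩
    rw [← ht i, sub_right_comm]

/-- `k i` is the colour of the edge between `i` and `i + 1`. -/
lemma exists_cycle_edgeColoring [Nontrivial C] (c : ZMod n → C) :
    ∃ k : ZMod n → C, ∀ σ : ZMod n → ZMod n, Function.Injective σ →
      (∀ i, σ (i + 1) = σ i + 1 ∧ k (σ i) = k i ∨ σ i = σ (i + 1) + 1 ∧ k (σ (i + 1)) = k i) →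
      ∀ i, c (σ i) = c i := by
  obtain ⟨k, htrans, hrefl⟩ := exists_cycle_edgeColoring_of_translation_reflection c
  have h2 := zmod_two_ne_zero (n := n)
  refine ⟨k, fun σ hσ hstep i => ?_⟩
  obtain ⟨t, ht | ht⟩ := exists_eq_add_or_eq_sub hσ fun i => (hstep i).imp And.left And.left
  · rw [ht]
    refine htrans t (fun j => ?_) i
    rcases hstep j with ⟨-, hk⟩ | ⟨hj, -⟩
    · rwa [ht] at hk
    · rw [ht, ht] at hj
      exact absurd (by linear_combination -hj) h2
  · rw [ht]
    refine hrefl t (fun j => ?_) i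
    rcases hstep j with ⟨hj, -⟩ | ⟨-, hk⟩
    · rw [ht, ht] at hj
      exact absurd (by linear_combination -hj) h2
    · rwa [ht, ← sub_sub] at hk

end Cycle

section CyclicGraph

lemma exists_zmod_cycle (hG : ¬ G.IsAcyclic) :
    ∃ n, 2 < n ∧ ∃ x : ZMod n → V, Function.Injective x ∧ ∀ i, G.Adj (x i) (x (i + 1)) := by
  rw [isAcyclic_iff_free_cycleGraph] at hG
  push Not at hG
  obtain ⟨n, hn, hcopy⟩ := hG
  obtain ⟨m, rfl⟩ := Nat.exists_eq_add_of_le' hn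
  obtain ⟨φ⟩ := hcopy
  exact ⟨m + 3, hn, φ, φ.injective, fun i =>
    φ.toHom.map_adj (cycleGraph_adj.2 (Or.inr (add_sub_cancel_left (G := Fin (m + 3)) i 1)))⟩

variable {c : V → C} {n : ℕ} {x : ZMod n → V}

lemma exists_isParentMap_range (hG : G.Connected) (hinj : Function.Injective x)
    (hadj : ∀ i, G.Adj (x i) (x (i + 1))) :
    ∃ p, IsParentMap G (Set.range x) p ∧ ∀ i, p (x i) = x (i + 1) := by
  have hq := hinj.extend_apply (fun i => x (i + 1)) id
  obtain ⟨p, hp, hpq⟩ := exists_isParentMap_eqOn hG (Set.range_nonempty x)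
    (q := Function.extend x (fun i => x (i + 1)) id)
    (by rintro _ ⟨i, rfl⟩; rw [hq]; exact hadj i)
    (by rintro _ ⟨i, rfl⟩; rw [hq]; exact ⟨i + 1, rfl⟩)
  exact ⟨p, hp, fun i => (hpq ⟨i, rfl⟩).trans (hq i)⟩

lemma exists_edgeColoring_of_cycle [Fact (2 < n)] (hG : G.Connected)
    (hinj : Function.Injective x) (hadj : ∀ i, G.Adj (x i) (x (i + 1))) (c : V → C)
    (k : ZMod n → C) :
    ∃ f : Sym2 V → Option C, ∀ γ : G ≃g G, PreservesEdgeColoring γ f →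
      (∀ v ∉ Set.range x, c (γ v) = c v) ∧ ∃ σ : ZMod n → ZMod n, (∀ i, γ (x i) = x (σ i)) ∧
        ∀ i, σ (i + 1) = σ i + 1 ∧ k (σ i) = k i ∨ σ i = σ (i + 1) + 1 ∧ k (σ (i + 1)) = k i := by
  obtain ⟨p, hp, hpx⟩ := exists_isParentMap_range hG hinj hadj
  let d : V → C := Function.extend x k c
  have hdx : ∀ i, d (x i) = k i := hinj.extend_apply k c
  have hdp : ∀ v, p (p v) = v → some (d (p v)) = some (d v) := by
    intro v hv
    obtain ⟨i, rfl⟩ := hp.mem_of_apply_apply_eq hv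
    rw [hpx, hpx] at hv
    exact absurd (by linear_combination hinj hv) (zmod_two_ne_zero (n := n))
  let f : Sym2 V → Option C := parentColoring p fun v => some (d v)
  have hstep : ∀ γ : G ≃g G, PreservesEdgeColoring γ f → ∀ i,
      p (γ (x i)) = γ (x (i + 1)) ∧ d (γ (x i)) = k i ∨
        p (γ (x (i + 1))) = γ (x i) ∧ d (γ (x (i + 1))) = k i := by
    intro γ hγ i
    have hf : f s(x i, x (i + 1)) = some (k i) := by
      rw [← hpx, ← hdx]
      exact parentColoring_mk hdp (x i)
    simpa only [Option.some.injEq] using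
      eq_and_eq_or_of_parentColoring_eq_some ((hγ (hadj i)).trans hf)
  have hmaps : ∀ γ : G ≃g G, PreservesEdgeColoring γ f →
      Set.MapsTo γ (Set.range x) (Set.range x) := by
    rintro γ hγ _ ⟨i, rfl⟩
    exact hp.mem_of_cycle (γ.injective.comp hinj)
      (fun i => (hstep γ hγ i).imp And.left And.left) i
  refine ⟨f, fun γ hγ => ⟨fun v hv => ?_, ?_⟩⟩
  · have hγZ := apply_mem_iff_of_forall_mapsTo hmaps hγ
    have hγv : γ v ∉ Set.range x := fun h => hv ((hγZ v).1 h)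
    simpa only [d, Option.some.injEq, Function.extend_apply' _ _ _ hv,
      Function.extend_apply' _ _ _ hγv] using hp.color_apply hdp hγ hγZ hv (Option.some_ne_none _)
  · choose σ hσ using fun i => hmaps γ hγ ⟨i, rfl⟩
    refine ⟨σ, fun i => (hσ i).symm, fun i => ?_⟩
    simpa only [← hσ, hpx, hdx, hinj.eq_iff, eq_comm] using hstep γ hγ i

lemma exists_isEdgeDistinguishing_of_cycle [Fact (2 < n)] [Nontrivial C] (hG : G.Connected)
    (hc : IsVertexDistinguishing G c) (hinj : Function.Injective x)
    (hadj : ∀ i, G.Adj (x i) (x (i + 1))) :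
    ∃ f : Sym2 V → Option C, IsEdgeDistinguishing G f := by
  obtain ⟨k, hk⟩ := exists_cycle_edgeColoring (c ∘ x)
  obtain ⟨f, hf⟩ := exists_edgeColoring_of_cycle hG hinj hadj c k
  refine ⟨f, fun γ hγ => hc γ fun v => ?_⟩
  obtain ⟨hoff, σ, hσ, hstep⟩ := hf γ hγ
  by_cases hv : v ∈ Set.range x
  · obtain ⟨i, rfl⟩ := hv
    have hσinj : Function.Injective σ := fun i j hij =>
      hinj (γ.injective (by rw [hσ, hσ, hij]))
    rw [hσ]
    exact hk σ hσinj hstep i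
  · exact hoff v hv

end CyclicGraph

theorem exists_isEdgeDistinguishing {c : V → C} {D : Type*} {g : Sym2 V → D} (hG : G.Connected)
    (hc : IsVertexDistinguishing G c) (hg : IsEdgeDistinguishing G g) :
    ∃ f : Sym2 V → Option C, IsEdgeDistinguishing G f := by
  rcases subsingleton_or_nontrivial C with hC | hC
  · exact ⟨fun _ => none, fun γ _ => hc γ fun _ => Subsingleton.elim _ _⟩
  by_cases hacyc : G.IsAcyclic
  · exact exists_isEdgeDistinguishing_of_isTree ⟨hG, hacyc⟩ hc hg
  · obtain ⟨n, hn, x, hinj, hadj⟩ := exists_zmod_cycle hacyc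
    have : Fact (2 < n) := ⟨hn⟩
    exact exists_isEdgeDistinguishing_of_cycle hG hc hinj hadj

end DistinguishingColoring

/-- For every connected graph `G` (finite or infinite), `D'(G) ≤ D(G) + 1`. -/
theorem stmt_7 {V : Type u} (G : SimpleGraph V) (hconn : G.Connected) :
    distinguishingIndex G ≤ distinguishingNumber G + 1 := by
  rcases Set.eq_empty_or_nonempty {κ : Cardinal.{u} | ∃ (C : Type u) (c : G.edgeSet → C),
    #C = κ ∧ ∀ γ : G ≃g G, (∀ e : G.edgeSet, c (γ.mapEdgeSet e) = c e) → ∀ v, γ v = v} with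
    hempty | ⟨_, D, g, -, hg⟩
  · -- The infimum over the empty set is `0`; this happens for the graph with a single edge.
    rw [distinguishingIndex, hempty, Cardinal.sInf_empty]
    exact zero_le
  · have hvertex : {κ : Cardinal.{u} | ∃ (C : Type u) (c : V → C), #C = κ ∧
        ∀ γ : G ≃g G, (∀ v, c (γ v) = c v) → ∀ v, γ v = v}.Nonempty :=
      ⟨_, V, id, rfl, fun _ h => h⟩
    obtain ⟨C, c, hC, hc⟩ := csInf_mem hvertex
    obtain ⟨g', hg'⟩ := DistinguishingColoring.exists_isEdgeDistinguishing_of_edgeSet hg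
    obtain ⟨f, hf⟩ := DistinguishingColoring.exists_isEdgeDistinguishing hconn hc hg'
    refine csInf_le' ⟨Option C, fun e => f e, ?_,
      DistinguishingColoring.isEdgeDistinguishing_iff_edgeSet.1 hf⟩
    rw [Cardinal.mk_option, hC, distinguishingNumber]
end
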